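/- arXiv:1411.2759 — 2 statements merged into one kernel-verified Lean document; each statement's English description precedes it below -/
import Mathlib

section
/- For every strips pattern τ, the entropy of the pattern satisfies h(τ) = h(F_τ) = h(f_τ); that is, the infimum of the topological entropies of all maps in S(Ω) exhibiting τ equals the topological entropy of the τ-linear interval map, and it is attained by the quasiperiodic τ-linear map F_τ. -/
open Dynamics Set

noncomputable section

/-- The circle `S¹ = ℝ/ℤ`. -/
abbrev S1 : Type := AddCircle (1 : ℝ)

/-- The unit interval `I = [0,1]` as a type. -/
abbrev II : Type := Set.Icc (0 : ℝ) 1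

/-- The cylinder `Ω = S¹ × I`. -/
abbrev Cyl : Type := S1 × II

/-- The fiber of a subset of the cylinder over `θ ∈ S¹`. -/
def fiber (A : Set Cyl) (θ : S1) : Set II := {x : II | (θ, x) ∈ A}

/-- `M_A θ = max {x ∈ I : (θ, x) ∈ A}`. -/
def MA (A : Set Cyl) (θ : S1) : ℝ := sSup (Subtype.val '' fiber A θ)

/-- `m_A θ = min {x ∈ I : (θ, x) ∈ A}`. -/
def mA (A : Set Cyl) (θ : S1) : ℝ := sInf (Subtype.val '' fiber A θ)

/-- A strip: a closed set projecting onto all of `S¹` whose fibers over a residual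
set of `θ`'s are (possibly degenerate) nonempty closed intervals. -/
def IsStrip (A : Set Cyl) : Prop :=
  IsClosed A ∧ (∀ θ : S1, ∃ x : II, (θ, x) ∈ A) ∧
    ∃ G ∈ residual S1, ∀ θ ∈ G, ∃ a b : II, a ≤ b ∧ fiber A θ = Set.Icc a b

/-- `A < B` for strips. -/
def stripLT (A B : Set Cyl) : Prop := ∃ G ∈ residual S1, ∀ θ ∈ G, MA A θ < mA B θ

/-- `A ≤ B` for strips. -/
def stripLE (A B : Set Cyl) : Prop := ∃ G ∈ residual S1, ∀ θ ∈ G, MA A θ ≤ mA B θ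

/-- Two strips are ordered if `A < B` or `B < A`. -/
def StripOrdered (A B : Set Cyl) : Prop := stripLT A B ∨ stripLT B A

/-- Two strips are weakly ordered if `A ≤ B` or `B ≤ A`. -/
def StripWeaklyOrdered (A B : Set Cyl) : Prop := stripLE A B ∨ stripLE B A

/-- The class `S(Ω)` of quasiperiodically forced skew-products on the cylinder:
continuous maps whose first coordinate is an irrational rotation. -/
def IsQPF (F : Cyl → Cyl) : Prop :=
  Continuous F ∧ ∃ ω : ℝ, Irrational ω ∧ ∀ p : Cyl, (F p).1 = p.1 + (ω : S1)

/-- `B` is an `n`-periodic strip of `F`: `F^n(B) = B` and the iterates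
`B, F(B), …, F^{n-1}(B)` are pairwise disjoint and pairwise ordered. -/
def IsPeriodicStripOrbit (F : Cyl → Cyl) (n : ℕ) (B : Set Cyl) : Prop :=
  IsStrip B ∧ F^[n] '' B = B ∧
    ∀ i j : ℕ, i < j → j < n →
      Disjoint (F^[i] '' B) (F^[j] '' B) ∧ StripOrdered (F^[i] '' B) (F^[j] '' B)

/-- A cyclic permutation: the (forward) orbit of any point is everything. -/
def IsCyclicPerm {n : ℕ} (τ : Equiv.Perm (Fin n)) : Prop :=
  ∀ i j : Fin n, ∃ k : ℕ, (τ ^ k) i = j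

/-- `F` exhibits the strips pattern `τ`: it has a periodic orbit of strips,
spatially labelled, moved around according to `τ`. -/
def ExhibitsStripPattern (F : Cyl → Cyl) {n : ℕ} (τ : Equiv.Perm (Fin n)) : Prop :=
  ∃ B : Fin n → Set Cyl,
    (∀ i, IsStrip (B i)) ∧
    (∀ i j : Fin n, i < j → stripLT (B i) (B j)) ∧
    (Pairwise fun i j => Disjoint (B i) (B j)) ∧
    (∀ i, F '' B i = B (τ i))

/-- A continuous interval map has a periodic orbit with interval pattern `τ`. -/
def HasIntervalPattern (f : II → II) {n : ℕ} (τ : Equiv.Perm (Fin n)) : Prop :=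
  ∃ p : Fin n → II, StrictMono p ∧ ∀ i, f (p i) = p (τ i)

/-- `τ` forces `ν` as interval patterns. -/
def ForcesI {n m : ℕ} (τ : Equiv.Perm (Fin n)) (ν : Equiv.Perm (Fin m)) : Prop :=
  ∀ f : II → II, Continuous f → HasIntervalPattern f τ → HasIntervalPattern f ν

/-- `τ` forces `ν` in `Ω`. -/
def ForcesOmega {n m : ℕ} (τ : Equiv.Perm (Fin n)) (ν : Equiv.Perm (Fin m)) : Prop :=
  ∀ F : Cyl → Cyl, IsQPF F → ExhibitsStripPattern F τ → ExhibitsStripPattern F ν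

/-- `p >_Sh q` in the Sharkovskiĭ ordering. -/
def SharkGT (p q : ℕ) : Prop :=
  ∃ i m j l : ℕ, Odd m ∧ Odd l ∧ p = 2 ^ i * m ∧ q = 2 ^ j * l ∧
    ((m = 1 ∧ l = 1 ∧ j < i) ∨ (1 < m ∧ l = 1) ∨
      (1 < m ∧ 1 < l ∧ (i < j ∨ (i = j ∧ m < l))))

/-- The core of a subset of the cylinder. -/
def core (M : Set Cyl) : Set Cyl :=
  ⋂ (G : Set S1) (_ : G ∈ residual S1), closure (M ∩ Prod.fst ⁻¹' G)

/-- A band is a strip equal to its core. -/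
def IsBand (A : Set Cyl) : Prop := IsStrip A ∧ core A = A

/-- Continuity points of a real-valued function on the circle. -/
def contPts (g : S1 → ℝ) : Set S1 := {θ | ContinuousAt g θ}

/-- The top cover `A⁺` of a strip: the closure of the graph of `M_A` restricted to its
residual set of continuity points. -/
def topCover (A : Set Cyl) : Set Cyl :=
  closure {p : Cyl | p.1 ∈ contPts (MA A) ∧ (p.2 : ℝ) = MA A p.1}

/-- The bottom cover `A⁻` of a strip. -/
def botCover (A : Set Cyl) : Set Cyl :=
  closure {p : Cyl | p.1 ∈ contPts (mA A) ∧ (p.2 : ℝ) = mA A p.1}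

/-- `A` positively `F`-covers `B`. -/
def FCoversPos (F : Cyl → Cyl) (A B : Set Cyl) : Prop :=
  stripLE (F '' botCover A) (botCover B) ∧ stripLE (topCover B) (F '' topCover A)

/-- `A` negatively `F`-covers `B`. -/
def FCoversNeg (F : Cyl → Cyl) (A B : Set Cyl) : Prop :=
  stripLE (topCover B) (F '' botCover A) ∧ stripLE (F '' topCover A) (botCover B)

/-- `A` `F`-covers `B`. -/
def FCovers (F : Cyl → Cyl) (A B : Set Cyl) : Prop := FCoversPos F A B ∨ FCoversNeg F A B

/-- An `s`-horseshoe `(J, D)` for `F`. -/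
def IsHorseshoe (F : Cyl → Cyl) (s : ℕ) (J : Set Cyl) (D : Finset (Set Cyl)) : Prop :=
  2 ≤ s ∧ D.card = s ∧ IsBand J ∧
    (∀ L ∈ D, IsBand L ∧ (interior L).Nonempty ∧ FCovers F L J) ∧
    (∀ L ∈ D, ∀ L' ∈ D, L ≠ L' → StripWeaklyOrdered L L')

/-- Topological entropy (cover entropy of the whole space). -/
def hTop {X : Type} [UniformSpace X] (F : X → X) : EReal := coverEntropy F Set.univ

/-- A pseudo-curve: the closure of the graph of a continuous map from a residual
subset of the circle to the interval. -/
def IsPseudoCurve (A : Set Cyl) : Prop :=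
  ∃ G ∈ residual S1, ∃ φ : S1 → II, Continuous (G.restrict φ) ∧
    A = closure {p : Cyl | p.1 ∈ G ∧ p.2 = φ p.1}

/-- The band `E_{AB}` between two pseudo-curves `A < B`. -/
def bandBetween (A B : Set Cyl) : Set Cyl :=
  closure {p : Cyl | p.1 ∈ contPts (MA A) ∧ p.1 ∈ contPts (mA B) ∧
    MA A p.1 < (p.2 : ℝ) ∧ (p.2 : ℝ) < mA B p.1}

/-- `f` is affine on the subinterval `[a, b]` of `I`. -/
def AffineOnIcc (f : II → II) (a b : II) : Prop :=
  ∀ x : II, a ≤ x → x ≤ b →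
    ((b : ℝ) - (a : ℝ)) * ((f x : ℝ) - (f a : ℝ)) =
      ((x : ℝ) - (a : ℝ)) * ((f b : ℝ) - (f a : ℝ))

/-- `f` is the `P`-linear (connect-the-dots) map over the points `p 0 < p 1 < … < p n`:
continuous, affine on each `[p i, p (i+1)]` and constant on both components of
`I ∖ [p 0, p n]`. -/
def IsPLinear {n : ℕ} (f : II → II) (p : Fin (n + 1) → II) : Prop :=
  Continuous f ∧
    (∀ k : Fin n, AffineOnIcc f (p k.castSucc) (p k.succ)) ∧
    (∀ x : II, x ≤ p 0 → f x = f (p 0)) ∧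
    (∀ x : II, p (Fin.last n) ≤ x → f x = f (p (Fin.last n)))

/-- Signed arrow between basic intervals `J_k = [p k, p (k+1)]` and `J_l` in the
`P`-signed Markov graph of `f` (`true` = positive covering, `false` = negative). -/
def IArrow {n : ℕ} (f : II → II) (p : Fin (n + 1) → II) (s : Bool) (k l : Fin n) : Prop :=
  if s then
    (f (p k.castSucc) : ℝ) ≤ (p l.castSucc : ℝ) ∧ (p l.succ : ℝ) ≤ (f (p k.succ) : ℝ)
  else
    (f (p k.succ) : ℝ) ≤ (p l.castSucc : ℝ) ∧ (p l.succ : ℝ) ≤ (f (p k.castSucc) : ℝ)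

/-- A loop of length `m` in the `P`-signed Markov graph of `f`, encoded as `m`-periodic
sequences of vertices (basic intervals) and signs. -/
def IsILoop {n : ℕ} (f : II → II) (p : Fin (n + 1) → II) (m : ℕ)
    (v : ℕ → Fin n) (s : ℕ → Bool) : Prop :=
  0 < m ∧ (∀ i, v (i + m) = v i) ∧ (∀ i, s (i + m) = s i) ∧
    ∀ i, IArrow f p (s i) (v i) (v (i + 1))

/-- A periodic point `x` of (exact) period `m` is associated to the loop with vertex
sequence `v` if `f^i(x) ∈ J_{v i}` for all `i`. -/
def IAssocPt {n : ℕ} (f : II → II) (p : Fin (n + 1) → II) (m : ℕ)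
    (x : II) (v : ℕ → Fin n) : Prop :=
  f^[m] x = x ∧ (∀ i : ℕ, 0 < i → i < m → f^[i] x ≠ x) ∧
    ∀ i : ℕ, p (v i).castSucc ≤ f^[i] x ∧ f^[i] x ≤ p (v i).succ

/-- The sign (`true` = `+`) of the initial segment of length `k` of a signed path. -/
def signAt (s : ℕ → Bool) (k : ℕ) : Bool :=
  decide (Even ((Finset.range k).filter (fun i => s i = false)).card)

/-- Lexicographic ordering of (infinite liftings of) signed paths, comparing the vertex
sequences `v` and `w`; at the first difference the comparison is reversed iff the sign
of the common initial segment is negative. -/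
def seqLT {n : ℕ} (v : ℕ → Fin n) (s : ℕ → Bool) (w : ℕ → Fin n) : Prop :=
  ∃ k : ℕ, (∀ i < k, v i = w i) ∧ v k ≠ w k ∧ (v k < w k ↔ signAt s k = true)

/-- The shift of a sequence by `i`. -/
def shiftSeq {α : Type} (v : ℕ → α) (i : ℕ) : ℕ → α := fun j => v (i + j)

/-- A loop of length `m` (given by `m`-periodic sequences) is simple if it is not the
repetition of a shorter loop. -/
def SimpleLoop {α β : Type} (m : ℕ) (v : ℕ → α) (s : ℕ → β) : Prop :=
  ¬ ∃ d : ℕ, 0 < d ∧ d < m ∧ d ∣ m ∧ (∀ i, v (i + d) = v i) ∧ (∀ i, s (i + d) = s i)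

/-- The basic bands associated to a (spatially labelled) periodic orbit of strips
`B 0 < B 1 < … < B n`: `I_{B_k B_{k+1}} = E_{(B_k)⁺ (B_{k+1})⁻}`. -/
def basicBand {n : ℕ} (B : Fin (n + 1) → Set Cyl) (k : Fin n) : Set Cyl :=
  bandBetween (topCover (B k.castSucc)) (botCover (B k.succ))

/-- Signed arrow between bands in a signed Markov graph of `F`. -/
def BArrow (F : Cyl → Cyl) (s : Bool) (A B : Set Cyl) : Prop :=
  if s then FCoversPos F A B else FCoversNeg F A B

/-- A loop of length `m` in the signed Markov graph of `F` over the basic bands of the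
periodic orbit of strips `B`. -/
def IsBLoop (F : Cyl → Cyl) {n : ℕ} (B : Fin (n + 1) → Set Cyl) (m : ℕ)
    (v : ℕ → Fin n) (s : ℕ → Bool) : Prop :=
  0 < m ∧ (∀ i, v (i + m) = v i) ∧ (∀ i, s (i + m) = s i) ∧
    ∀ i, BArrow F (s i) (basicBand B (v i)) (basicBand B (v (i + 1)))

/-- Equality of patterns given as cyclic permutations of possibly different index sets. -/
def PatternEqNat {a b : ℕ} (τ : Equiv.Perm (Fin a)) (ν : Equiv.Perm (Fin b)) : Prop :=
  a = b ∧ ∀ (i : Fin a) (j : Fin b), (i : ℕ) = (j : ℕ) → ((τ i : ℕ) = (ν j : ℕ))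

/-- The entropy of a strips pattern: the infimum of the entropies of the maps in `S(Ω)`
exhibiting it. -/
def patternEntropy {n : ℕ} (τ : Equiv.Perm (Fin n)) : EReal :=
  sInf {e : EReal | ∃ F : Cyl → Cyl, IsQPF F ∧ ExhibitsStripPattern F τ ∧ e = hTop F}

end

/-!
Both entropies are compared with `max (markovEntropy τ) 0`, where `markovEntropy τ` is the growth
rate of the number of paths in the Markov graph of `τ`.

*Upper bound for `f_τ`.* The points with a given itinerary of length `m` form a set on which all
the iterates `f_τ^i`, `i < m`, are monotone or antitone. Subdividing the range of each iterate into
`K` pieces, the numbers of the pieces visited add up to a code which is at most `m * K` and which,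
by monotonicity, determines each of them, so linearly many points suffice to cover such a set.

*Lower bound for `F` exhibiting `τ`.* Over the orbit of a generic `θ` the strips have ordered
fibres, and the intermediate value theorem realizes every path of the Markov graph by a point whose
orbit runs through the corresponding gaps between the strips. If two such points stay close and are
in different gaps at some time, then a strip runs between them, and as distinct strips are a
definite distance apart, both points follow this strip through the gaps adjacent to it for the next
`N` steps. A path following a given strip is determined by its first gap, so points in one dynamical
ball show at most two words on each window of length `N`, and at most `2 ^ (m / N + 1)` words up to
time `m`; this factor is negligible as `N → ∞`.

Finally, the product with a rotation does not increase entropy, which closes the chain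
`h(τ) ≤ h(F_τ) ≤ h(f_τ) ≤ h(τ)`.
-/

open Filter Topology Uniformity ENNReal ExpGrowth

noncomputable section

section WordCount

variable {α β : Type*} {A : Set (ℕ → α)} {r s t : Set ℕ}

/-- The number of words that the sequences in `A` display on the window `s`. -/
def wordCount (A : Set (ℕ → α)) (s : Set ℕ) : ℕ∞ := (s.domRestrict '' A).encard

lemma wordCount_le_encard_of_code {C : Set β} (code : (ℕ → α) → β) (hC : MapsTo code A C)
    (hcode : ∀ u ∈ A, ∀ w ∈ A, code u = code w → EqOn u w s) : wordCount A s ≤ C.encard := by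
  obtain ⟨A', hA', hbij⟩ := exists_subset_bijOn A s.domRestrict
  rw [wordCount, ← hbij.image_eq, hbij.injOn.encard_image]
  refine encard_le_encard_of_injOn (hC.mono_left hA') fun u hu w hw h => hbij.injOn hu hw ?_
  exact domRestrict_eq_domRestrict_iff.2 (hcode u (hA' hu) w (hA' hw) h)

lemma wordCount_le_mul (hr : r ⊆ s ∪ t) : wordCount A r ≤ wordCount A s * wordCount A t := by
  rw [wordCount.eq_def A s, wordCount.eq_def A t, ← encard_prod]
  refine wordCount_le_encard_of_code (fun w => (s.domRestrict w, t.domRestrict w))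
    (fun w hw => ⟨mem_image_of_mem _ hw, mem_image_of_mem _ hw⟩) fun u _ w _ h => ?_
  obtain ⟨hs, ht⟩ := Prod.mk.inj h
  exact ((domRestrict_eq_domRestrict_iff.1 hs).union (domRestrict_eq_domRestrict_iff.1 ht)).mono hr

lemma wordCount_le_card_mul {ι : Type*} (C : Finset ι) (A' : ι → Set (ℕ → α)) (b : ℕ∞)
    (hA : A ⊆ ⋃ c ∈ C, A' c) (hb : ∀ c ∈ C, wordCount (A' c) s ≤ b) :
    wordCount A s ≤ C.card * b := by
  calc wordCount A s ≤ (⋃ c ∈ C, s.domRestrict '' A' c).encard := by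
        refine encard_le_encard ?_
        simpa only [image_iUnion] using image_mono (f := s.domRestrict) hA
    _ ≤ ∑ c ∈ C, wordCount (A' c) s := C.set_encard_biUnion_le _
    _ ≤ C.card * b := by simpa using Finset.sum_le_card_nsmul C _ b hb

lemma wordCount_le_two
    (h : ∀ u ∈ A, ∀ v ∈ A, ∀ w ∈ A, EqOn u v s ∨ EqOn u w s ∨ EqOn v w s) :
    wordCount A s ≤ 2 := by
  by_contra! hlt
  obtain ⟨t, ht, htc⟩ := exists_subset_encard_eq (Order.add_one_le_of_lt hlt)
  obtain ⟨x, y, z, hxy, hxz, hyz, rfl⟩ := encard_eq_three.1 htc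
  obtain ⟨u, hu, rfl⟩ := ht (by simp : x ∈ _)
  obtain ⟨v, hv, rfl⟩ := ht (by simp : y ∈ _)
  obtain ⟨w, hw, rfl⟩ := ht (by simp : z ∈ _)
  simp only [ne_eq, domRestrict_eq_domRestrict_iff] at hxy hxz hyz
  rcases h u hu v hv w hw with huv | huw | hvw
  exacts [hxy huv, hxz huw, hyz hvw]

lemma wordCount_Iio_le_two_pow {N m : ℕ}
    (h : ∀ a b, b ≤ m → b ≤ a + N → wordCount A (Ico a b) ≤ 2) (q : ℕ) {L : ℕ} (hLm : L ≤ m)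
    (hLq : L ≤ q * N) : wordCount A (Iio L) ≤ 2 ^ q := by
  induction q generalizing L with
  | zero =>
    obtain rfl : L = 0 := by simpa using hLq
    simpa using wordCount_le_encard_of_code (C := {()}) (fun _ => ()) (by simp [MapsTo]) (by simp)
  | succ q ih =>
    have hsplit : Iio L ⊆ Iio (L - N) ∪ Ico (L - N) L := by grind
    have hlength : L - N ≤ q * N := by grind
    calc wordCount A (Iio L) ≤ wordCount A (Iio (L - N)) * wordCount A (Ico (L - N) L) :=
          wordCount_le_mul hsplit
      _ ≤ 2 ^ q * 2 := by
          gcongr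
          · exact ih (by lia) hlength
          · exact h _ _ hLm (by lia)
      _ = 2 ^ (q + 1) := (pow_succ _ _).symm

end WordCount

section MarkovGraph

variable {n : ℕ} {τ : Fin (n + 1) → Fin (n + 1)} {N m : ℕ} {A : Set (ℕ → Fin n)}
  {u v w : ℕ → Fin n}

/-- The arrow `J_k → J_l` of the Markov graph of `τ`, where `J_k` is the basic interval with
endpoints `k` and `k + 1`: the endpoints of `J_l` lie between the images of those of `J_k`. -/
def MarkovArrow (τ : Fin (n + 1) → Fin (n + 1)) (k l : Fin n) : Prop :=
  (τ k.castSucc ≤ l.castSucc ∧ l.succ ≤ τ k.succ) ∨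
    (τ k.succ ≤ l.castSucc ∧ l.succ ≤ τ k.castSucc)

/-- The infinite paths in the Markov graph of `τ`. -/
def markovPaths (τ : Fin (n + 1) → Fin (n + 1)) : Set (ℕ → Fin n) :=
  {w | ∀ i, MarkovArrow τ (w i) (w (i + 1))}

/-- The exponential growth rate of the number of paths in the Markov graph of `τ`; it is `⊥` when
there are none. -/
def markovEntropy (τ : Fin (n + 1) → Fin (n + 1)) : EReal :=
  expGrowthSup fun m => (wordCount (markovPaths τ) (Iio m) : ℝ≥0∞)

/-- `c` is an endpoint of the basic interval `J_k`. -/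
def IsEndpoint (c : Fin (n + 1)) (k : Fin n) : Prop := c = k.castSucc ∨ c = k.succ

/-- The intervals visited by `u` and `w` up to time `N` have a common endpoint at each time, and
these endpoints form a `τ`-orbit. -/
def ShareEndpointOrbit (τ : Fin (n + 1) → Fin (n + 1)) (N : ℕ) (u w : ℕ → Fin n) : Prop :=
  ∃ c, ∀ s ≤ N, IsEndpoint (τ^[s] c) (u s) ∧ IsEndpoint (τ^[s] c) (w s)

/-- Whenever two paths in `A` are in different intervals before time `m`, they share an orbit of
endpoints during the next `N` steps. -/
def DivergeAlongEndpoints (τ : Fin (n + 1) → Fin (n + 1)) (N m : ℕ) (A : Set (ℕ → Fin n)) :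
    Prop :=
  ∀ u ∈ A, ∀ w ∈ A, ∀ i < m, u i ≠ w i → ShareEndpointOrbit τ N (shiftSeq u i) (shiftSeq w i)

lemma IsEndpoint.eq_of_ne {c d : Fin (n + 1)} {k l : Fin n} (hkl : k ≠ l) (hck : IsEndpoint c k)
    (hcl : IsEndpoint c l) (hdk : IsEndpoint d k) (hdl : IsEndpoint d l) : c = d := by
  simp only [IsEndpoint, Fin.ext_iff, Fin.val_castSucc, Fin.val_succ, ne_eq] at *
  lia

lemma IsEndpoint.exists_eq_of_pairwise {c d e : Fin (n + 1)} {j k l : Fin n}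
    (hcj : IsEndpoint c j) (hck : IsEndpoint c k) (hdj : IsEndpoint d j) (hdl : IsEndpoint d l)
    (hek : IsEndpoint e k) (hel : IsEndpoint e l) : j = k ∨ j = l ∨ k = l := by
  simp only [IsEndpoint, Fin.ext_iff, Fin.val_castSucc, Fin.val_succ] at *
  lia

lemma MarkovArrow.eq_of_isEndpoint {c : Fin (n + 1)} {k l l' : Fin n} (hl : MarkovArrow τ k l)
    (hl' : MarkovArrow τ k l') (hc : IsEndpoint c k) (hcl : IsEndpoint (τ c) l)
    (hcl' : IsEndpoint (τ c) l') : l = l' := by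
  rcases hc with rfl | rfl <;>
  · simp only [MarkovArrow, IsEndpoint, Fin.ext_iff, Fin.le_def, Fin.val_castSucc,
      Fin.val_succ] at *
    lia

lemma eq_of_forall_isEndpoint (hu : u ∈ markovPaths τ) (hv : v ∈ markovPaths τ) {i : ℕ}
    {c : Fin (n + 1)} (hi : u i = v i)
    (hc : ∀ s ≤ N, IsEndpoint (τ^[s] c) (u (i + s)) ∧ IsEndpoint (τ^[s] c) (v (i + s))) :
    ∀ s ≤ N, u (i + s) = v (i + s) := by
  intro s
  induction s with
  | zero => exact fun _ => hi
  | succ s ih =>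
    intro hs
    have hprev := ih (by lia)
    have harrow : MarkovArrow τ (u (i + s)) (v (i + s + 1)) := hprev ▸ hv (i + s)
    obtain ⟨hcu, hcv⟩ := hc (s + 1) hs
    rw [Function.iterate_succ_apply'] at hcu hcv
    exact (hu (i + s)).eq_of_isEndpoint harrow (hc s (by lia)).1 hcu hcv

lemma DivergeAlongEndpoints.eq_of_eq_of_ne (hA : A ⊆ markovPaths τ)
    (hdiv : DivergeAlongEndpoints τ N m A) (hu : u ∈ A) (hv : v ∈ A) (hw : w ∈ A) {i : ℕ}
    (him : i < m) (huv : u i = v i) (huw : u i ≠ w i) {j : ℕ} (hij : i ≤ j) (hjN : j ≤ i + N) :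
    u j = v j := by
  obtain ⟨c, hc⟩ := hdiv u hu w hw i him huw
  obtain ⟨d, hd⟩ := hdiv v hv w hw i him (huv ▸ huw)
  simp only [shiftSeq] at hc hd
  obtain rfl : c = d := IsEndpoint.eq_of_ne huw (hc 0 N.zero_le).1 (hc 0 N.zero_le).2
    (huv ▸ (hd 0 N.zero_le).1) (hd 0 N.zero_le).2
  have hs := eq_of_forall_isEndpoint (hA hu) (hA hv) huv
    (fun s hs => ⟨(hc s hs).1, (hd s hs).1⟩) (j - i) (by lia)
  rwa [Nat.add_sub_cancel' hij] at hs

lemma DivergeAlongEndpoints.eqOn_Ico (hA : A ⊆ markovPaths τ)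
    (hdiv : DivergeAlongEndpoints τ N m A) (hu : u ∈ A) (hv : v ∈ A) (hw : w ∈ A) {a b : ℕ}
    (hbm : b ≤ m) (hbN : b ≤ a + N) :
    EqOn u v (Ico a b) ∨ EqOn u w (Ico a b) ∨ EqOn v w (Ico a b) := by
  classical
  by_cases! hsplit : ∃ i, a ≤ i ∧ i < b ∧ (u i = v i → u i ≠ w i)
  swap
  · exact Or.inl fun i hi => (hsplit i hi.1 hi.2).1
  obtain ⟨hai, hib, hne⟩ := Nat.find_spec hsplit
  have hbefore : ∀ j, a ≤ j → j < Nat.find hsplit → u j = v j ∧ u j = w j := fun j haj hj => by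
    have := Nat.find_min hsplit hj
    grind
  generalize Nat.find hsplit = i at *
  have htwo : u i = v i ∨ u i = w i ∨ v i = w i := by
    by_contra! h
    obtain ⟨c, hc⟩ := hdiv u hu v hv i (by lia) h.1
    obtain ⟨d, hd⟩ := hdiv u hu w hw i (by lia) h.2.1
    obtain ⟨e, he⟩ := hdiv v hv w hw i (by lia) h.2.2
    have := IsEndpoint.exists_eq_of_pairwise (hc 0 N.zero_le).1 (hc 0 N.zero_le).2
      (hd 0 N.zero_le).1 (hd 0 N.zero_le).2 (he 0 N.zero_le).1 (he 0 N.zero_le).2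
    grind [shiftSeq]
  have agree {x y z : ℕ → Fin n} (hx : x ∈ A) (hy : y ∈ A) (hz : z ∈ A) (hxy : x i = y i)
      (hxz : x i ≠ z i) (hpre : ∀ j, a ≤ j → j < i → x j = y j) : EqOn x y (Ico a b) :=
    fun j hj => (lt_or_ge j i).elim (hpre j hj.1) fun hij =>
      hdiv.eq_of_eq_of_ne hA hx hy hz (by lia) hxy hxz hij (by grind)
  rcases htwo with huv | huw | hvw
  · exact Or.inl (agree hu hv hw huv (hne huv) (by grind))
  · exact Or.inr (Or.inl (agree hu hw hv huw (by grind) (by grind)))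
  · exact Or.inr (Or.inr (agree hv hw hu hvw (by grind) (by grind)))

lemma DivergeAlongEndpoints.wordCount_le (hA : A ⊆ markovPaths τ)
    (hdiv : DivergeAlongEndpoints τ N m A) (hN : 0 < N) :
    wordCount A (Iio m) ≤ 2 ^ (m / N + 1) := by
  refine wordCount_Iio_le_two_pow (N := N) (fun a b hbm hbN => ?_) _ le_rfl ?_
  · exact wordCount_le_two fun u hu v hv w hw => hdiv.eqOn_Ico hA hu hv hw hbm hbN
  · rw [add_mul, one_mul]
    exact (Nat.lt_div_mul_add hN).le

end MarkovGraph

section Growth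

variable {a b : EReal} {u : ℕ → ℝ≥0∞}

lemma le_of_forall_le_add_inv_natCast (h : ∀ N : ℕ, 0 < N → a ≤ b + ((N : ℝ)⁻¹ : ℝ)) :
    a ≤ b := by
  have hlim : Tendsto (fun N : ℕ => b + (((N : ℝ)⁻¹ : ℝ) : EReal)) atTop (𝓝 (b + 0)) :=
    (EReal.continuousAt_add (p := (b, 0)) (by simp) (by simp)).tendsto.comp
      (tendsto_const_nhds.prodMk_nhds (EReal.tendsto_coe.2 tendsto_inv_atTop_nhds_zero_nat))
  rw [add_zero] at hlim
  exact ge_of_tendsto hlim (eventually_atTop.2 ⟨1, h⟩)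

lemma two_pow_div_le_exp (N m : ℕ) :
    (2 : ℝ≥0∞) ^ (m / N) ≤ EReal.exp (((N : ℝ)⁻¹ : ℝ) * m) := by
  have hreal : (2 : ℝ) ^ (m / N) ≤ Real.exp ((N : ℝ)⁻¹ * m) := by
    calc (2 : ℝ) ^ (m / N) ≤ Real.exp 1 ^ (m / N) := by
          gcongr
          linarith [Real.add_one_le_exp 1]
      _ = Real.exp (m / N : ℕ) := by rw [← Real.exp_nat_mul, mul_one]
      _ ≤ Real.exp ((N : ℝ)⁻¹ * m) := by
          rw [inv_mul_eq_div]
          gcongr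
          exact Nat.cast_div_le
  calc (2 : ℝ≥0∞) ^ (m / N) = ENNReal.ofReal (2 ^ (m / N)) := by simp [ENNReal.ofReal_pow]
    _ ≤ ENNReal.ofReal (Real.exp ((N : ℝ)⁻¹ * m)) := ENNReal.ofReal_le_ofReal hreal
    _ = EReal.exp (((N : ℝ)⁻¹ : ℝ) * m) := by rw [← EReal.exp_coe]; norm_cast

lemma expGrowthSup_le_of_forall_le_mul_two_pow
    (h : ∀ N : ℕ, 0 < N → ∃ v : ℕ → ℝ≥0∞, expGrowthSup v ≤ b ∧ ∀ m, u m ≤ v m * 2 ^ (m / N + 1)) :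
    expGrowthSup u ≤ b := by
  refine le_of_forall_le_add_inv_natCast fun N hN => ?_
  obtain ⟨v, hv, huv⟩ := h N hN
  set w : ℕ → ℝ≥0∞ := fun m => EReal.exp (((N : ℝ)⁻¹ : ℝ) * m)
  have hbound : ∀ m, u m ≤ 2 * (v * w) m := fun m => by
    calc u m ≤ v m * 2 ^ (m / N + 1) := huv m
      _ = 2 * (v m * 2 ^ (m / N)) := by ring
      _ ≤ 2 * (v m * w m) := by gcongr; exact two_pow_div_le_exp N m
  have hgrowth : expGrowthSup w = ((N : ℝ)⁻¹ : ℝ) := expGrowthSup_exp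
  calc expGrowthSup u ≤ expGrowthSup (v * w) :=
        expGrowthSup_le_of_eventually_le ENNReal.ofNat_ne_top (Eventually.of_forall hbound)
    _ ≤ expGrowthSup v + expGrowthSup w :=
        expGrowthSup_mul_le (.inr (by simp [hgrowth])) (.inr (by simp [hgrowth]))
    _ ≤ b + ((N : ℝ)⁻¹ : ℝ) := add_le_add hv hgrowth.le

lemma expGrowthSup_natCast_mul_add_one (K : ℕ) :
    expGrowthSup (fun m => ((m * K + 1 : ℕ) : ℝ≥0∞)) = 0 := by
  refine le_antisymm ?_ <| (expGrowthSup_const one_ne_zero one_ne_top).ge.trans <|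
    expGrowthSup_monotone fun m => mod_cast Nat.le_add_left 1 (m * K)
  refine expGrowthSup_le_of_forall_le_mul_two_pow fun N hN =>
    ⟨fun _ => ((N * (K + 1) : ℕ) : ℝ≥0∞), (expGrowthSup_const ?_ ?_).le, fun m => ?_⟩
  · exact_mod_cast (by positivity : N * (K + 1) ≠ 0)
  · exact ENNReal.natCast_ne_top _
  · have hm : m + 1 ≤ N * 2 ^ (m / N + 1) := by
      calc m + 1 ≤ m / N * N + N := Nat.lt_div_mul_add hN
        _ = N * (m / N + 1) := by ring
        _ ≤ N * 2 ^ (m / N + 1) := by gcongr; exact (Nat.lt_two_pow_self).le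
    calc ((m * K + 1 : ℕ) : ℝ≥0∞) ≤ ((m + 1) * (K + 1) : ℕ) := by gcongr; lia
      _ ≤ (N * 2 ^ (m / N + 1) * (K + 1) : ℕ) := by gcongr
      _ = ((N * (K + 1) : ℕ) : ℝ≥0∞) * 2 ^ (m / N + 1) := by push_cast; ring

end Growth

section DynamicalCover

variable {X ι : Type*} {T : X → X} {S S' : Set X} {U : SetRel X X} {m : ℕ}

lemma coverMincard_le_card_of_code {C : Finset ι} (code : X → ι) (hC : MapsTo code S C)
    (hcode : ∀ x ∈ S, ∀ y ∈ S, code x = code y → (x, y) ∈ dynEntourage T U m) :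
    coverMincard T S U m ≤ C.card := by
  obtain ⟨R, hRS, hbij⟩ := exists_subset_bijOn S code
  have hfin : R.Finite := .of_injOn (hC.mono_left hRS) hbij.injOn C.finite_toSet
  have hcover : IsDynCoverOf T S U m (hfin.toFinset : Set X) := fun x hx => by
    obtain ⟨y, hy, hxy⟩ := hbij.surjOn (mem_image_of_mem code hx)
    exact ⟨y, by simpa using hy, hcode x hx y (hRS hy) hxy.symm⟩
  calc coverMincard T S U m ≤ hfin.toFinset.card := hcover.coverMincard_le_card
    _ ≤ C.card := by
      refine Nat.cast_le.2 (Finset.card_le_card_of_injOn code ?_ ?_)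
      · simpa using hC.mono_left hRS
      · simpa using hbij.injOn

lemma coverMincard_union_le :
    coverMincard T (S ∪ S') U m ≤ coverMincard T S U m + coverMincard T S' U m := by
  classical
  rcases eq_top_or_lt_top (coverMincard T S U m) with htop | hlt
  · simp [htop]
  rcases eq_top_or_lt_top (coverMincard T S' U m) with htop | hlt'
  · simp [htop]
  obtain ⟨s, hs, hscard⟩ := (coverMincard_finite_iff ..).1 hlt
  obtain ⟨s', hs', hscard'⟩ := (coverMincard_finite_iff ..).1 hlt'
  have hcover : IsDynCoverOf T (S ∪ S') U m ((s ∪ s' : Finset X) : Set X) := by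
    rintro x (hx | hx)
    · obtain ⟨y, hy, hxy⟩ := hs hx
      exact ⟨y, by simp_all, hxy⟩
    · obtain ⟨y, hy, hxy⟩ := hs' hx
      exact ⟨y, by simp_all, hxy⟩
  rw [← hscard, ← hscard']
  exact hcover.coverMincard_le_card.trans (mod_cast Finset.card_union_le s s')

lemma coverMincard_biUnion_le (C : Finset ι) {Z : ι → Set X} {b : ℕ∞}
    (hb : ∀ c ∈ C, coverMincard T (Z c) U m ≤ b) :
    coverMincard T (⋃ c ∈ C, Z c) U m ≤ C.card * b := by
  classical
  induction C using Finset.induction_on with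
  | empty => simp
  | insert c C hc ih =>
    rw [Finset.set_biUnion_insert, Finset.card_insert_of_notMem hc]
    calc _ ≤ coverMincard T (Z c) U m + coverMincard T (⋃ x ∈ C, Z x) U m := coverMincard_union_le
      _ ≤ b + C.card * b := add_le_add (hb c (by simp)) (ih fun x hx => hb x (by simp [hx]))
      _ = (C.card + 1 : ℕ) * b := by push_cast; ring

end DynamicalCover

section Monotone

variable {X : Type*} {Z : Set X}

lemma exists_monotoneOn_code [Preorder X] {φ : X → II} (hφ : MonotoneOn φ Z ∨ AntitoneOn φ Z)
    {K : ℕ} (hK : 0 < K) :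
    ∃ g : X → ℕ, MonotoneOn g Z ∧ (∀ x, g x ≤ K) ∧
      ∀ x y, g x = g y → dist (φ x) (φ y) < 1 / K := by
  have hK' : (0 : ℝ) < K := by exact_mod_cast hK
  have floor_le (z : II) : ⌊(K : ℝ) * z⌋₊ ≤ K :=
    Nat.floor_le_of_le (mul_le_of_le_one_right hK'.le z.2.2)
  have dist_lt (z z' : II) (h : ⌊(K : ℝ) * z⌋₊ = ⌊(K : ℝ) * z'⌋₊) : dist z z' < 1 / K := by
    have hz : (0 : ℝ) ≤ K * z := mul_nonneg hK'.le z.2.1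
    have hz' : (0 : ℝ) ≤ K * z' := mul_nonneg hK'.le z'.2.1
    rw [Subtype.dist_eq, Real.dist_eq, lt_div_iff₀' hK', ← abs_of_pos hK', ← abs_mul, mul_sub]
    refine Int.abs_sub_lt_one_of_floor_eq_floor ?_
    rw [← Int.natCast_floor_eq_floor hz, ← Int.natCast_floor_eq_floor hz', h]
  rcases hφ with hmono | hanti
  · refine ⟨fun x => ⌊(K : ℝ) * φ x⌋₊, fun x hx y hy hxy => ?_, fun x => floor_le _,
      fun x y h => dist_lt _ _ h⟩
    dsimp only
    gcongr
    exact hmono hx hy hxy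
  · refine ⟨fun x => ⌊(K : ℝ) * (unitInterval.symm (φ x) : II)⌋₊, fun x hx y hy hxy => ?_,
      fun x => floor_le _, fun x y h => ?_⟩
    · dsimp only
      gcongr
      exact unitInterval.symm_le_symm.2 (hanti hx hy hxy)
    · have hdist := dist_lt _ _ h
      rw [Subtype.dist_eq] at hdist ⊢
      simpa only [unitInterval.coe_symm_eq, dist_sub_left] using hdist

lemma coverMincard_le_of_forall_monotoneOn_or_antitoneOn {T : II → II} {Z : Set II} {m : ℕ}
    (hT : ∀ i < m, MonotoneOn T^[i] Z ∨ AntitoneOn T^[i] Z) {K : ℕ} (hK : 0 < K) :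
    coverMincard T Z {q | dist q.1 q.2 < 1 / K} m ≤ (m * K + 1 : ℕ) := by
  have hcode (i : Fin m) := exists_monotoneOn_code (hT i i.2) hK
  choose g hmono hle hdist using hcode
  rw [← Finset.card_range (m * K + 1)]
  refine coverMincard_le_card_of_code (fun x => ∑ i, g i x) (fun x _ => ?_) fun x hx y hy h => ?_
  · have := Finset.sum_le_card_nsmul Finset.univ (fun i => g i x) K fun i _ => hle i x
    simpa [Nat.lt_succ_iff] using this
  · wlog hxy : x ≤ y generalizing x y
    · have := this y hy x hx h.symm (le_of_not_ge hxy)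
      simpa only [mem_dynEntourage, mem_ofPred_eq, dist_comm] using this
    have hg := (Finset.sum_eq_sum_iff_of_le fun i _ => hmono i hx hy hxy).1 h
    exact mem_dynEntourage.2 fun i hi => hdist ⟨i, hi⟩ x y (hg ⟨i, hi⟩ (Finset.mem_univ _))

variable [Preorder X] {T : X → X}

lemma monotoneOn_or_antitoneOn_iterate {J : ℕ → Set X} {m : ℕ}
    (hT : ∀ i < m, MonotoneOn T (J i) ∨ AntitoneOn T (J i))
    (hZ : ∀ i < m, MapsTo T^[i] Z (J i)) {i : ℕ} (hi : i ≤ m) :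
    MonotoneOn T^[i] Z ∨ AntitoneOn T^[i] Z := by
  induction i with
  | zero => exact .inl monotoneOn_id
  | succ i ih =>
    rw [Function.iterate_succ']
    have hmaps := hZ i hi
    rcases hT i hi with hT | hT <;> rcases ih (Nat.le_of_succ_le hi) with h | h
    · exact .inl (hT.comp h hmaps)
    · exact .inr (hT.comp_AntitoneOn h hmaps)
    · exact .inr (hT.comp_MonotoneOn h hmaps)
    · exact .inl (hT.comp h hmaps)

end Monotone

section PMonotone

variable {X : Type*} [LinearOrder X] {n : ℕ} {f : X → X} {p : Fin (n + 1) → X}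
  {τ : Fin (n + 1) → Fin (n + 1)} {x : X}

/-- `f` is `P`-monotone for the points `p 0, …, p n`: it is monotone or antitone between
consecutive points and constant on either side of all of them. -/
def IsPMonotone (f : X → X) (p : Fin (n + 1) → X) : Prop :=
  (∀ k : Fin n, MonotoneOn f (Icc (p k.castSucc) (p k.succ)) ∨
      AntitoneOn f (Icc (p k.castSucc) (p k.succ))) ∧
    (∀ x ≤ p 0, f x = f (p 0)) ∧ ∀ x, p (Fin.last n) ≤ x → f x = f (p (Fin.last n))

lemma exists_mem_Icc_castSucc_succ {a b : Fin (n + 1)} (hab : a < b) (ha : p a ≤ x)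
    (hb : x ≤ p b) :
    ∃ l : Fin n, a ≤ l.castSucc ∧ l.succ ≤ b ∧ x ∈ Icc (p l.castSucc) (p l.succ) := by
  induction b using Fin.induction with
  | zero => exact absurd hab (Fin.not_lt_zero a)
  | succ i ih =>
    have hai : a ≤ i.castSucc := Fin.le_castSucc_iff.2 hab
    rcases le_or_gt (p i.castSucc) x with hx | hx
    · exact ⟨i, hai, le_rfl, hx, hb⟩
    · have hlt : a < i.castSucc := hai.lt_of_ne (by rintro rfl; exact hx.not_ge ha)
      obtain ⟨l, hal, hli, hxl⟩ := ih hlt hx.le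
      exact ⟨l, hal, hli.trans Fin.castSucc_lt_succ.le, hxl⟩

lemma IsPMonotone.exists_markovArrow (hf : IsPMonotone f p) (hp : Monotone p)
    (hτ : Function.Injective τ) (hpat : ∀ i, f (p i) = p (τ i)) {k : Fin n}
    (hx : x ∈ Icc (p k.castSucc) (p k.succ)) :
    ∃ l, MarkovArrow τ k l ∧ f x ∈ Icc (p l.castSucc) (p l.succ) := by
  have hfx : f x ∈ uIcc (p (τ k.castSucc)) (p (τ k.succ)) := by
    rw [← hpat, ← hpat]
    rw [← uIcc_of_le (hx.1.trans hx.2)] at hx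
    rcases hf.1 k with h | h <;> rw [← uIcc_of_le (hp Fin.castSucc_lt_succ.le)] at h
    exacts [h.mapsTo_uIcc hx, h.mapsTo_uIcc hx]
  rcases (hτ.ne Fin.castSucc_lt_succ.ne : τ k.castSucc ≠ τ k.succ).lt_or_gt with h | h
  · rw [uIcc_of_le (hp h.le)] at hfx
    obtain ⟨l, hkl, hlk, hl⟩ := exists_mem_Icc_castSucc_succ h hfx.1 hfx.2
    exact ⟨l, .inl ⟨hkl, hlk⟩, hl⟩
  · rw [uIcc_of_ge (hp h.le)] at hfx
    obtain ⟨l, hkl, hlk, hl⟩ := exists_mem_Icc_castSucc_succ h hfx.1 hfx.2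
    exact ⟨l, .inr ⟨hkl, hlk⟩, hl⟩

lemma IsPMonotone.exists_itinerary (hf : IsPMonotone f p) (hp : Monotone p)
    (hτ : Function.Injective τ) (hpat : ∀ i, f (p i) = p (τ i)) (h0 : p 0 < x)
    (hlast : x < p (Fin.last n)) :
    ∃ w ∈ markovPaths τ, ∀ i, f^[i] x ∈ Icc (p (w i).castSucc) (p (w i).succ) := by
  obtain ⟨l, -, -, hl⟩ :=
    exists_mem_Icc_castSucc_succ (hp.reflect_lt (h0.trans hlast)) h0.le hlast.le
  have : Nonempty (Fin n) := ⟨l⟩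
  have hnext (k : Fin n) (y : X) (hy : y ∈ Icc (p k.castSucc) (p k.succ)) :=
    hf.exists_markovArrow hp hτ hpat hy
  choose! next harrow hmem using hnext
  let w : ℕ → Fin n := fun i => Nat.rec l (fun j k => next k (f^[j] x)) i
  have hw (i : ℕ) : f^[i] x ∈ Icc (p (w i).castSucc) (p (w i).succ) := by
    induction i with
    | zero => exact hl
    | succ i ih =>
      rw [Function.iterate_succ_apply']
      exact hmem _ _ ih
  exact ⟨w, fun i => harrow _ _ (hw i), hw⟩

lemma monotoneOn_iterate_of_forall_eq {Z : Set X} {c : X} (h : ∀ x ∈ Z, f x = c) (i : ℕ) :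
    MonotoneOn f^[i] Z := by
  cases i with
  | zero => exact monotoneOn_id
  | succ i =>
    intro x hx y hy _
    rw [Function.iterate_succ_apply, Function.iterate_succ_apply, h x hx, h y hy]

end PMonotone

section EntropyOfPMonotone

variable {n : ℕ} {f : II → II} {p : Fin (n + 1) → II} {τ : Fin (n + 1) → Fin (n + 1)}

lemma AffineOnIcc.mul_sub_eq {a b x y : II} (h : AffineOnIcc f a b) (hx : x ∈ Icc a b)
    (hy : y ∈ Icc a b) :
    ((b : ℝ) - a) * ((f y : ℝ) - f x) = ((y : ℝ) - x) * ((f b : ℝ) - f a) := by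
  linarith [h x hx.1 hx.2, h y hy.1 hy.2]

lemma AffineOnIcc.monotoneOn_or_antitoneOn {a b : II} (hab : a < b) (h : AffineOnIcc f a b) :
    MonotoneOn f (Icc a b) ∨ AntitoneOn f (Icc a b) := by
  have hab' : (0 : ℝ) < b - a := sub_pos.2 hab
  refine (le_total (f a) (f b)).imp (fun hle x hx y hy hxy => ?_) fun hle x hx y hy hxy => ?_
  all_goals
    have hslope := h.mul_sub_eq hx hy
    rw [← Subtype.coe_le_coe] at hle hxy ⊢
    nlinarith [mul_nonneg (sub_nonneg.2 hxy) (sub_nonneg.2 hle)]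

lemma IsPLinear.isPMonotone (hf : IsPLinear f p) (hp : StrictMono p) : IsPMonotone f p :=
  ⟨fun k => (hf.2.1 k).monotoneOn_or_antitoneOn (hp Fin.castSucc_lt_succ), hf.2.2⟩

/-- The points of `[0, 1]` with prescribed itinerary `a` during the first `m` steps. -/
def itineraryCylinder (f : II → II) (p : Fin (n + 1) → II) (m : ℕ) (a : Iio m → Fin n) : Set II :=
  {x | ∀ i, f^[i] x ∈ Icc (p (a i).castSucc) (p (a i).succ)}

lemma IsPMonotone.coverMincard_itineraryCylinder_le (hf : IsPMonotone f p) {K : ℕ} (hK : 0 < K)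
    (m : ℕ) (w : ℕ → Fin n) :
    coverMincard f (itineraryCylinder f p m ((Iio m).domRestrict w))
      {q | dist q.1 q.2 < 1 / K} m ≤ (m * K + 1 : ℕ) :=
  coverMincard_le_of_forall_monotoneOn_or_antitoneOn
    (fun _ hi => monotoneOn_or_antitoneOn_iterate (m := m) (fun i _ => hf.1 (w i))
      (fun i hi _ (hx : ∀ _ : Iio m, _) => hx ⟨i, hi⟩) hi.le) hK

lemma IsPMonotone.coverMincard_le (hf : IsPMonotone f p) (hp : Monotone p)
    (hτ : Function.Injective τ) (hpat : ∀ i, f (p i) = p (τ i)) {K : ℕ} (hK : 0 < K) (m : ℕ) :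
    coverMincard f univ {q | dist q.1 q.2 < 1 / K} m ≤
      (wordCount (markovPaths τ) (Iio m) + 2) * (m * K + 1 : ℕ) := by
  set U : SetRel II II := {q | dist q.1 q.2 < 1 / K}
  have hfin := ((Iio m).domRestrict '' markovPaths τ).toFinite
  set C := hfin.toFinset
  have hcover : univ ⊆
      (⋃ a ∈ C, itineraryCylinder f p m a) ∪ (Iic (p 0) ∪ Ici (p (Fin.last n))) := by
    intro x _
    by_contra! hx
    simp only [mem_union, mem_Iic, mem_Ici, not_or, not_le] at hx
    obtain ⟨w, hw, hwx⟩ := hf.exists_itinerary hp hτ hpat hx.2.1 hx.2.2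
    exact hx.1 (mem_biUnion (hfin.mem_toFinset.2 (mem_image_of_mem _ hw)) fun i => hwx i)
  have hcylinder : ∀ a ∈ C, coverMincard f (itineraryCylinder f p m a) U m ≤ (m * K + 1 : ℕ) := by
    intro a ha
    obtain ⟨w, -, rfl⟩ := hfin.mem_toFinset.1 ha
    exact hf.coverMincard_itineraryCylinder_le hK m w
  have hside {Z : Set II} {c : II} (hZ : ∀ x ∈ Z, f x = c) :
      coverMincard f Z U m ≤ (m * K + 1 : ℕ) :=
    coverMincard_le_of_forall_monotoneOn_or_antitoneOn
      (fun i _ => .inl (monotoneOn_iterate_of_forall_eq hZ i)) hK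
  calc coverMincard f univ U m
      ≤ C.card * (m * K + 1 : ℕ) + ((m * K + 1 : ℕ) + (m * K + 1 : ℕ)) :=
        (coverMincard_monotone_subset f U m hcover).trans <| coverMincard_union_le.trans <|
          add_le_add (coverMincard_biUnion_le C hcylinder) <| coverMincard_union_le.trans <|
            add_le_add (hside hf.2.1) (hside hf.2.2)
    _ = (wordCount (markovPaths τ) (Iio m) + 2) * (m * K + 1 : ℕ) := by
        rw [wordCount, ← hfin.encard_eq_coe_toFinset_card]
        ring

lemma IsPMonotone.hTop_le (hf : IsPMonotone f p) (hp : Monotone p)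
    (hτ : Function.Injective τ) (hpat : ∀ i, f (p i) = p (τ i)) :
    hTop f ≤ max (markovEntropy τ) 0 := by
  rw [hTop, coverEntropy_eq_iSup_basis Metric.uniformity_basis_dist_inv_nat_succ]
  refine iSup₂_le fun K _ => ?_
  set words : ℕ → ℝ≥0∞ := fun m => (wordCount (markovPaths τ) (Iio m) : ℝ≥0∞)
  have hwords : expGrowthSup (words + fun _ => 2) = max (markovEntropy τ) 0 := by
    rw [expGrowthSup_add, expGrowthSup_const two_ne_zero ENNReal.ofNat_ne_top]
    rfl
  have hne : expGrowthSup (words + fun _ => 2) ≠ ⊥ := by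
    rw [hwords]
    exact ((EReal.bot_lt_zero).trans_le (le_max_right _ _)).ne'
  have hpoly := expGrowthSup_natCast_mul_add_one (K + 1)
  calc coverEntropyEntourage f univ _
      ≤ expGrowthSup ((words + fun _ => 2) * fun m => ((m * (K + 1) + 1 : ℕ) : ℝ≥0∞)) := by
        refine expGrowthSup_monotone fun m => ?_
        simpa [words] using ENat.toENNReal_le.2 (hf.coverMincard_le hp hτ hpat K.succ_pos m)
    _ ≤ max (markovEntropy τ) 0 + 0 := by
        rw [← hwords]
        exact (expGrowthSup_mul_le (.inl hne) (.inr (hpoly.trans_ne EReal.zero_ne_bot))).trans_eq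
          (by rw [hpoly])
    _ = max (markovEntropy τ) 0 := add_zero _

end EntropyOfPMonotone

section Gaps

variable {n : ℕ} {B : Fin (n + 1) → Set Cyl} {θ α : S1} {x y : II} {k : Fin n}
  {c : Fin (n + 1)}

lemma exists_pos_forall_le_dist_of_pairwise_disjoint {X ι : Type*} [MetricSpace X] [Finite ι]
    {B : ι → Set X} (hB : ∀ i, IsCompact (B i)) (hdis : Pairwise fun i j => Disjoint (B i) (B j)) :
    ∃ δ > 0, ∀ i j, i ≠ j → ∀ x ∈ B i, ∀ y ∈ B j, δ ≤ dist x y := by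
  have hsep : ∀ᶠ δ in 𝓝[>] (0 : ℝ), ∀ i j, i ≠ j → ∀ x ∈ B i, ∀ y ∈ B j, δ ≤ dist x y := by
    refine eventually_all.2 fun i => eventually_all.2 fun j => ?_
    rcases eq_or_ne i j with hij | hij
    · exact .of_forall fun _ h => absurd hij h
    obtain ⟨r, hr, hrd⟩ := Metric.exists_pos_forall_lt_edist (hB i) (hB j).isClosed (hdis hij)
    filter_upwards [Ioo_mem_nhdsGT (NNReal.coe_pos.2 hr)] with δ hδ _ x hx y hy
    have hlt := hrd x hx y hy
    rw [edist_nndist, ENNReal.coe_lt_coe, ← NNReal.coe_lt_coe, coe_nndist] at hlt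
    exact (hδ.2.trans hlt).le
  obtain ⟨δ, hδ, hpos⟩ := (hsep.and self_mem_nhdsWithin).exists
  exact ⟨δ, hpos, hδ⟩

lemma dist_mk_left_le_of_mem_uIcc {z : II} (hz : z ∈ uIcc x y) :
    dist ((θ, x) : Cyl) (θ, z) ≤ dist ((θ, x) : Cyl) (θ, y) := by
  rw [dist_prod_same_left, dist_prod_same_left]
  exact Real.dist_left_le_of_mem_uIcc ((Subtype.mono_coe _).mapsTo_uIcc hz)

lemma dist_mk_right_le_of_mem_uIcc {z : II} (hz : z ∈ uIcc x y) :
    dist ((θ, y) : Cyl) (θ, z) ≤ dist ((θ, x) : Cyl) (θ, y) :=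
  (dist_mk_left_le_of_mem_uIcc (uIcc_comm x y ▸ hz)).trans_eq (dist_comm _ _)

/-- Over `θ` the sets `B 0, …, B n` have nonempty fibres lying in this order. -/
structure FibersOrdered (B : Fin (n + 1) → Set Cyl) (θ : S1) : Prop where
  nonempty : ∀ c, (fiber (B c) θ).Nonempty
  lt : ∀ c d, c < d → ∀ x ∈ fiber (B c) θ, ∀ y ∈ fiber (B d) θ, x < y

/-- The region between the consecutive strips `B k` and `B (k + 1)`, boundaries included: it plays
the role of the basic interval `J_k`. -/
def gap (B : Fin (n + 1) → Set Cyl) (k : Fin n) : Set Cyl :=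
  {q | q.2 ∈ upperBounds (fiber (B k.castSucc) q.1) ∩ lowerBounds (fiber (B k.succ) q.1)}

lemma FibersOrdered.le_of_mem_gap (hB : FibersOrdered B θ) (hx : (θ, x) ∈ gap B k)
    (hc : c ≤ k.castSucc) (hy : (θ, y) ∈ B c) : y ≤ x := by
  rcases hc.eq_or_lt with rfl | hlt
  · exact hx.1 hy
  · obtain ⟨z, hz⟩ := hB.nonempty k.castSucc
    exact (hB.lt _ _ hlt y hy z hz).le.trans (hx.1 hz)

lemma FibersOrdered.ge_of_mem_gap (hB : FibersOrdered B θ) (hx : (θ, x) ∈ gap B k)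
    (hc : k.succ ≤ c) (hy : (θ, y) ∈ B c) : x ≤ y := by
  rcases hc.eq_or_lt with rfl | hlt
  · exact hx.2 hy
  · obtain ⟨z, hz⟩ := hB.nonempty k.succ
    exact (hx.2 hz).trans (hB.lt _ _ hlt z hz y hy).le

lemma FibersOrdered.isEndpoint_of_dist_lt (hB : FibersOrdered B θ) {δ : ℝ}
    (hδ : ∀ c d, c ≠ d → ∀ q ∈ B c, ∀ r ∈ B d, δ ≤ dist q r) (hx : (θ, x) ∈ gap B k)
    (hy : (θ, y) ∈ B c) (hxy : dist ((θ, x) : Cyl) (θ, y) < δ) : IsEndpoint c k := by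
  by_contra hne
  obtain ⟨hne₁, hne₂⟩ := not_or.1 hne
  obtain ⟨d, hcd, z, hz, hzxy⟩ : ∃ d ≠ c, ∃ z ∈ fiber (B d) θ, z ∈ uIcc x y := by
    rcases lt_or_ge c k.castSucc with hlt | hge
    · obtain ⟨z, hz⟩ := hB.nonempty k.castSucc
      exact ⟨_, Ne.symm hne₁, z, hz, mem_uIcc.2 (.inr ⟨(hB.lt _ _ hlt y hy z hz).le, hx.1 hz⟩)⟩
    · have hlt : k.succ < c :=
        (Fin.castSucc_lt_iff_succ_le.1 (hge.lt_of_ne (Ne.symm hne₁))).lt_of_ne (Ne.symm hne₂)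
      obtain ⟨z, hz⟩ := hB.nonempty k.succ
      exact ⟨_, Ne.symm hne₂, z, hz, mem_uIcc.2 (.inl ⟨hx.2 hz, (hB.lt _ _ hlt z hz y hy).le⟩)⟩
  exact ((hδ c d hcd.symm _ hy _ hz).trans (dist_mk_right_le_of_mem_uIcc hzxy)).not_gt hxy

lemma isCompact_fiber {A : Set Cyl} (hA : IsClosed A) : IsCompact (fiber A θ) :=
  (hA.preimage (f := fun x : II => (θ, x)) (by fun_prop)).isCompact

lemma FibersOrdered.exists_Icc_subset_gap (hB : FibersOrdered B θ) (hcl : ∀ c, IsClosed (B c))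
    (k : Fin n) : ∃ a b, a < b ∧ (θ, a) ∈ B k.castSucc ∧ (θ, b) ∈ B k.succ ∧
      ∀ x ∈ Icc a b, (θ, x) ∈ gap B k := by
  obtain ⟨a, ha⟩ := (isCompact_fiber (hcl k.castSucc)).exists_isGreatest (hB.nonempty k.castSucc)
  obtain ⟨b, hb⟩ := (isCompact_fiber (hcl k.succ)).exists_isLeast (hB.nonempty k.succ)
  exact ⟨a, b, hB.lt _ _ Fin.castSucc_lt_succ a ha.1 b hb.1, ha.1, hb.1, fun x hx =>
    ⟨fun z hz => (ha.2 hz).trans hx.1, fun z hz => hx.2.trans (hb.2 hz)⟩⟩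

lemma exists_forall_fibersOrdered (hB : ∀ c, IsStrip (B c))
    (hlt : ∀ c d, c < d → stripLT (B c) (B d)) (α : S1) :
    ∃ θ, ∀ j : ℕ, FibersOrdered B (θ + j • α) := by
  have hgeneric : ∀ᶠ θ in residual S1, FibersOrdered B θ := by
    have hord : ∀ᶠ θ in residual S1, ∀ c d, c < d → MA (B c) θ < mA (B d) θ := by
      refine eventually_all.2 fun c => eventually_all.2 fun d => ?_
      by_cases hcd : c < d
      · obtain ⟨G, hG, hGlt⟩ := hlt c d hcd
        filter_upwards [hG] with θ hθ _ using hGlt θ hθ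
      · exact .of_forall fun _ h => absurd h hcd
    filter_upwards [hord] with θ hθ
    refine ⟨fun c => (hB c).2.1 θ, fun c d hcd x hx y hy => ?_⟩
    have hbdd : BddAbove (Subtype.val '' fiber (B c) θ) := ⟨1, forall_mem_image.2 fun z _ => z.2.2⟩
    have hbdd' : BddBelow (Subtype.val '' fiber (B d) θ) :=
      ⟨0, forall_mem_image.2 fun z _ => z.2.1⟩
    exact ((le_csSup hbdd (mem_image_of_mem _ hx)).trans_lt (hθ c d hcd)).trans_le
      (csInf_le hbdd' (mem_image_of_mem _ hy))
  have horbit : ∀ᶠ θ in residual S1, ∀ j : ℕ, FibersOrdered B (θ + j • α) :=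
    eventually_countable_forall.2 fun j =>
      (tendsto_residual_of_isOpenMap (by fun_prop) (isOpenMap_add_right (j • α))).eventually
        hgeneric
  exact (dense_of_mem_residual horbit).nonempty

end Gaps

section StripSystem

variable {n : ℕ} {F : Cyl → Cyl} {α θ : S1} {B : Fin (n + 1) → Set Cyl}
  {τ : Fin (n + 1) → Fin (n + 1)} {u w : ℕ → Fin n} {N : ℕ}

/-- `F` is a continuous skew product over the rotation by `α` which maps each of the closed sets
`B c` into `B (τ c)`. -/
structure IsStripSystem (F : Cyl → Cyl) (α : S1) (B : Fin (n + 1) → Set Cyl)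
    (τ : Fin (n + 1) → Fin (n + 1)) : Prop where
  continuous : Continuous F
  fst_apply : ∀ q, (F q).1 = q.1 + α
  isClosed : ∀ c, IsClosed (B c)
  mapsTo : ∀ c, MapsTo F (B c) (B (τ c))

namespace IsStripSystem

lemma fst_iterate (h : IsStripSystem F α B τ) (i : ℕ) (q : Cyl) :
    (F^[i] q).1 = q.1 + i • α := by
  induction i with
  | zero => simp
  | succ i ih => rw [Function.iterate_succ_apply', h.fst_apply, ih, succ_nsmul, add_assoc]

lemma mapsTo_iterate (h : IsStripSystem F α B τ) (i : ℕ) (c : Fin (n + 1)) :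
    MapsTo F^[i] (B c) (B (τ^[i] c)) := by
  induction i generalizing c with
  | zero => exact mapsTo_id _
  | succ i ih => exact (ih (τ c)).comp (h.mapsTo c)

lemma exists_mem_gap_map_eq (h : IsStripSystem F α B τ) (hθ : FibersOrdered B θ)
    (hθα : FibersOrdered B (θ + α)) {k l : Fin n} (harrow : MarkovArrow τ k l) {y : II}
    (hy : (θ + α, y) ∈ gap B l) : ∃ x, (θ, x) ∈ gap B k ∧ F (θ, x) = (θ + α, y) := by
  obtain ⟨a, b, hab, ha, hb, hgap⟩ := hθ.exists_Icc_subset_gap h.isClosed k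
  have hstep (x : II) : F (θ, x) = (θ + α, (F (θ, x)).2) := Prod.ext (h.fst_apply _) rfl
  have hFa : (θ + α, (F (θ, a)).2) ∈ B (τ k.castSucc) := hstep a ▸ h.mapsTo _ ha
  have hFb : (θ + α, (F (θ, b)).2) ∈ B (τ k.succ) := hstep b ▸ h.mapsTo _ hb
  have hy_mem : y ∈ uIcc (F (θ, a)).2 (F (θ, b)).2 := by
    rcases harrow with ⟨hl, hr⟩ | ⟨hl, hr⟩
    · exact mem_uIcc.2 (.inl ⟨hθα.le_of_mem_gap hy hl hFa, hθα.ge_of_mem_gap hy hr hFb⟩)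
    · exact mem_uIcc.2 (.inr ⟨hθα.le_of_mem_gap hy hl hFb, hθα.ge_of_mem_gap hy hr hFa⟩)
  have hcont : Continuous fun x : II => (F (θ, x)).2 := by
    have := h.continuous
    fun_prop
  obtain ⟨x, hx, hxy⟩ := intermediate_value_uIcc hcont.continuousOn hy_mem
  rw [uIcc_of_le hab.le] at hx
  exact ⟨x, hgap x hx, by rw [hstep x]; exact congrArg _ hxy⟩

lemma exists_forall_iterate_mem_gap (h : IsStripSystem F α B τ)
    (hθ : ∀ j : ℕ, FibersOrdered B (θ + j • α)) (hw : w ∈ markovPaths τ) (M : ℕ) :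
    ∃ x, ∀ i ≤ M, F^[i] (θ, x) ∈ gap B (w i) := by
  induction M generalizing θ w with
  | zero =>
    obtain ⟨a, b, hab, -, -, hgap⟩ :=
      FibersOrdered.exists_Icc_subset_gap (by simpa using hθ 0) h.isClosed (w 0)
    refine ⟨a, fun i hi => ?_⟩
    obtain rfl : i = 0 := by simpa using hi
    exact hgap a ⟨le_rfl, hab.le⟩
  | succ M ih =>
    have hθα (j : ℕ) : FibersOrdered B (θ + α + j • α) := by
      simpa only [succ_nsmul', add_assoc] using hθ (j + 1)
    obtain ⟨y, hy⟩ := ih (w := fun i => w (i + 1)) hθα fun i => hw (i + 1)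
    obtain ⟨x, hx, hxy⟩ := h.exists_mem_gap_map_eq (by simpa using hθ 0) (by simpa using hθα 0)
      (hw 0) (hy 0 M.zero_le)
    refine ⟨x, fun i hi => ?_⟩
    cases i with
    | zero => exact hx
    | succ i =>
      rw [Function.iterate_succ_apply, hxy]
      exact hy i (by lia)

lemma shareEndpointOrbit (h : IsStripSystem F α B τ) (hθ : ∀ j : ℕ, FibersOrdered B (θ + j • α))
    {δ η : ℝ} (hδ : ∀ c d, c ≠ d → ∀ q ∈ B c, ∀ r ∈ B d, δ ≤ dist q r)
    (hη : ∀ q r, dist q r < η → ∀ s ≤ N, dist (F^[s] q) (F^[s] r) < δ) {x y : II}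
    (hx : ∀ s ≤ N, F^[s] (θ, x) ∈ gap B (u s)) (hy : ∀ s ≤ N, F^[s] (θ, y) ∈ gap B (w s))
    (hxy : dist ((θ, x) : Cyl) (θ, y) < η) (hne : u 0 ≠ w 0) : ShareEndpointOrbit τ N u w := by
  wlog hlt : u 0 < w 0 generalizing x y u w
  · obtain ⟨c, hc⟩ := this hy hx (dist_comm (α := Cyl) _ _ ▸ hxy) hne.symm
      (hne.lt_or_gt.resolve_left hlt)
    exact ⟨c, fun s hs => (hc s hs).symm⟩
  have hθ0 : FibersOrdered B θ := by simpa using hθ 0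
  obtain ⟨z, hz⟩ := hθ0.nonempty (u 0).succ
  have hz_mem : z ∈ uIcc x y := mem_uIcc.2 <| .inl
    ⟨(hx 0 N.zero_le).2 hz,
      hθ0.le_of_mem_gap (hy 0 N.zero_le) (Fin.succ_le_castSucc_iff.2 hlt) hz⟩
  have shadow {v : ℕ → Fin n} {x' : II} (hv : ∀ s ≤ N, F^[s] (θ, x') ∈ gap B (v s))
      (hclose : dist ((θ, x') : Cyl) (θ, z) < η) (s : ℕ) (hs : s ≤ N) :
      IsEndpoint (τ^[s] (u 0).succ) (v s) := by
    have hbase (t : II) : F^[s] (θ, t) = (θ + s • α, (F^[s] (θ, t)).2) :=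
      Prod.ext (h.fst_iterate s _) rfl
    have hdist := hη _ _ hclose s hs
    have hstrip := h.mapsTo_iterate s _ hz
    have hgap := hv s hs
    rw [hbase x'] at hdist hgap
    rw [hbase z] at hdist hstrip
    exact (hθ s).isEndpoint_of_dist_lt hδ hgap hstrip hdist
  exact ⟨(u 0).succ, fun s hs =>
    ⟨shadow hx ((dist_mk_left_le_of_mem_uIcc hz_mem).trans_lt hxy) s hs,
      shadow hy ((dist_mk_right_le_of_mem_uIcc hz_mem).trans_lt hxy) s hs⟩⟩

lemma divergeAlongEndpoints (h : IsStripSystem F α B τ)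
    (hθ : ∀ j : ℕ, FibersOrdered B (θ + j • α)) {δ η : ℝ}
    (hδ : ∀ c d, c ≠ d → ∀ q ∈ B c, ∀ r ∈ B d, δ ≤ dist q r)
    (hη : ∀ q r, dist q r < η → ∀ s ≤ N, dist (F^[s] q) (F^[s] r) < δ)
    {A : Set (ℕ → Fin n)} {x : (ℕ → Fin n) → II} {m : ℕ}
    (hgap : ∀ w ∈ A, ∀ i ≤ m + N, F^[i] (θ, x w) ∈ gap B (w i))
    (hclose : ∀ u ∈ A, ∀ w ∈ A, ∀ i < m, dist (F^[i] (θ, x u)) (F^[i] (θ, x w)) < η) :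
    DivergeAlongEndpoints τ N m A := by
  intro u hu w hw i hi hne
  have hbase (v : ℕ → Fin n) : F^[i] (θ, x v) = (θ + i • α, (F^[i] (θ, x v)).2) :=
    Prod.ext (h.fst_iterate i _) rfl
  have hgap_shift (v : ℕ → Fin n) (hv : v ∈ A) (s : ℕ) (hs : s ≤ N) :
      F^[s] (θ + i • α, (F^[i] (θ, x v)).2) ∈ gap B (shiftSeq v i s) := by
    rw [← hbase, ← Function.iterate_add_apply, add_comm s i]
    exact hgap v hv (i + s) (by lia)
  refine h.shareEndpointOrbit (fun j => ?_) hδ hη (hgap_shift u hu) (hgap_shift w hw) ?_ hne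
  · simpa only [add_smul, add_assoc] using hθ (i + j)
  · rw [← hbase, ← hbase]
    exact hclose u hu w hw i hi

lemma exists_forall_wordCount_le (h : IsStripSystem F α B τ)
    (hθ : ∃ θ, ∀ j : ℕ, FibersOrdered B (θ + j • α))
    (hdis : Pairwise fun c d => Disjoint (B c) (B d)) (hN : 0 < N) :
    ∃ V ∈ 𝓤 Cyl, ∀ m,
      wordCount (markovPaths τ) (Iio m) ≤ coverMincard F univ V m * 2 ^ (m / N + 1) := by
  obtain ⟨θ, hθ⟩ := hθ
  obtain ⟨δ, hδpos, hδ⟩ :=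
    exists_pos_forall_le_dist_of_pairwise_disjoint (fun c => (h.isClosed c).isCompact) hdis
  have huc := CompactSpace.uniformContinuous_of_continuous h.continuous
  obtain ⟨η, hηpos, hη⟩ := Metric.mem_uniformity_dist.1
    (dynEntourage_mem_uniformity huc (Metric.dist_mem_uniformity hδpos) (N + 1))
  have hshadow (q r : Cyl) (hqr : dist q r < η) (s : ℕ) (hs : s ≤ N) :
      dist (F^[s] q) (F^[s] r) < δ := mem_dynEntourage.1 (hη hqr) s (by lia)
  have hV : {q : Cyl × Cyl | dist q.1 q.2 < η / 2} ∈ 𝓤 Cyl :=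
    Metric.dist_mem_uniformity (half_pos hηpos)
  refine ⟨_, hV, fun m => ?_⟩
  obtain ⟨C, hC, hCcard⟩ := (coverMincard_finite_iff ..).1 <|
    coverMincard_finite_of_isCompact_uniformContinuous isCompact_univ huc hV m
  rw [← hCcard]
  have hreal (w : ℕ → Fin n) (hw : w ∈ markovPaths τ) :=
    h.exists_forall_iterate_mem_gap hθ hw (m + N)
  choose! x hx using hreal
  have hcover : markovPaths τ ⊆ ⋃ q ∈ C, {w ∈ markovPaths τ |
      ∀ i < m, dist (F^[i] (θ, x w)) (F^[i] q) < η / 2} := fun w hw => by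
    obtain ⟨q, hq, hwq⟩ := hC (mem_univ ((θ, x w) : Cyl))
    exact mem_biUnion hq ⟨hw, mem_dynEntourage.1 hwq⟩
  refine mod_cast wordCount_le_card_mul C _ _ hcover fun q _ =>
    DivergeAlongEndpoints.wordCount_le (fun w hw => hw.1) ?_ hN
  refine h.divergeAlongEndpoints hθ hδ hshadow (fun w hw => hx w hw.1) fun u hu w hw i hi => ?_
  linarith [dist_triangle_right (F^[i] (θ, x u)) (F^[i] (θ, x w)) (F^[i] q), hu.2 i hi, hw.2 i hi]

end IsStripSystem

lemma max_markovEntropy_zero_le_hTop {n : ℕ} {F : Cyl → Cyl} {τ : Equiv.Perm (Fin (n + 1))}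
    (hF : IsQPF F) (hE : ExhibitsStripPattern F τ) : max (markovEntropy τ) 0 ≤ hTop F := by
  obtain ⟨hcont, ω, -, hfst⟩ := hF
  obtain ⟨B, hB, hlt, hdis, hFB⟩ := hE
  have h : IsStripSystem F ω B τ :=
    ⟨hcont, hfst, fun c => (hB c).1, fun c => mapsTo_iff_image_subset.2 (hFB c).subset⟩
  refine max_le ?_ (coverEntropy_nonneg F univ_nonempty)
  refine expGrowthSup_le_of_forall_le_mul_two_pow fun N hN => ?_
  obtain ⟨V, hV, hcount⟩ :=
    h.exists_forall_wordCount_le (exists_forall_fibersOrdered hB hlt ω) hdis hN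
  refine ⟨_, coverEntropyEntourage_le_coverEntropy F univ hV, fun m => ?_⟩
  simpa using ENat.toENNReal_le.2 (hcount m)

end StripSystem

section Product

lemma coverEntropy_prodMap_le_of_lipschitzWith_one {X Y : Type*} [PseudoMetricSpace X]
    [CompactSpace X] [PseudoMetricSpace Y] [CompactSpace Y] {R : X → X} {T : Y → Y}
    (hR : LipschitzWith 1 R) (hT : Continuous T) :
    coverEntropy (Prod.map R T) univ ≤ coverEntropy T univ := by
  classical
  rw [coverEntropy_eq_iSup_basis Metric.uniformity_basis_dist]
  refine iSup₂_le fun ε hε => ?_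
  have hU : {q : Y × Y | dist q.1 q.2 < ε} ∈ 𝓤 Y := Metric.dist_mem_uniformity hε
  obtain ⟨C, -, hCfin, hC⟩ := (isCompact_univ (X := X)).finite_cover_balls hε
  lift C to Finset X using hCfin
  refine le_trans ?_ (coverEntropyEntourage_le_coverEntropy T univ hU)
  refine expGrowthSup_le_of_eventually_le (ENNReal.natCast_ne_top C.card) (.of_forall fun m => ?_)
  obtain ⟨s, hs, hsm⟩ := (coverMincard_finite_iff ..).1 <|
    coverMincard_finite_of_isCompact_uniformContinuous isCompact_univ
      (CompactSpace.uniformContinuous_of_continuous hT) hU m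
  have hcover : IsDynCoverOf (Prod.map R T) univ {q | dist q.1 q.2 < ε} m
      ((C ×ˢ s : Finset (X × Y)) : Set (X × Y)) := by
    rintro ⟨x, y⟩ -
    obtain ⟨z, hz, hyz⟩ := hs (mem_univ y)
    obtain ⟨x', hx', hxx'⟩ := mem_iUnion₂.1 (hC (mem_univ x))
    refine ⟨(x', z), Finset.mem_coe.2 (Finset.mk_mem_product hx' hz),
      mem_dynEntourage.2 fun k hk => ?_⟩
    have hRk : dist (R^[k] x) (R^[k] x') ≤ dist x x' := by
      simpa using (hR.iterate k).dist_le_mul x x'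
    rw [Prod.map_iterate]
    exact max_lt (hRk.trans_lt hxx') (mem_dynEntourage.1 hyz k hk)
  rw [← hsm]
  simpa [Finset.card_product] using ENat.toENNReal_le.2 hcover.coverMincard_le_card

end Product

section LinearModel

variable {n : ℕ} {f : II → II} {ω : ℝ} {F : Cyl → Cyl}

lemma isQPF_of_eq_prod (hf : Continuous f) (hω : Irrational ω)
    (hF : ∀ q : Cyl, F q = (q.1 + (ω : S1), f q.2)) : IsQPF F := by
  refine ⟨?_, ω, hω, fun q => by rw [hF]⟩
  rw [funext hF]
  fun_prop

lemma exhibitsStripPattern_of_eq_prod {τ : Equiv.Perm (Fin (n + 1))} {p : Fin (n + 1) → II}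
    (hp : StrictMono p) (hpat : ∀ i, f (p i) = p (τ i))
    (hF : ∀ q : Cyl, F q = (q.1 + (ω : S1), f q.2)) : ExhibitsStripPattern F τ := by
  have hfiber (i : Fin (n + 1)) (θ : S1) : fiber {q : Cyl | q.2 = p i} θ = {p i} := by
    ext x
    simp [fiber]
  refine ⟨fun i => {q : Cyl | q.2 = p i}, fun i => ⟨?_, fun θ => ⟨p i, rfl⟩, univ, univ_mem,
    fun θ _ => ⟨p i, p i, le_rfl, by rw [hfiber, Icc_self]⟩⟩, fun i j hij => ⟨univ, univ_mem,
    fun θ _ => ?_⟩, fun i j hij => ?_, fun i => ?_⟩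
  · exact isClosed_eq continuous_snd continuous_const
  · simp only [MA, mA, hfiber, image_singleton, csSup_singleton, csInf_singleton]
    exact hp hij
  · exact disjoint_left.2 fun q (hi : q.2 = p i) (hj : q.2 = p j) =>
      hij (hp.injective (hi.symm.trans hj))
  · ext ⟨θ, x⟩
    refine ⟨?_, fun (hx : x = p (τ i)) => ⟨(θ - (ω : S1), p i), rfl, by simp [hF, hpat, hx]⟩⟩
    rintro ⟨q, hq : q.2 = p i, hqx⟩
    rw [hF, hq, hpat] at hqx
    exact (congrArg Prod.snd hqx).symm

end LinearModel

theorem pattern_entropy_eq_general {n : ℕ} (τ : Equiv.Perm (Fin (n + 1)))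
    (fτ : II → II) (p : Fin (n + 1) → II) (hp : StrictMono p)
    (hlin : IsPLinear fτ p) (hpat : ∀ i, fτ (p i) = p (τ i))
    (ω : ℝ) (hω : Irrational ω)
    (Fτ : Cyl → Cyl) (hFτ : ∀ q : Cyl, Fτ q = (q.1 + (ω : S1), fτ q.2)) :
    patternEntropy τ = hTop Fτ ∧ hTop Fτ = hTop fτ := by
  have hpattern : patternEntropy τ ≤ hTop Fτ :=
    sInf_le ⟨Fτ, isQPF_of_eq_prod hlin.1 hω hFτ, exhibitsStripPattern_of_eq_prod hp hpat hFτ, rfl⟩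
  have hskew : hTop Fτ ≤ hTop fτ := by
    rw [hTop, show Fτ = Prod.map (· + (ω : S1)) fτ from funext hFτ]
    exact coverEntropy_prodMap_le_of_lipschitzWith_one (isometry_add_right _).lipschitz hlin.1
  have hbelow : hTop fτ ≤ patternEntropy τ := by
    refine le_sInf ?_
    rintro _ ⟨F, hF, hE, rfl⟩
    exact ((hlin.isPMonotone hp).hTop_le hp.monotone τ.injective hpat).trans
      (max_markovEntropy_zero_le_hTop hF hE)
  exact ⟨hpattern.antisymm (hskew.trans hbelow), hskew.antisymm (hbelow.trans hpattern)⟩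

end

/-- `h(τ) = h(F_τ) = h(f_τ)` for every strips pattern `τ`. -/
theorem pattern_entropy_eq {n : ℕ}
    (τ : Equiv.Perm (Fin (n + 1))) (hτ : IsCyclicPerm τ)
    (fτ : II → II) (p : Fin (n + 1) → II) (hp : StrictMono p)
    (hlin : IsPLinear fτ p) (hpat : ∀ i, fτ (p i) = p (τ i))
    (ω : ℝ) (hω : Irrational ω)
    (Fτ : Cyl → Cyl) (hFτ : ∀ q : Cyl, Fτ q = (q.1 + (ω : S1), fτ q.2)) :
    patternEntropy τ = hTop Fτ ∧ hTop Fτ = hTop fτ :=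
  pattern_entropy_eq_general τ fτ p hp hlin hpat ω hω Fτ hFτ
end

section
/- If a map F ∈ S(Ω) has a periodic orbit of strips of period 2^n·q with n ≥ 0 and q ≥ 1 odd, then h(F) ≥ log(λ_q)/2^n, where λ_1 = 1 and, for each odd q ≥ 3, λ_q is the largest root of the polynomial x^q − 2x^{q−2} − 1. Moreover, for every m = 2^n·q with n ≥ 0 and q ≥ 1 odd, there exists a map F_m ∈ S(Ω) with a periodic orbit of strips of period m such that h(F_m) = log(λ_q)/2^n. -/
open Dynamics Set

/-!
*Lower bound.* A periodic orbit of strips of period `2 ^ n * q` is, for `F^[2 ^ n]`, an orbit of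
period `q`, whose strips are permuted cyclically by some pattern `τ`.  For a nonnegative vector `v`
of gaps, let `T v` be the vector of distances between the `τ`-images of consecutive points having
these gaps.  A Collatz–Wielandt alternative for the Markov matrix of `τ` produces, for every `μ`,
either positive gaps with `T v ≤ μ v` or a nonzero `u ≥ 0` with `μ u ≤ T u`.  The first would let an
odd cycle act `μ`-Lipschitz on points of the line; a fixed point of a Lipschitz extension and the
displacements around it then force `1 ≤ (μ ^ 2 - 2) * μ ^ (q - 2)`, that is, `λ_q ≤ μ`.  Hence for
`μ < λ_q` the second holds, and then the total `u`-weight of the links between strips in a fibre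
grows by the factor `μ` under each iterate.  Uniform continuity turns weight into separated orbits.

*Sharpness.* The product of a rotation and an interval map whose iterates have variation `O(μ ^ k)`
has entropy at most `log μ`.  The `q`-periodic turning orbit of the tent map with slope `λ_q`, and
repeated square roots of this map, provide the examples.
-/

open Filter Topology Uniformity
open scoped NNReal ENNReal

section Entropy

theorem coverEntropy_iterate_le {X : Type*} [UniformSpace X] (T : X → X) (F : Set X) {m : ℕ}
    (hm : m ≠ 0) : coverEntropy T^[m] F ≤ m * coverEntropy T F := by
  refine iSup₂_le fun U hU => ?_
  have hmono : Monotone fun n => (coverMincard T F U n : ENNReal) := fun _ _ h =>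
    ENat.toENNReal_mono (coverMincard_monotone_time T F U h)
  have hcover (n : ℕ) : coverMincard T^[m] F U n ≤ coverMincard T F U (m * n) := by
    refine le_iInf₂ fun s hs => IsDynCoverOf.coverMincard_le_card (hs.mono_entourage ?_)
    rintro ⟨x, y⟩ hxy
    rw [mem_dynEntourage] at hxy ⊢
    intro k hk
    simpa only [← Function.iterate_mul] using hxy (m * k) (by gcongr)
  calc coverEntropyEntourage T^[m] F U
      ≤ ExpGrowth.expGrowthSup fun n => (coverMincard T F U (m * n) : ENNReal) :=
        ExpGrowth.expGrowthSup_monotone fun n => ENat.toENNReal_mono (hcover n)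
    _ = m * coverEntropyEntourage T F U := hmono.expGrowthSup_comp_mul hm
    _ ≤ m * coverEntropy T F := by
        gcongr
        exact coverEntropyEntourage_le_coverEntropy T F hU

variable {X : Type*} [PseudoMetricSpace X] {T : X → X} {b c ε : ℝ}

/-- A set is `(n, ε)`-separated for `T` if the orbits of any two of its points get at distance at
least `ε` before time `n`; unlike in `Dynamics.IsDynNetIn`, their dynamical balls may meet. -/
def IsDynSeparated (T : X → X) (ε : ℝ) (n : ℕ) (S : Set X) : Prop :=
  S.Pairwise fun x y => ∃ k < n, ε ≤ dist (T^[k] x) (T^[k] y)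

theorem IsDynSeparated.isDynNetIn {n : ℕ} {S : Set X} (hS : IsDynSeparated T ε n S) :
    IsDynNetIn T univ {p : X × X | dist p.1 p.2 < ε / 2} n S := by
  refine ⟨subset_univ _, fun x hx y hy hxy => disjoint_left.mpr fun z hzx hzy => ?_⟩
  obtain ⟨k, hk, hdist⟩ := hS hx hy hxy
  have hxz : dist (T^[k] x) (T^[k] z) < ε / 2 := mem_ball_dynEntourage.mp hzx k hk
  have hyz : dist (T^[k] y) (T^[k] z) < ε / 2 := mem_ball_dynEntourage.mp hzy k hk
  linarith [dist_triangle_right (T^[k] x) (T^[k] y) (T^[k] z)]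

theorem log_le_coverEntropy_of_isDynSeparated (hb : 0 < b) (hc : 0 < c) (hε : 0 < ε)
    (h : ∀ n, ∃ S : Finset X, IsDynSeparated T ε n S ∧ c * b ^ n ≤ S.card) :
    (Real.log b : EReal) ≤ coverEntropy T univ := by
  let U : Set (X × X) := {p | dist p.1 p.2 < ε / 2}
  have hnet (n : ℕ) :
      ENNReal.ofReal c * ENNReal.ofReal b ^ n ≤ (netMaxcard T univ U n : ENNReal) := by
    obtain ⟨S, hS, hcard⟩ := h n
    calc ENNReal.ofReal c * ENNReal.ofReal b ^ n = ENNReal.ofReal (c * b ^ n) := by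
          rw [ENNReal.ofReal_mul hc.le, ENNReal.ofReal_pow hb.le]
      _ ≤ ENNReal.ofReal S.card := ENNReal.ofReal_le_ofReal hcard
      _ = ((S.card : ℕ∞) : ENNReal) := by simp
      _ ≤ _ := ENat.toENNReal_mono hS.isDynNetIn.card_le_netMaxcard
  calc (Real.log b : EReal)
      = ExpGrowth.expGrowthSup fun n => ENNReal.ofReal b ^ n := by
        rw [ExpGrowth.expGrowthSup_pow, ENNReal.log_ofReal_of_pos hb]
    _ ≤ netEntropyEntourage T univ U :=
        ExpGrowth.expGrowthSup_of_eventually_ge (ENNReal.ofReal_pos.mpr hc).ne'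
          (Eventually.of_forall hnet)
    _ ≤ coverEntropy T univ :=
        netEntropyEntourage_le_coverEntropy T univ (Metric.dist_mem_uniformity (half_pos hε))

theorem coverEntropy_le_log_of_cover (hb : 0 < b)
    (h : ∀ ε > 0, ∃ C : ℝ, ∀ n, ∃ S : Finset X, S.card ≤ C * b ^ n ∧
      ∀ x, ∃ y ∈ S, ∀ k < n, dist (T^[k] x) (T^[k] y) < ε) :
    coverEntropy T univ ≤ (Real.log b : EReal) := by
  rw [coverEntropy_eq_iSup_basis Metric.uniformity_basis_dist]
  refine iSup₂_le fun ε hε => ?_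
  obtain ⟨C, hC⟩ := h ε hε
  have hcover (n : ℕ) : (coverMincard T univ {p : X × X | dist p.1 p.2 < ε} n : ENNReal) ≤
      ENNReal.ofReal C * ENNReal.ofReal b ^ n := by
    obtain ⟨S, hcard, hS⟩ := hC n
    have hdyn : IsDynCoverOf T univ {p : X × X | dist p.1 p.2 < ε} n (S : Set X) := fun x _ => by
      obtain ⟨y, hy, hxy⟩ := hS x
      exact ⟨y, hy, mem_dynEntourage.mpr hxy⟩
    calc _ ≤ ((S.card : ℕ∞) : ENNReal) := ENat.toENNReal_mono hdyn.coverMincard_le_card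
      _ = ENNReal.ofReal S.card := by simp
      _ ≤ ENNReal.ofReal (C * b ^ n) := ENNReal.ofReal_le_ofReal hcard
      _ = _ := by rw [ENNReal.ofReal_mul' (by positivity), ENNReal.ofReal_pow hb.le]
  calc coverEntropyEntourage T univ {p : X × X | dist p.1 p.2 < ε}
      ≤ ExpGrowth.expGrowthSup fun n => ENNReal.ofReal b ^ n :=
        ExpGrowth.expGrowthSup_le_of_eventually_le ENNReal.ofReal_ne_top
          (Eventually.of_forall hcover)
    _ = Real.log b := by rw [ExpGrowth.expGrowthSup_pow, ENNReal.log_ofReal_of_pos hb]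

end Entropy

section Rate

theorem pow_sub_two_mul_pow_sub_two (x : ℝ) {q : ℕ} (hq : 2 ≤ q) :
    x ^ q - 2 * x ^ (q - 2) = (x ^ 2 - 2) * x ^ (q - 2) := by
  rw [sub_mul, ← pow_add, Nat.add_sub_cancel' hq]

theorem two_lt_sq_of_sq_sub_two_mul_pow_eq_one {lam : ℝ} {k : ℕ} (hlam : 0 ≤ lam)
    (h : (lam ^ 2 - 2) * lam ^ k = 1) : 2 < lam ^ 2 :=
  sub_pos.mp (pos_of_mul_pos_left (h ▸ one_pos) (by positivity))

theorem sq_sub_two_mul_pow_lt_one {μ lam : ℝ} {k : ℕ} (hμ : 0 ≤ μ) (hlt : μ < lam)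
    (hlam : (lam ^ 2 - 2) * lam ^ k = 1) : (μ ^ 2 - 2) * μ ^ k < 1 := by
  have hsq : μ ^ 2 < lam ^ 2 := pow_lt_pow_left₀ hlt hμ two_ne_zero
  have hlam2 := two_lt_sq_of_sq_sub_two_mul_pow_eq_one (hμ.trans hlt.le) hlam
  calc (μ ^ 2 - 2) * μ ^ k ≤ max (μ ^ 2 - 2) 0 * μ ^ k := by gcongr; exact le_max_left _ _
    _ ≤ max (μ ^ 2 - 2) 0 * lam ^ k := by gcongr
    _ < (lam ^ 2 - 2) * lam ^ k := by
        have : 0 < lam ^ k := pow_pos (hμ.trans_lt hlt) k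
        gcongr
        exact max_lt (by linarith) (by linarith)
    _ = 1 := hlam

theorem one_lt_and_sq_sub_two_mul_pow_eq_one_of_largest_root {lam : ℝ} {q : ℕ} (hq : 2 ≤ q)
    (hroot : lam ^ q - 2 * lam ^ (q - 2) - 1 = 0)
    (hmax : ∀ y : ℝ, y ^ q - 2 * y ^ (q - 2) - 1 = 0 → y ≤ lam) :
    1 < lam ∧ (lam ^ 2 - 2) * lam ^ (q - 2) = 1 := by
  simp only [pow_sub_two_mul_pow_sub_two _ hq, sub_eq_zero] at hroot hmax
  refine ⟨?_, hroot⟩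
  have hcont : ContinuousOn (fun y : ℝ => (y ^ 2 - 2) * y ^ (q - 2)) (Icc 1 2) := by fun_prop
  have htwo : (1 : ℝ) ≤ (2 ^ 2 - 2) * 2 ^ (q - 2) := by
    linarith [one_le_pow₀ (M₀ := ℝ) one_le_two (n := q - 2)]
  obtain ⟨y, hy, hy1⟩ := intermediate_value_Icc one_le_two hcont ⟨by norm_num, htwo⟩
  have hy_ne : y ≠ 1 := by
    rintro rfl
    norm_num at hy1
  exact (lt_of_le_of_ne hy.1 hy_ne.symm).trans_le (hmax y hy1)

end Rate

section OddCycles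

variable {ι : Type*} {σ : Equiv.Perm ι} {p : ι → ℝ} {μ : ℝ}

theorem exists_mem_apply_notMem_of_isCycleOn [Finite ι] (hσ : σ.IsCycleOn univ) {s : Set ι}
    {a b : ι} (ha : a ∈ s) (hb : b ∉ s) : ∃ z ∈ s, σ z ∉ s := by
  by_contra! hs
  have := Fintype.ofFinite ι
  obtain ⟨n, -, rfl⟩ := (Finset.coe_univ (α := ι) ▸ hσ).exists_pow_eq (Finset.mem_univ a)
    (Finset.mem_univ b)
  exact hb (Equiv.Perm.iterate_eq_pow σ n ▸ MapsTo.iterate hs n ha)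

theorem exists_fixedPoint_between [Finite ι] [Nontrivial ι] (hσ : σ.IsCycleOn univ)
    (hp : p.Injective) (hμ : 0 ≤ μ)
    (hlip : ∀ i j, |p (σ i) - p (σ j)| ≤ μ * |p i - p j|) :
    ∃ c a b, (∀ i, |p (σ i) - c| ≤ μ * |p i - c|) ∧ p a < c ∧ c < p b ∧
      c < p (σ a) ∧ p (σ b) < c ∧ ∀ i, p i ≤ p a ∨ p b ≤ p i := by
  have hne (i : ι) : p (σ i) ≠ p i := hp.ne (hσ.apply_ne nontrivial_univ (mem_univ i))
  obtain ⟨m, hm⟩ := Finite.exists_min p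
  obtain ⟨a, ha, ha_max⟩ := exists_max_image {i | p i < p (σ i)} p (toFinite _)
    ⟨m, lt_of_le_of_ne (hm _) (hne m).symm⟩
  obtain ⟨b, hab, hb_min⟩ := exists_min_image {i | p a < p i} p (toFinite _) ⟨σ a, ha⟩
  have hgap (i : ι) : p i ≤ p a ∨ p b ≤ p i := (le_or_gt (p i) (p a)).imp_right (hb_min i)
  have hb : p (σ b) < p b :=
    lt_of_le_of_ne (not_lt.mp fun h => (ha_max b h).not_gt hab) (hne b)
  obtain ⟨g, hg, hgp⟩ : ∃ g : ℝ → ℝ, LipschitzWith ⟨μ, hμ⟩ g ∧ ∀ i, g (p i) = p (σ i) := by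
    have hext : LipschitzOnWith ⟨μ, hμ⟩ (Function.extend p (p ∘ σ) 0) (range p) := by
      refine LipschitzOnWith.of_dist_le_mul ?_
      rintro _ ⟨i, rfl⟩ _ ⟨j, rfl⟩
      simpa only [hp.extend_apply, Real.dist_eq, Function.comp_apply, NNReal.coe_mk] using! hlip i j
    obtain ⟨g, hg, heq⟩ := hext.extend_real
    exact ⟨g, hg, fun i => (heq (mem_range_self i)).symm.trans (hp.extend_apply _ _ i)⟩
  obtain ⟨c, ⟨hac, hcb⟩, hc⟩ : ∃ c ∈ Ioo (p a) (p b), g c - c = 0 :=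
    intermediate_value_Ioo' hab.le (hg.continuous.sub continuous_id).continuousOn
      ⟨sub_neg.mpr (hgp b ▸ hb), sub_pos.mpr (hgp a ▸ ha)⟩
  refine ⟨c, a, b, fun i => ?_, hac, hcb,
    hcb.trans_le ((hgap _).resolve_left ha.not_ge),
    ((hgap _).resolve_right hb.not_ge).trans_lt hac, hgap⟩
  simpa only [hgp, Real.dist_eq, sub_eq_zero.mp hc] using! hg.dist_le_mul (p i) c

theorem exists_pos_mul_apply_of_odd_card [Fintype ι] (hodd : Odd (Fintype.card ι))
    (hp : ∀ i, p i ≠ 0) : ∃ i, 0 < p i * p (σ i) := by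
  by_contra! h
  have hneg : ∏ i, p i * p (σ i) ≤ 0 := by
    have hflip : ∏ i, -(p i * p (σ i)) = -∏ i, p i * p (σ i) := by
      rw [Finset.prod_neg, Finset.card_univ, hodd.neg_one_pow, neg_one_mul]
    linarith [Finset.prod_nonneg fun i (_ : i ∈ Finset.univ) => neg_nonneg.mpr (h i)]
  rw [Finset.prod_mul_distrib, Equiv.prod_comp σ p] at hneg
  exact hneg.not_gt (mul_self_pos.mpr (Finset.prod_ne_zero_iff.mpr fun i _ => hp i))

theorem one_le_sq_sub_two_mul_pow {X Z U d : ℝ} {k j : ℕ} (hμ : 0 ≤ μ) (hU : 0 < U) (hd : 0 < d)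
    (hj : j ≤ k) (hUd : U + d ≤ μ * (X - Z)) (hUZ : U ≤ μ * Z) (hXU : X ≤ μ * U)
    (hUj : U ≤ μ ^ j * d) : 1 ≤ (μ ^ 2 - 2) * μ ^ k := by
  have hdU : d ≤ (μ ^ 2 - 2) * U := by nlinarith
  have hsq : 0 < μ ^ 2 - 2 := pos_of_mul_pos_left (hd.trans_le hdU) hU.le
  have hμ1 : 1 ≤ μ := by nlinarith
  refine le_of_mul_le_mul_right ?_ hd
  calc 1 * d ≤ (μ ^ 2 - 2) * (μ ^ j * d) := by
        rw [one_mul]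
        exact hdU.trans (by gcongr)
    _ ≤ (μ ^ 2 - 2) * (μ ^ k * d) := by gcongr
    _ = (μ ^ 2 - 2) * μ ^ k * d := by ring

/-- The point `p y` is closer to `0` than every `p x` on its side that `σ` keeps on that side. -/
def IsInner (σ : Equiv.Perm ι) (p : ι → ℝ) (y : ι) : Prop :=
  ∀ x, 0 < p x * p (σ x) → 0 < p x * p y → |p y| < |p x|

theorem isInner_neg {y : ι} : IsInner σ (-p) y ↔ IsInner σ p y := by
  simp only [IsInner, Pi.neg_apply, neg_mul_neg, abs_neg]

theorem isInner_of_neg {y : ι} (hp : p.Injective) (hy : p y < 0) (hσy : 0 < p (σ y))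
    (hmax : ∀ x, p x < 0 → p x ≤ p y) : IsInner σ p y := fun x hx hxy => by
  have hx_neg : p x < 0 := neg_of_mul_pos_left hxy hy.le
  have hne : p x ≠ p y := fun h => by
    obtain rfl := hp h
    exact (mul_neg_of_neg_of_pos hy hσy).not_gt hx
  rw [abs_of_neg hy, abs_of_neg hx_neg]
  exact neg_lt_neg (lt_of_le_of_ne (hmax x hx_neg) hne)

theorem IsInner.mul_apply_nonpos {y : ι} (hy : IsInner σ p y) : p y * p (σ y) ≤ 0 := by
  by_contra! h
  exact lt_irrefl _ (hy y h (mul_self_pos.mpr (left_ne_zero_of_mul h.ne')))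

theorem IsInner.apply_neg {y : ι} (hp : ∀ i, p i ≠ 0) (hy : IsInner σ p y) (hpos : 0 < p y) :
    p (σ y) < 0 :=
  lt_of_le_of_ne (nonpos_of_mul_nonpos_right hy.mul_apply_nonpos hpos) (hp _)

theorem IsInner.apply_pos {y : ι} (hp : ∀ i, p i ≠ 0) (hy : IsInner σ p y) (hneg : p y < 0) :
    0 < p (σ y) :=
  lt_of_le_of_ne (nonneg_of_mul_nonpos_right hy.mul_apply_nonpos hneg) (hp _).symm

/-- Below the first inner point `z > 0` that leaves the inner points, inner points would never get
past `z` unless one of those on the left jumps over it. -/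
theorem exists_isInner_neg_le_apply [Finite ι] (hσ : σ.IsCycleOn univ) (hp : ∀ i, p i ≠ 0)
    {a z : ι} (ha : IsInner σ p a) (ha_neg : p a < 0) (hz : IsInner σ p z) (hz_pos : 0 < p z)
    (hmin : ∀ y, IsInner σ p y → ¬ IsInner σ p (σ y) → 0 < p y → p z ≤ p y) :
    ∃ w, IsInner σ p w ∧ p w < 0 ∧ p z ≤ p (σ w) := by
  by_contra! hw
  obtain ⟨y, ⟨hy, hyz⟩, hy_out⟩ := exists_mem_apply_notMem_of_isCycleOn hσ
    (s := {y | IsInner σ p y ∧ p y < p z}) ⟨ha, ha_neg.trans hz_pos⟩ fun h => h.2.false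
  refine hy_out ?_
  rcases (hp y).lt_or_gt with hy_neg | hy_pos
  · have hlt := hw y hy hy_neg
    have hpos := hy.apply_pos hp hy_neg
    refine ⟨fun x hx hxy => ?_, hlt⟩
    have hx_pos : 0 < p x := pos_of_mul_pos_left hxy hpos.le
    calc |p (σ y)| < |p z| := by rwa [abs_of_pos hpos, abs_of_pos hz_pos]
      _ < |p x| := hz x hx (mul_pos hx_pos hz_pos)
  · exact ⟨not_not.mp fun h => (hmin y hy h hy_pos).not_gt hyz,
      (hy.apply_neg hp hy_pos).trans hz_pos⟩

theorem abs_pow_apply_le (hμ : 0 ≤ μ) (hlip : ∀ i, |p (σ i)| ≤ μ * |p i|) (n : ℕ) (i : ι) :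
    |p ((σ ^ n) i)| ≤ μ ^ n * |p i| := by
  induction n with
  | zero => simp
  | succ n ih =>
    calc |p ((σ ^ (n + 1)) i)| = |p (σ ((σ ^ n) i))| := by rw [pow_succ', Equiv.Perm.mul_apply]
      _ ≤ μ * (μ ^ n * |p i|) := (hlip _).trans (by gcongr)
      _ = μ ^ (n + 1) * |p i| := by ring

theorem one_le_sq_sub_two_mul_pow_of_isInner [Fintype ι] (hσ : σ.IsCycleOn univ)
    (hp : ∀ i, p i ≠ 0) (hμ : 0 ≤ μ) (hlip : ∀ i j, |p (σ i) - p (σ j)| ≤ μ * |p i - p j|)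
    (hlip0 : ∀ i, |p (σ i)| ≤ μ * |p i|) {a z : ι} (ha : IsInner σ p a) (ha_neg : p a < 0)
    (hz : IsInner σ p z) (hz_pos : 0 < p z) (hσz : ¬ IsInner σ p (σ z)) :
    1 ≤ (μ ^ 2 - 2) * μ ^ (Fintype.card ι - 2) := by
  obtain ⟨z, ⟨hz, hz_pos, hσz⟩, hmin⟩ :=
    exists_min_image {y | IsInner σ p y ∧ 0 < p y ∧ ¬ IsInner σ p (σ y)} p (toFinite _)
      ⟨z, hz, hz_pos, hσz⟩
  obtain ⟨w, hw, hw_neg, hzw⟩ := exists_isInner_neg_le_apply hσ hp ha ha_neg hz hz_pos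
    fun y hy hσy hy_pos => hmin y ⟨hy, hy_pos, hσy⟩
  have hσz_neg := hz.apply_neg hp hz_pos
  obtain ⟨x, hx, hxz, hx_le⟩ : ∃ x, 0 < p x * p (σ x) ∧ 0 < p x * p (σ z) ∧ |p x| ≤ |p (σ z)| := by
    simpa only [IsInner, not_forall, not_lt, exists_prop] using hσz
  have hx_neg : p x < 0 := neg_of_mul_pos_left hxz hσz_neg.le
  have hσx_neg : p (σ x) < 0 := neg_of_mul_pos_right hx hx_neg.le
  obtain ⟨n, hn, hnz⟩ := (Finset.coe_univ (α := ι) ▸ hσ).exists_pow_eq (Finset.mem_univ x)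
    (Finset.mem_univ z)
  have hn0 : n ≠ 0 := by
    rintro rfl
    exact hx_neg.not_gt ((congrArg p hnz).symm ▸ hz_pos)
  obtain ⟨j, rfl⟩ := Nat.exists_eq_succ_of_ne_zero hn0
  rw [Finset.card_univ] at hn
  rw [pow_succ, Equiv.Perm.mul_apply] at hnz
  have hwx : |p w| < |p x| := hw x hx (mul_pos_of_neg_of_neg hx_neg hw_neg)
  have hgap := (le_abs_self _).trans (hlip w x)
  have hw0 := (le_abs_self _).trans (hlip0 w)
  have hz0 := hx_le.trans (hlip0 z)
  have hj0 := hnz ▸ abs_pow_apply_le hμ hlip0 j (σ x)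
  rw [abs_of_neg hx_neg, abs_of_neg hw_neg] at hwx
  rw [abs_of_pos (by linarith : 0 < p w - p x)] at hgap
  rw [abs_of_neg hw_neg] at hw0
  rw [abs_of_neg hx_neg, abs_of_pos hz_pos] at hz0
  rw [abs_of_neg hσx_neg, abs_of_pos hz_pos] at hj0
  exact one_le_sq_sub_two_mul_pow (X := -p x) (Z := -p w) hμ hz_pos (neg_pos.mpr hσx_neg)
    (by omega : j ≤ Fintype.card ι - 2) (by linarith) (by linarith) hz0 hj0

theorem one_le_sq_sub_two_mul_pow_of_isCycleOn [Fintype ι] (hσ : σ.IsCycleOn univ)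
    (hodd : Odd (Fintype.card ι)) (hcard : 1 < Fintype.card ι) (hp : p.Injective) (hμ : 0 ≤ μ)
    (hlip : ∀ i j, |p (σ i) - p (σ j)| ≤ μ * |p i - p j|) :
    1 ≤ (μ ^ 2 - 2) * μ ^ (Fintype.card ι - 2) := by
  have := Fintype.one_lt_card_iff_nontrivial.mp hcard
  obtain ⟨c, a, b, hlip0, ha, hb, hσa, hσb, hgap⟩ := exists_fixedPoint_between hσ hp hμ hlip
  let r : ι → ℝ := fun i => p i - c
  have hr (i : ι) : r i ≠ 0 := (hgap i).elim (fun h => (sub_neg.mpr (h.trans_lt ha)).ne)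
    fun h => (sub_pos.mpr (hb.trans_le h)).ne'
  have hr_inj : r.Injective := fun i j h => hp (sub_left_inj.mp h)
  have hlip_r (i j : ι) : |r (σ i) - r (σ j)| ≤ μ * |r i - r j| := by
    simpa only [r, sub_sub_sub_cancel_right] using hlip i j
  rw [← sub_neg] at ha hσb
  rw [← sub_pos] at hb hσa
  have ha_inner : IsInner σ r a := isInner_of_neg hr_inj ha hσa fun i hi =>
    sub_le_sub_right ((hgap i).resolve_right fun h => by linarith [sub_neg.mp hi]) c
  have hb_inner : IsInner σ (-r) b := by
    refine isInner_of_neg (neg_injective.comp hr_inj) (neg_neg_of_pos hb) (neg_pos.mpr hσb)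
      fun i hi => neg_le_neg (sub_le_sub_right ((hgap i).resolve_left fun h => ?_) c)
    linarith [sub_pos.mp (neg_neg_iff_pos.mp hi)]
  obtain ⟨x, hx⟩ := exists_pos_mul_apply_of_odd_card (σ := σ) hodd hr
  obtain ⟨z, hz, hσz⟩ := exists_mem_apply_notMem_of_isCycleOn hσ (s := {y | IsInner σ r y})
    ha_inner fun h : IsInner σ r x => h.mul_apply_nonpos.not_gt hx
  rcases (hr z).lt_or_gt with hz_neg | hz_pos
  · refine one_le_sq_sub_two_mul_pow_of_isInner hσ (fun i => neg_ne_zero.mpr (hr i)) hμ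
      (fun i j => ?_) (fun i => ?_) hb_inner (neg_neg_of_pos hb) (isInner_neg.mpr hz)
      (neg_pos.mpr hz_neg) (mt isInner_neg.mp hσz)
    · simpa only [Pi.neg_apply, neg_sub_neg, abs_sub_comm] using hlip_r i j
    · simpa only [Pi.neg_apply, abs_neg] using hlip0 i
  · exact one_le_sq_sub_two_mul_pow_of_isInner hσ hr hμ hlip_r hlip0 ha_inner ha hz hz_pos hσz

end OddCycles

section CollatzWielandt

open Matrix

theorem exists_le_mulVec_of_tendsto_sum_atTop {ι : Type*} [Fintype ι] (A : Matrix ι ι ℝ) {μ : ℝ}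
    {S : ℕ → ι → ℝ} (hS : ∀ m, 0 ≤ S m) (hsum : Tendsto (fun m => ∑ i, S m i) atTop atTop)
    (hA : ∀ m, μ • (S m - 1) ≤ A *ᵥ S m) :
    ∃ u : ι → ℝ, 0 ≤ u ∧ u ≠ 0 ∧ μ • u ≤ A *ᵥ u := by
  let N : ℕ → ℝ := fun m => ∑ i, S m i
  have hN (m : ℕ) : 0 ≤ (N m)⁻¹ := inv_nonneg.mpr (Finset.sum_nonneg fun i _ => hS m i)
  have hmem : ∀ᶠ m in atTop, (N m)⁻¹ • S m ∈ stdSimplex ℝ ι := by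
    filter_upwards [hsum.eventually_gt_atTop 0] with m hm
    refine ⟨fun i => mul_nonneg (hN m) (hS m i), ?_⟩
    simp only [Pi.smul_apply, smul_eq_mul, ← Finset.mul_sum]
    exact inv_mul_cancel₀ hm.ne'
  obtain ⟨u, hu, ψ, hψ, hlim⟩ := (isCompact_stdSimplex ℝ ι).tendsto_subseq' hmem.frequently
  refine ⟨u, hu.1, ?_, ?_⟩
  · rintro rfl
    simpa using hu.2
  have hleft : Tendsto (fun m => μ • ((N (ψ m))⁻¹ • S (ψ m) - (N (ψ m))⁻¹ • (1 : ι → ℝ))) atTop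
      (𝓝 (μ • u)) := by
    have hN_inv := (hsum.inv_tendsto_atTop.comp hψ.tendsto_atTop).smul_const (1 : ι → ℝ)
    simpa using! (hlim.sub hN_inv).const_smul μ
  have hright : Tendsto (fun m => A *ᵥ ((N (ψ m))⁻¹ • S (ψ m))) atTop (𝓝 (A *ᵥ u)) :=
    ((continuous_const.matrix_mulVec continuous_id).tendsto u).comp hlim
  refine le_of_tendsto_of_tendsto' hleft hright fun m => ?_
  rw [← smul_sub, smul_comm, mulVec_smul]
  exact smul_le_smul_of_nonneg_left (hA _) (hN _)

/-- One of the two cases holds because the Neumann series `∑ (μ⁻¹ A)^m 1` either converges, to a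
subinvariant vector, or has partial sums whose directions accumulate at a superinvariant one. -/
theorem exists_mulVec_le_or_le_mulVec {ι : Type*} [Fintype ι] {A : Matrix ι ι ℝ}
    (hA : ∀ i j, 0 ≤ A i j) {μ : ℝ} (hμ : 0 < μ) :
    (∃ v : ι → ℝ, (∀ i, 0 < v i) ∧ A *ᵥ v ≤ μ • v) ∨
      ∃ u : ι → ℝ, 0 ≤ u ∧ u ≠ 0 ∧ μ • u ≤ A *ᵥ u := by
  have hcont : Continuous fun v : ι → ℝ => A *ᵥ v := continuous_const.matrix_mulVec continuous_id
  have hmulVec {v w : ι → ℝ} (h : v ≤ w) : A *ᵥ v ≤ A *ᵥ w := fun i =>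
    Finset.sum_le_sum fun j _ => mul_le_mul_of_nonneg_left (h j) (hA i j)
  let S : ℕ → ι → ℝ := fun m => (fun v => 1 + μ⁻¹ • A *ᵥ v)^[m] 0
  have hS_succ (m : ℕ) : S (m + 1) = 1 + μ⁻¹ • A *ᵥ S m := Function.iterate_succ_apply' _ m 0
  have hA_S (m : ℕ) : A *ᵥ S m = μ • (S (m + 1) - 1) := by
    rw [hS_succ, add_sub_cancel_left, smul_inv_smul₀ hμ.ne']
  have hS_mono : Monotone S := by
    refine Monotone.monotone_iterate_of_le_map (fun v w h => ?_) ?_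
    · have := hmulVec h
      gcongr
    · simp only [mulVec_zero, smul_zero, add_zero]
      exact zero_le_one
  by_cases hlim : ∀ i, ∃ l, Tendsto (fun m => S m i) atTop (𝓝 l)
  · choose s hs using hlim
    rw [← tendsto_pi_nhds] at hs
    have hs_fix : s = 1 + μ⁻¹ • A *ᵥ s :=
      tendsto_nhds_unique ((tendsto_add_atTop_iff_nat 1).mpr hs) <| by
        simpa only [hS_succ, Function.comp_apply] using!
          (((hcont.tendsto s).comp hs).const_smul μ⁻¹).const_add 1
    have hs_one : 1 ≤ s := by
      simpa only [hS_succ, S, Function.iterate_zero, id, mulVec_zero, smul_zero, add_zero] using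
        hS_mono.ge_of_tendsto hs 1
    refine Or.inl ⟨s, fun i => one_pos.trans_le (hs_one i), ?_⟩
    calc A *ᵥ s = μ • (s - 1) := by
          nth_rw 2 [hs_fix]
          rw [add_sub_cancel_left, smul_inv_smul₀ hμ.ne']
      _ ≤ μ • s := smul_le_smul_of_nonneg_left (sub_le_self s zero_le_one) hμ.le
  · push Not at hlim
    obtain ⟨i, hi⟩ := hlim
    have hi_top : Tendsto (fun m => S m i) atTop atTop :=
      (tendsto_atTop_of_monotone fun _ _ h => hS_mono h i).resolve_right fun ⟨l, hl⟩ => hi l hl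
    have hS_nonneg (m : ℕ) : 0 ≤ S m := hS_mono m.zero_le
    refine Or.inr (exists_le_mulVec_of_tendsto_sum_atTop A hS_nonneg ?_ fun m => ?_)
    · exact tendsto_atTop_mono (fun m => Finset.single_le_sum (fun j _ => hS_nonneg m j)
        (Finset.mem_univ i)) hi_top
    · rw [hA_S]
      exact smul_le_smul_of_nonneg_left (sub_le_sub_right (hS_mono m.le_succ) 1) hμ.le

end CollatzWielandt

section Weights

variable {n : ℕ} {v : Fin n → ℝ} {τ : Equiv.Perm (Fin (n + 1))} {μ : ℝ}

/-- The points on the line that start at `0` and have the consecutive gaps `v`. -/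
def gapSum (v : Fin n → ℝ) (i : Fin (n + 1)) : ℝ := ∑ j with j.castSucc < i, v j

theorem gapSum_sub_gapSum (v : Fin n → ℝ) {a b : Fin (n + 1)} (hab : a ≤ b) :
    gapSum v b - gapSum v a = ∑ j with j.castSucc ∈ Ico a b, v j := by
  simp only [gapSum, Finset.sum_filter, ← Finset.sum_sub_distrib, mem_Ico]
  refine Finset.sum_congr rfl fun j _ => ?_
  by_cases hja : j.castSucc < a
  · simp [hja, hja.trans_le hab, hja.not_ge]
  · simp [hja, not_lt.mp hja]

theorem gapSum_succ_sub (v : Fin n → ℝ) (k : Fin n) :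
    gapSum v k.succ - gapSum v k.castSucc = v k := by
  rw [gapSum_sub_gapSum v (Fin.castSucc_le_succ k)]
  have : (Finset.univ.filter fun j : Fin n => j.castSucc ∈ Ico k.castSucc k.succ) = {k} := by
    ext j
    simp only [Finset.mem_filter_univ, mem_Ico, Finset.mem_singleton, Fin.ext_iff, Fin.le_def,
      Fin.lt_def, Fin.val_castSucc, Fin.val_succ]
    omega
  rw [this, Finset.sum_singleton]

theorem gapSum_monotone (hv : 0 ≤ v) : Monotone (gapSum v) :=
  Fin.monotone_iff_le_succ.mpr fun k => sub_nonneg.mp (gapSum_succ_sub v k ▸ hv k)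

theorem gapSum_strictMono (hv : ∀ k, 0 < v k) : StrictMono (gapSum v) :=
  Fin.strictMono_iff_lt_succ.mpr fun k => sub_pos.mp (gapSum_succ_sub v k ▸ hv k)

/-- The Markov matrix of the pattern `τ`: its `(k, j)` entry is `1` when the image of the `k`-th
gap between consecutive labels covers the `j`-th one, and `0` otherwise. -/
def markovMatrix (τ : Equiv.Perm (Fin (n + 1))) : Matrix (Fin n) (Fin n) ℝ := fun k j =>
  if j.castSucc ∈ Ico (τ k.castSucc ⊓ τ k.succ) (τ k.castSucc ⊔ τ k.succ) then 1 else 0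

theorem markovMatrix_nonneg (k j : Fin n) : 0 ≤ markovMatrix τ k j := by
  unfold markovMatrix
  positivity

theorem markovMatrix_mulVec (hv : 0 ≤ v) (k : Fin n) :
    (markovMatrix τ).mulVec v k = |gapSum v (τ k.succ) - gapSum v (τ k.castSucc)| := by
  have hsum : (markovMatrix τ).mulVec v k =
      gapSum v (τ k.castSucc ⊔ τ k.succ) - gapSum v (τ k.castSucc ⊓ τ k.succ) := by
    rw [gapSum_sub_gapSum v inf_le_sup, Finset.sum_filter]
    simp only [Matrix.mulVec, dotProduct, markovMatrix, ite_mul, one_mul, zero_mul]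
  rw [hsum, (gapSum_monotone hv).map_sup, (gapSum_monotone hv).map_inf, sup_comm, inf_comm,
    max_sub_min_eq_abs']

theorem abs_sub_le_of_forall_succ {φ g : Fin (n + 1) → ℝ} (hφ : Monotone φ)
    (h : ∀ k : Fin n, |g k.succ - g k.castSucc| ≤ μ * (φ k.succ - φ k.castSucc))
    (i j : Fin (n + 1)) : |g i - g j| ≤ μ * |φ i - φ j| := by
  wlog hij : j ≤ i generalizing i j
  · simpa only [abs_sub_comm] using this j i (le_of_not_ge hij)
  rw [abs_of_nonneg (sub_nonneg.mpr (hφ hij))]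
  induction i using Fin.induction with
  | zero => simp [Fin.le_zero_iff.mp hij]
  | succ k ih =>
    rcases hij.eq_or_lt with rfl | hlt
    · simp
    · calc |g k.succ - g j| ≤ |g k.succ - g k.castSucc| + |g k.castSucc - g j| := abs_sub_le _ _ _
        _ ≤ μ * (φ k.succ - φ k.castSucc) + μ * (φ k.castSucc - φ j) :=
          add_le_add (h k) (ih (Fin.le_castSucc_iff.mpr hlt))
        _ = μ * (φ k.succ - φ j) := by ring

theorem exists_expanding_weight (hτ : τ.IsCycleOn univ) (hodd : Odd (n + 1)) (hn : n ≠ 0)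
    (hμ : 0 < μ) (hμ_lt : (μ ^ 2 - 2) * μ ^ (n + 1 - 2) < 1) :
    ∃ φ : Fin (n + 1) → ℝ, φ 0 < φ (Fin.last n) ∧
      ∀ k : Fin n, μ * |φ k.succ - φ k.castSucc| ≤ |φ (τ k.succ) - φ (τ k.castSucc)| := by
  rcases exists_mulVec_le_or_le_mulVec (markovMatrix_nonneg (τ := τ)) hμ with
    ⟨v, hv, hle⟩ | ⟨u, hu, hu_ne, hle⟩
  · have hv0 : 0 ≤ v := fun k => (hv k).le
    refine absurd hμ_lt (not_lt.mpr ?_)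
    have hlip := abs_sub_le_of_forall_succ (g := gapSum v ∘ τ) (gapSum_monotone hv0)
      fun k => by
        rw [gapSum_succ_sub, Function.comp_apply, Function.comp_apply, ← markovMatrix_mulVec hv0]
        exact hle k
    simpa only [Fintype.card_fin] using one_le_sq_sub_two_mul_pow_of_isCycleOn hτ
      (by rwa [Fintype.card_fin]) (by rw [Fintype.card_fin]; omega)
      (gapSum_strictMono hv).injective hμ.le hlip
  · refine ⟨gapSum u, ?_, fun k => ?_⟩
    · obtain ⟨k, hk⟩ := Function.ne_iff.mp hu_ne
      calc gapSum u 0 ≤ gapSum u k.castSucc := gapSum_monotone hu (Fin.zero_le _)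
        _ < gapSum u k.succ :=
          sub_pos.mp (gapSum_succ_sub u k ▸ (hu k).lt_of_ne' hk)
        _ ≤ gapSum u (Fin.last n) := gapSum_monotone hu (Fin.le_last _)
    · rw [gapSum_succ_sub, abs_of_nonneg (hu k), ← markovMatrix_mulVec hu]
      exact hle k

end Weights

section FibreChains

variable {X : Type*} {n : ℕ}

/-- `FibreChain H B φ θ x y w`: there are points `x = t₀ ≤ t₁ ≤ ⋯ ≤ y` in the fibre over `θ` such
that `H` sends consecutive ones into sets `B a` and `B b`, and the numbers `|φ a - φ b|` add up
to `w`. -/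
inductive FibreChain (H : X × II → X × II) (B : Fin (n + 1) → Set (X × II)) (φ : Fin (n + 1) → ℝ)
    (θ : X) : II → II → ℝ → Prop
  | refl (x : II) : FibreChain H B φ θ x x 0
  | cons {x y z : II} {a b : Fin (n + 1)} {w : ℝ} (hxy : x ≤ y) (ha : H (θ, x) ∈ B a)
      (hb : H (θ, y) ∈ B b) (hyz : FibreChain H B φ θ y z w) :
      FibreChain H B φ θ x z (|φ a - φ b| + w)

namespace FibreChain

variable {H : X × II → X × II} {B : Fin (n + 1) → Set (X × II)} {φ : Fin (n + 1) → ℝ} {θ : X}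
  {x y z : II} {a b : Fin (n + 1)} {w w' : ℝ}

protected theorem le (h : FibreChain H B φ θ x y w) : x ≤ y := by
  induction h with
  | refl => exact le_rfl
  | cons hxy _ _ _ ih => exact hxy.trans ih

theorem trans (hxy : FibreChain H B φ θ x y w) (hyz : FibreChain H B φ θ y z w') :
    FibreChain H B φ θ x z (w + w') := by
  induction hxy with
  | refl => rwa [zero_add]
  | cons hle ha hb _ ih => rw [add_assoc]; exact cons hle ha hb (ih hyz)

theorem of_mem (ha : H (θ, x) ∈ B a) (hb : H (θ, y) ∈ B b) :
    FibreChain H B φ θ (x ⊓ y) (x ⊔ y) |φ a - φ b| := by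
  rw [← add_zero |φ a - φ b|]
  rcases le_total x y with hxy | hyx
  · rw [inf_of_le_left hxy, sup_of_le_right hxy]
    exact cons hxy ha hb (refl y)
  · rw [inf_of_le_right hyx, sup_of_le_left hyx, abs_sub_comm]
    exact cons hyx hb ha (refl x)

theorem join {t : II} (ht : t ∈ uIcc x y) (hxt : FibreChain H B φ θ (x ⊓ t) (x ⊔ t) w)
    (hty : FibreChain H B φ θ (t ⊓ y) (t ⊔ y) w') :
    FibreChain H B φ θ (x ⊓ y) (x ⊔ y) (w + w') := by
  rcases mem_uIcc.mp ht with ⟨hxt', hty'⟩ | ⟨hyt', htx'⟩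
  · simp_all only [inf_of_le_left, sup_of_le_right, hxt'.trans hty']
    exact hxt.trans hty
  · simp_all only [inf_of_le_right, sup_of_le_left, hyt'.trans htx', add_comm w]
    exact hty.trans hxt

end FibreChain

/-- `G` is a continuous skew product over `R` that moves the sets `B k` according to `τ`; over the
invariant set `Θ` their fibres are nonempty and lie in the order of the labels, at distance at
least `δ` from each other. -/
structure FollowsPattern [TopologicalSpace X] (G : X × II → X × II) (R : X → X)
    (τ : Equiv.Perm (Fin (n + 1))) (B : Fin (n + 1) → Set (X × II)) (Θ : Set X) (δ : ℝ) :
    Prop where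
  continuous : Continuous G
  semiconj : Function.Semiconj Prod.fst G R
  mapsTo_base : MapsTo R Θ Θ
  mapsTo : ∀ k, MapsTo G (B k) (B (τ k))
  nonempty : ∀ θ ∈ Θ, ∀ k, ∃ x, (θ, x) ∈ B k
  pos : 0 < δ
  gap : ∀ θ ∈ Θ, ∀ {a b}, a < b → ∀ {x y : II}, (θ, x) ∈ B a → (θ, y) ∈ B b → (x : ℝ) + δ ≤ y

theorem mk_snd_of_semiconj_fst {H : X × II → X × II} {R : X → X}
    (hHR : Function.Semiconj Prod.fst H R) (θ : X) (x : II) : (R θ, (H (θ, x)).2) = H (θ, x) :=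
  Prod.ext (hHR (θ, x)).symm rfl

theorem surjOn_uIcc_snd_of_continuous [TopologicalSpace X] {H : X × II → X × II} (hH : Continuous H)
    (θ : X) (x y : II) :
    SurjOn (fun t => (H (θ, t)).2) (uIcc x y) (uIcc (H (θ, x)).2 (H (θ, y)).2) :=
  intermediate_value_uIcc (by fun_prop : Continuous fun t => (H (θ, t)).2).continuousOn

namespace FollowsPattern

variable [TopologicalSpace X] {G H : X × II → X × II} {R R' : X → X}
  {τ : Equiv.Perm (Fin (n + 1))} {B : Fin (n + 1) → Set (X × II)} {Θ : Set X} {δ : ℝ} {θ : X}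
  {φ : Fin (n + 1) → ℝ} {μ : ℝ} {x y : II} {a b c : Fin (n + 1)}

theorem lt_of_lt (hG : FollowsPattern G R τ B Θ δ) (hθ : θ ∈ Θ) (hab : a < b)
    (hx : (θ, x) ∈ B a) (hy : (θ, y) ∈ B b) : x < y :=
  Subtype.coe_lt_coe.mp (by linarith [hG.gap θ hθ hab hx hy, hG.pos])

theorem exists_mem_uIcc (hG : FollowsPattern G R τ B Θ δ) (hH : Continuous H)
    (hHR : Function.Semiconj Prod.fst H R') (hθ : R' θ ∈ Θ) (hac : a < c) (hcb : c < b)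
    (hx : H (θ, x) ∈ B a) (hy : H (θ, y) ∈ B b) : ∃ t ∈ uIcc x y, H (θ, t) ∈ B c := by
  have hfst := mk_snd_of_semiconj_fst hHR θ
  obtain ⟨v, hv⟩ := hG.nonempty _ hθ c
  have hv_mem : v ∈ uIcc (H (θ, x)).2 (H (θ, y)).2 :=
    mem_uIcc_of_le (hG.lt_of_lt hθ hac ((hfst x).symm ▸ hx) hv).le
      (hG.lt_of_lt hθ hcb hv ((hfst y).symm ▸ hy)).le
  obtain ⟨t, ht, rfl⟩ := surjOn_uIcc_snd_of_continuous hH θ x y hv_mem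
  exact ⟨t, ht, hfst t ▸ hv⟩

theorem exists_chain_of_mem (hG : FollowsPattern G R τ B Θ δ) (hμ : 0 ≤ μ)
    (hφ : ∀ k : Fin n, μ * |φ k.succ - φ k.castSucc| ≤ |φ (τ k.succ) - φ (τ k.castSucc)|)
    (hH : Continuous H) (hHR : Function.Semiconj Prod.fst H R') (hθ : R' θ ∈ Θ)
    (hx : H (θ, x) ∈ B a) (hy : H (θ, y) ∈ B b) :
    ∃ w, μ * |φ a - φ b| ≤ w ∧ FibreChain (G ∘ H) B φ θ (x ⊓ y) (x ⊔ y) w := by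
  wlog hab : a ≤ b generalizing a b x y
  · simpa only [abs_sub_comm, inf_comm, sup_comm] using this hy hx (le_of_not_ge hab)
  have hlink {s t : II} {k : Fin n} (hs : H (θ, s) ∈ B k.castSucc) (ht : H (θ, t) ∈ B k.succ) :
      FibreChain (G ∘ H) B φ θ (s ⊓ t) (s ⊔ t) |φ (τ k.castSucc) - φ (τ k.succ)| :=
    .of_mem (hG.mapsTo _ hs) (hG.mapsTo _ ht)
  have hφ' (k : Fin n) : μ * |φ k.castSucc - φ k.succ| ≤ |φ (τ k.castSucc) - φ (τ k.succ)| := by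
    simpa only [abs_sub_comm] using hφ k
  induction b using Fin.induction generalizing y with
  | zero =>
    obtain rfl := Fin.le_zero_iff.mp hab
    exact ⟨_, by simp, .of_mem (hG.mapsTo _ hx) (hG.mapsTo _ hy)⟩
  | succ k ih =>
    rcases hab.eq_or_lt with rfl | hlt
    · exact ⟨_, by simp, .of_mem (hG.mapsTo _ hx) (hG.mapsTo _ hy)⟩
    rcases (Fin.le_castSucc_iff.mpr hlt).eq_or_lt with rfl | hlt'
    · exact ⟨_, hφ' k, hlink hx hy⟩
    obtain ⟨t, ht, htB⟩ := hG.exists_mem_uIcc hH hHR hθ hlt' Fin.castSucc_lt_succ hx hy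
    obtain ⟨w, hw, hchain⟩ := ih htB hlt'.le
    refine ⟨_, ?_, hchain.join ht (hlink htB hy)⟩
    calc μ * |φ a - φ k.succ|
        ≤ μ * (|φ a - φ k.castSucc| + |φ k.castSucc - φ k.succ|) := by
          gcongr
          exact abs_sub_le _ _ _
      _ ≤ w + |φ (τ k.castSucc) - φ (τ k.succ)| := by
          rw [mul_add]
          exact add_le_add hw (hφ' k)

theorem exists_chain_comp (hG : FollowsPattern G R τ B Θ δ) (hμ : 0 ≤ μ)
    (hφ : ∀ k : Fin n, μ * |φ k.succ - φ k.castSucc| ≤ |φ (τ k.succ) - φ (τ k.castSucc)|)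
    (hH : Continuous H) (hHR : Function.Semiconj Prod.fst H R') (hθ : R' θ ∈ Θ) {w : ℝ}
    (hchain : FibreChain H B φ θ x y w) :
    ∃ w', μ * w ≤ w' ∧ FibreChain (G ∘ H) B φ θ x y w' := by
  induction hchain with
  | refl x => exact ⟨0, (mul_zero μ).le, .refl x⟩
  | cons hxy ha hb _ ih =>
    obtain ⟨w₁, hw₁, h₁⟩ := hG.exists_chain_of_mem hμ hφ hH hHR hθ ha hb
    obtain ⟨w₂, hw₂, h₂⟩ := ih
    rw [inf_of_le_left hxy, sup_of_le_right hxy] at h₁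
    exact ⟨w₁ + w₂, by rw [mul_add]; exact add_le_add hw₁ hw₂, h₁.trans h₂⟩

theorem exists_chain_iterate (hG : FollowsPattern G R τ B Θ δ) (hμ : 0 ≤ μ)
    (hφ : ∀ k : Fin n, μ * |φ k.succ - φ k.castSucc| ≤ |φ (τ k.succ) - φ (τ k.castSucc)|)
    (hθ : θ ∈ Θ) (hx : (θ, x) ∈ B a) (hy : (θ, y) ∈ B b) (N : ℕ) :
    ∃ w, μ ^ N * |φ a - φ b| ≤ w ∧ FibreChain G^[N] B φ θ (x ⊓ y) (x ⊔ y) w := by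
  induction N with
  | zero => exact ⟨_, by simp, .of_mem (H := id) hx hy⟩
  | succ N ih =>
    obtain ⟨w, hw, hchain⟩ := ih
    obtain ⟨w', hw', hchain'⟩ := hG.exists_chain_comp hμ hφ (hG.continuous.iterate N)
      (hG.semiconj.iterate_right N) (hG.mapsTo_base.iterate N hθ) hchain
    refine ⟨w', ?_, Function.iterate_succ' G N ▸ hchain'⟩
    calc μ ^ (N + 1) * |φ a - φ b| = μ * (μ ^ N * |φ a - φ b|) := by ring
      _ ≤ w' := (mul_le_mul_of_nonneg_left hw hμ).trans hw'

end FollowsPattern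

end FibreChains

section Counting

variable {X : Type*} [PseudoMetricSpace X] {n m : ℕ} {G H : X × II → X × II} {R R' : X → X}
  {τ : Equiv.Perm (Fin (n + 1))} {B : Fin (n + 1) → Set (X × II)} {Θ : Set X} {δ η c Λ μ : ℝ}
  {θ : X} {φ : Fin (n + 1) → ℝ} {x y z : II} {a b : Fin (n + 1)} {w : ℝ}

theorem IsDynSeparated.fibre_union {A A' : Finset II}
    (hA : IsDynSeparated H η (m + 1) (Prod.mk θ '' A))
    (hA' : IsDynSeparated H η (m + 1) (Prod.mk θ '' A'))
    (hfar : ∀ s ∈ A, ∀ t ∈ A', (s : ℝ) + η ≤ t) :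
    IsDynSeparated H η (m + 1) (Prod.mk θ '' (A ∪ A' : Set II)) := by
  have hsymm : Std.Symm fun p q : X × II => ∃ k < m + 1, η ≤ dist (H^[k] p) (H^[k] q) :=
    ⟨fun p q ⟨k, hk, hle⟩ => ⟨k, hk, dist_comm (H^[k] p) _ ▸ hle⟩⟩
  rw [image_union]
  refine pairwise_union_of_symm.mpr ⟨hA, hA', ?_⟩
  rintro _ ⟨s, hs, rfl⟩ _ ⟨t, ht, rfl⟩ _
  refine ⟨0, m.succ_pos, ?_⟩
  rw [Function.iterate_zero_apply, Function.iterate_zero_apply, dist_prod_same_left, dist_comm]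
  exact (le_sub_iff_add_le'.mpr (hfar s hs t ht)).trans (le_abs_self _)

/-- Over every point of `Θ`, each interval with end points in the fibres of `B a` and `B b`
contains an `(m, η)`-separated set for `H` with at least `c |φ a - φ b|` elements. -/
def HasSeparatedFibres (H : X × II → X × II) (B : Fin (n + 1) → Set (X × II)) (Θ : Set X)
    (φ : Fin (n + 1) → ℝ) (η c : ℝ) (m : ℕ) : Prop :=
  ∀ θ ∈ Θ, ∀ {x y : II} {a b : Fin (n + 1)}, (θ, x) ∈ B a → (θ, y) ∈ B b →
    ∃ A : Finset II, (A : Set II) ⊆ uIcc x y ∧ IsDynSeparated H η m (Prod.mk θ '' A) ∧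
      c * |φ a - φ b| ≤ A.card

theorem HasSeparatedFibres.exists_pullback (h : HasSeparatedFibres H B Θ φ η c m)
    (hH : Continuous H) (hHR : Function.Semiconj Prod.fst H R') (hθ : R' θ ∈ Θ)
    (ha : H (θ, x) ∈ B a) (hb : H (θ, y) ∈ B b) :
    ∃ A : Finset II, (A : Set II) ⊆ uIcc x y ∧ IsDynSeparated H η (m + 1) (Prod.mk θ '' A) ∧
      c * |φ a - φ b| ≤ A.card := by
  have hfst := mk_snd_of_semiconj_fst hHR θ
  rw [← hfst] at ha hb
  obtain ⟨A', hA', hsep, hcard⟩ := h _ hθ ha hb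
  obtain ⟨A, hA, hinj, rfl⟩ := Finset.exists_subset_injOn_image_eq_of_surjOn _ A'
    ((surjOn_uIcc_snd_of_continuous hH θ x y).mono subset_rfl hA')
  refine ⟨A, hA, ?_, by rwa [Finset.card_image_of_injOn hinj] at hcard⟩
  rintro _ ⟨s, hs, rfl⟩ _ ⟨t, ht, rfl⟩ hst
  have himage {s : II} (hs : s ∈ A) :
      H (θ, s) ∈ Prod.mk (R' θ) '' (A.image fun t => (H (θ, t)).2 : Finset II) :=
    ⟨_, Finset.mem_coe.mpr (Finset.mem_image_of_mem _ hs), hfst s⟩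
  have hne : H (θ, s) ≠ H (θ, t) := fun heq => hst <| by
    rw [hinj hs ht (congrArg Prod.snd heq)]
  obtain ⟨k, hk, hle⟩ := hsep (himage hs) (himage ht) hne
  exact ⟨k + 1, by omega, hle⟩

theorem HasSeparatedFibres.exists_of_chain (h : HasSeparatedFibres H B Θ φ η c m) (hη : 0 < η)
    (hH : Continuous H) (hHR : Function.Semiconj Prod.fst H R') (hθ : R' θ ∈ Θ)
    (hlink : ∀ {x y : II} {a b}, a ≠ b → H (θ, x) ∈ B a → H (θ, y) ∈ B b → η ≤ dist x y)
    (hchain : FibreChain H B φ θ x z w) :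
    ∃ A₁ A₂ : Finset II, (∀ t ∈ A₁, x ≤ t ∧ t ≤ z) ∧ (∀ t ∈ A₂, (x : ℝ) + η ≤ t ∧ t ≤ z) ∧
      IsDynSeparated H η (m + 1) (Prod.mk θ '' A₁) ∧
      IsDynSeparated H η (m + 1) (Prod.mk θ '' A₂) ∧ c * w ≤ A₁.card + A₂.card := by
  classical
  induction hchain with
  | refl x => exact ⟨∅, ∅, by simp [IsDynSeparated]⟩
  | @cons x y z a b w hxy ha hb hyz ih =>
    obtain ⟨A₁, A₂, hA₁, hA₂, hsep₁, hsep₂, hcard⟩ := ih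
    rcases eq_or_ne a b with rfl | hab
    · refine ⟨A₁, A₂, fun t ht => ⟨hxy.trans (hA₁ t ht).1, (hA₁ t ht).2⟩, fun t ht => ⟨?_,
        (hA₂ t ht).2⟩, hsep₁, hsep₂, by simpa using hcard⟩
      exact (add_le_add_left (Subtype.coe_le_coe.mpr hxy) η).trans (hA₂ t ht).1
    have hxy_far : (x : ℝ) + η ≤ y := by
      have := hlink hab ha hb
      rw [dist_comm, Subtype.dist_eq, Real.dist_eq,
        abs_of_nonneg (sub_nonneg.mpr (Subtype.coe_le_coe.mpr hxy))] at this
      linarith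
    obtain ⟨A, hA, hsep, hcardA⟩ := h.exists_pullback hH hHR hθ ha hb
    rw [uIcc_of_le hxy] at hA
    have hfar (s : II) (hs : s ∈ A) (t : II) (ht : t ∈ A₂) : (s : ℝ) + η ≤ t :=
      (add_le_add_left (Subtype.coe_le_coe.mpr (hA hs).2) η).trans (hA₂ t ht).1
    have hdisj : Disjoint A A₂ := Finset.disjoint_left.mpr fun t ht ht' =>
      (lt_add_of_pos_right _ hη).not_ge (hfar t ht t ht')
    refine ⟨A ∪ A₂, A₁, fun t ht => ?_, fun t ht => ?_, ?_, hsep₁, ?_⟩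
    · rcases Finset.mem_union.mp ht with ht | ht
      · exact ⟨(hA ht).1, (hA ht).2.trans hyz.le⟩
      · refine ⟨hxy.trans (Subtype.coe_le_coe.mp ?_), (hA₂ t ht).2⟩
        linarith [(hA₂ t ht).1]
    · exact ⟨hxy_far.trans (Subtype.coe_le_coe.mpr (hA₁ t ht).1), (hA₁ t ht).2⟩
    · rw [Finset.coe_union]
      exact hsep.fibre_union hsep₂ hfar
    · rw [Finset.card_union_of_disjoint hdisj, mul_add]
      push_cast
      linarith

theorem HasSeparatedFibres.succ (h : HasSeparatedFibres H B Θ φ η c m) (hc : 0 ≤ c) (hη : 0 < η)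
    (hH : Continuous H) (hHR : Function.Semiconj Prod.fst H R') (hΘ : MapsTo R' Θ Θ)
    (hlink : ∀ θ ∈ Θ, ∀ {x y : II} {a b}, a ≠ b → H (θ, x) ∈ B a → H (θ, y) ∈ B b →
      η ≤ dist x y)
    (hchain : ∀ θ ∈ Θ, ∀ {x y a b}, (θ, x) ∈ B a → (θ, y) ∈ B b →
      ∃ w, Λ * |φ a - φ b| ≤ w ∧ FibreChain H B φ θ (x ⊓ y) (x ⊔ y) w) :
    HasSeparatedFibres H B Θ φ η (c * (Λ / 2)) (m + 1) := by
  intro θ hθ x y a b ha hb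
  obtain ⟨w, hw, hxy⟩ := hchain θ hθ ha hb
  obtain ⟨A₁, A₂, hA₁, hA₂, hsep₁, hsep₂, hcard⟩ :=
    h.exists_of_chain hη hH hHR (hΘ hθ) (hlink θ hθ) hxy
  have hcard' : 2 * (c * (Λ / 2) * |φ a - φ b|) ≤ A₁.card + A₂.card :=
    calc 2 * (c * (Λ / 2) * |φ a - φ b|) = c * (Λ * |φ a - φ b|) := by ring
      _ ≤ A₁.card + A₂.card := (mul_le_mul_of_nonneg_left hw hc).trans hcard
  rcases le_total A₁.card A₂.card with hle | hle
  · refine ⟨A₂, fun t ht => ⟨Subtype.coe_le_coe.mp ?_, (hA₂ t ht).2⟩, hsep₂, ?_⟩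
    · linarith [(hA₂ t ht).1]
    · linarith [(Nat.cast_le (α := ℝ)).mpr hle]
  · refine ⟨A₁, hA₁, hsep₁, ?_⟩
    linarith [(Nat.cast_le (α := ℝ)).mpr hle]

namespace FollowsPattern

variable [CompactSpace X]

theorem exists_forall_hasSeparatedFibres (hG : FollowsPattern G R τ B Θ δ) (hμ : 0 ≤ μ)
    (hφ : ∀ k : Fin n, μ * |φ k.succ - φ k.castSucc| ≤ |φ (τ k.succ) - φ (τ k.castSucc)|)
    (N : ℕ) : ∃ η > 0, ∃ c > 0, ∀ m,
      HasSeparatedFibres G^[N] B Θ φ η (c * (μ ^ N / 2) ^ m) m := by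
  have hH : Continuous G^[N] := hG.continuous.iterate N
  have hHR : Function.Semiconj Prod.fst G^[N] R^[N] := hG.semiconj.iterate_right N
  obtain ⟨η, hη, hunif⟩ := Metric.uniformContinuous_iff.mp
    (CompactSpace.uniformContinuous_of_continuous hH) δ hG.pos
  have hlink (θ : X) (hθ : θ ∈ Θ) {x y : II} {a b} (hab : a ≠ b) (ha : G^[N] (θ, x) ∈ B a)
      (hb : G^[N] (θ, y) ∈ B b) : η ≤ dist x y := by
    wlog hlt : a < b generalizing a b x y
    · exact dist_comm x y ▸ this hab.symm hb ha (hab.lt_or_gt.resolve_left hlt)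
    by_contra! hclose
    have hfst := mk_snd_of_semiconj_fst hHR θ
    have hdist := hunif (dist_prod_same_left (x := θ) (y₁ := x) (y₂ := y) ▸ hclose)
    have hgap := hG.gap _ (hG.mapsTo_base.iterate N hθ) hlt ((hfst x).symm ▸ ha)
      ((hfst y).symm ▸ hb)
    rw [← hfst x, ← hfst y, dist_prod_same_left, dist_comm] at hdist
    linarith [(le_abs_self _).trans_lt hdist]
  refine ⟨η, hη, (2 * ‖φ‖ + 1)⁻¹, by positivity, fun m => ?_⟩
  induction m with
  | zero =>
    intro θ _ x y a b _ _
    refine ⟨{x}, by simp, by simp [IsDynSeparated], ?_⟩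
    have hφ_le : |φ a - φ b| ≤ 2 * ‖φ‖ := by
      linarith [abs_sub (φ a) (φ b), norm_le_pi_norm φ a, norm_le_pi_norm φ b,
        Real.norm_eq_abs (φ a), Real.norm_eq_abs (φ b)]
    rw [pow_zero, mul_one, inv_mul_le_iff₀ (by positivity), Finset.card_singleton]
    push_cast
    linarith
  | succ m ih =>
    rw [pow_succ, ← mul_assoc]
    exact ih.succ (by positivity) hη hH hHR (hG.mapsTo_base.iterate N) hlink
      fun θ hθ {x y a b} hx hy => hG.exists_chain_iterate hμ hφ hθ hx hy N

theorem log_le_coverEntropy (hG : FollowsPattern G R τ B Θ δ) (hΘ : Θ.Nonempty) (hμ : 0 < μ)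
    (hφ : ∀ k : Fin n, μ * |φ k.succ - φ k.castSucc| ≤ |φ (τ k.succ) - φ (τ k.castSucc)|)
    (hφ_ne : ∃ a b, φ a ≠ φ b) :
    (Real.log μ : EReal) ≤ coverEntropy G univ := by
  obtain ⟨θ, hθ⟩ := hΘ
  obtain ⟨a, b, hab⟩ := hφ_ne
  obtain ⟨x, hx⟩ := hG.nonempty θ hθ a
  obtain ⟨y, hy⟩ := hG.nonempty θ hθ b
  have hiterate (N : ℕ) : (Real.log (μ ^ N / 2) : EReal) ≤ coverEntropy G^[N] univ := by
    obtain ⟨η, hη, c, hc, hsep⟩ := hG.exists_forall_hasSeparatedFibres hμ.le hφ N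
    refine log_le_coverEntropy_of_isDynSeparated (by positivity)
      (mul_pos hc (abs_pos.mpr (sub_ne_zero.mpr hab))) hη fun m => ?_
    obtain ⟨A, -, hA, hcard⟩ := hsep m θ hθ hx hy
    refine ⟨A.map (Function.Embedding.sectR θ II), by simpa using! hA, ?_⟩
    rw [Finset.card_map]
    linarith
  by_contra! hlt
  lift coverEntropy G univ to ℝ using ⟨hlt.ne_top,
    (EReal.bot_lt_zero.trans_le (coverEntropy_nonneg G ⟨(θ, x), mem_univ _⟩)).ne'⟩ with h hh
  obtain ⟨N, hN⟩ := exists_nat_gt (Real.log 2 / (Real.log μ - h))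
  rw [div_lt_iff₀ (sub_pos.mpr (EReal.coe_lt_coe_iff.mp hlt))] at hN
  have hN_ne : N ≠ 0 := by
    rintro rfl
    rw [Nat.cast_zero, zero_mul] at hN
    exact hN.not_gt (Real.log_pos one_lt_two)
  have hle := (hiterate N).trans (coverEntropy_iterate_le G univ hN_ne)
  rw [← hh, Real.log_div (by positivity) two_ne_zero, Real.log_pow] at hle
  have : N * Real.log μ - Real.log 2 ≤ N * h := mod_cast hle
  linarith

end FollowsPattern

end Counting

section StripPatterns

variable {F : Cyl → Cyl} {ω : S1} {A B : Set Cyl} {θ : S1} {n : ℕ}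

/-- `F` is a continuous skew product over the rotation of the circle by `ω`, which may be
rational. -/
structure IsSkewRotation (F : Cyl → Cyl) (ω : S1) : Prop where
  continuous : Continuous F
  fst_apply : ∀ p, (F p).1 = p.1 + ω

theorem IsSkewRotation.semiconj (hF : IsSkewRotation F ω) :
    Function.Semiconj Prod.fst F (· + ω) :=
  hF.fst_apply

theorem IsSkewRotation.iterate (hF : IsSkewRotation F ω) (m : ℕ) :
    IsSkewRotation F^[m] (m • ω) where
  continuous := hF.continuous.iterate m
  fst_apply p := (hF.semiconj.iterate_right m p).trans (add_right_iterate_apply ..)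

theorem IsSkewRotation.fiber_image (hF : IsSkewRotation F ω) (A : Set Cyl) (θ : S1) :
    fiber (F '' A) (θ + ω) = (fun x => (F (θ, x)).2) '' fiber A θ := by
  ext y
  constructor
  · rintro ⟨⟨θ', x⟩, hx, hy⟩
    obtain rfl : θ' = θ := add_right_cancel ((hF.fst_apply _).symm.trans (congrArg Prod.fst hy))
    exact ⟨x, hx, congrArg Prod.snd hy⟩
  · rintro ⟨x, hx, rfl⟩
    exact ⟨(θ, x), hx, Prod.ext (hF.fst_apply _) rfl⟩

theorem eventually_residual_add {p : S1 → Prop} (ω : S1) (h : ∀ᶠ θ in residual S1, p θ) :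
    ∀ᶠ θ in residual S1, p (θ + ω) := by
  rwa [← (Homeomorph.addRight ω).residual_map_eq] at h

theorem IsStrip.image (hA : IsStrip A) (hF : IsSkewRotation F ω) : IsStrip (F '' A) := by
  obtain ⟨hclosed, hne, G, hG, hIcc⟩ := hA
  refine ⟨(hclosed.isCompact.image hF.continuous).isClosed, fun θ => ?_, {θ | θ - ω ∈ G}, ?_,
    fun θ hθ => ?_⟩
  · obtain ⟨x, hx⟩ := hne (θ - ω)
    exact ⟨(F (θ - ω, x)).2, (θ - ω, x), hx, Prod.ext (by simp [hF.fst_apply]) rfl⟩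
  · simp only [sub_eq_add_neg]
    exact eventually_residual_add (-ω) hG
  · obtain ⟨a, b, hab, hfib⟩ := hIcc _ hθ
    have hcont : Continuous fun x => (F (θ - ω, x)).2 := by
      have := hF.continuous
      fun_prop
    rw [← sub_add_cancel θ ω, hF.fiber_image, hfib, hcont.continuousOn.image_Icc hab]
    exact ⟨_, _, csInf_le_csSup (nonempty_Icc.mpr hab |>.image _), rfl⟩

theorem IsStrip.image_iterate (hA : IsStrip A) (hF : IsSkewRotation F ω) (m : ℕ) :
    IsStrip (F^[m] '' A) :=
  hA.image (hF.iterate m)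

theorem le_MA {x : II} (h : (θ, x) ∈ A) : (x : ℝ) ≤ MA A θ :=
  le_csSup ⟨1, by rintro _ ⟨y, -, rfl⟩; exact y.2.2⟩ ⟨x, h, rfl⟩

theorem mA_le {x : II} (h : (θ, x) ∈ A) : mA A θ ≤ (x : ℝ) :=
  csInf_le ⟨0, by rintro _ ⟨y, -, rfl⟩; exact y.2.1⟩ ⟨x, h, rfl⟩

theorem IsStrip.mA_le_MA (hA : IsStrip A) (θ : S1) : mA A θ ≤ MA A θ := by
  obtain ⟨x, hx⟩ := hA.2.1 θ
  exact (mA_le hx).trans (le_MA hx)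

theorem eventually_forall_stripLT {ι : Type*} [Countable ι] (A : ι → Set Cyl) :
    ∀ᶠ θ in residual S1, ∀ i j, stripLT (A i) (A j) → MA (A i) θ < mA (A j) θ := by
  refine eventually_countable_forall.mpr fun i => eventually_countable_forall.mpr fun j => ?_
  by_cases h : stripLT (A i) (A j)
  · obtain ⟨G, hG, hlt⟩ := h
    exact mem_of_superset hG fun θ hθ _ => hlt θ hθ
  · exact Eventually.of_forall fun _ h' => absurd h' h

theorem isCycleOn_finRotate (n : ℕ) : (finRotate (n + 2)).IsCycleOn univ := by
  convert isCycle_finRotate.isCycleOn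
  simp

theorem IsPeriodicStripOrbit.image_iterate_finRotate
    (hB : IsPeriodicStripOrbit F (n + 1) B) (i : Fin (n + 1)) :
    F '' (F^[i] '' B) = F^[finRotate (n + 1) i] '' B := by
  rw [← image_comp, ← Function.iterate_succ' F]
  induction i using Fin.lastCases with
  | last => rw [finRotate_last, Fin.val_last, hB.2.1, Fin.val_zero, Function.iterate_zero, image_id]
  | cast i => rw [finRotate_apply, Fin.coeSucc_eq_succ, Fin.val_succ, Fin.val_castSucc]

theorem IsPeriodicStripOrbit.iterate {q M : ℕ} (hB : IsPeriodicStripOrbit F (M * q) B)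
    (hM : 0 < M) : IsPeriodicStripOrbit F^[M] q B := by
  simp only [IsPeriodicStripOrbit, ← Function.iterate_mul]
  exact ⟨hB.1, hB.2.1, fun i j hij hj =>
    hB.2.2 _ _ (Nat.mul_lt_mul_of_pos_left hij hM) (Nat.mul_lt_mul_of_pos_left hj hM)⟩

theorem IsPeriodicStripOrbit.exists_exhibitsStripPattern (hF : IsSkewRotation F ω)
    (hB : IsPeriodicStripOrbit F (n + 2) B) :
    ∃ τ : Equiv.Perm (Fin (n + 2)), τ.IsCycleOn univ ∧ ExhibitsStripPattern F τ := by
  let A (i : Fin (n + 2)) : Set Cyl := F^[i] '' B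
  have hA (i : Fin (n + 2)) : IsStrip (A i) := hB.1.image_iterate hF i
  have hdisj : Pairwise fun i j => Disjoint (A i) (A j) := fun i j hij => by
    rcases hij.lt_or_gt with h | h
    · exact (hB.2.2 i j h j.2).1
    · exact (hB.2.2 j i h i.2).1.symm
  have hord {i j : Fin (n + 2)} (hij : i ≠ j) : stripLT (A i) (A j) ∨ stripLT (A j) (A i) := by
    rcases hij.lt_or_gt with h | h
    · exact (hB.2.2 i j h j.2).2
    · exact (hB.2.2 j i h i.2).2.symm
  obtain ⟨θ, hθ⟩ := (dense_of_mem_residual (eventually_forall_stripLT A)).nonempty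
  let e := Tuple.sort fun i => mA (A i) θ
  refine ⟨e⁻¹ * finRotate (n + 2) * e, ?_, fun k => A (e k), fun k => hA _, fun k l hkl => ?_,
    fun k l hkl => hdisj (e.injective.ne hkl), fun k => ?_⟩
  · simpa using (isCycleOn_finRotate n).conj (g := e⁻¹)
  · refine (hord (e.injective.ne hkl.ne)).resolve_right fun h => ?_
    exact ((hA _).mA_le_MA θ).trans_lt (hθ _ _ h) |>.not_ge
      (Tuple.monotone_sort (fun i => mA (A i) θ) hkl.le)
  · simp [A, hB.image_iterate_finRotate, -finRotate_apply]

theorem exists_pos_forall_le_dist {ι Y : Type*} [Finite ι] [PseudoMetricSpace Y] {K : ι → Set Y}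
    (hK : ∀ i, IsCompact (K i)) (hK' : ∀ i, IsClosed (K i))
    (hdisj : Pairwise fun i j => Disjoint (K i) (K j)) :
    ∃ δ > 0, ∀ i j, i ≠ j → ∀ x ∈ K i, ∀ y ∈ K j, δ ≤ dist x y := by
  have hpair (i j : ι) : ∀ᶠ δ in 𝓝[>] (0 : ℝ), i ≠ j → ∀ x ∈ K i, ∀ y ∈ K j, δ ≤ dist x y := by
    rcases eq_or_ne i j with rfl | hij
    · exact Eventually.of_forall fun _ h => absurd rfl h
    obtain ⟨r, hr, hlt⟩ := Metric.exists_pos_forall_lt_edist (hK i) (hK' j) (hdisj hij)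
    filter_upwards [Ioo_mem_nhdsGT (NNReal.coe_pos.mpr hr)] with δ hδ _ x hx y hy
    have := hlt x hx y hy
    rw [edist_nndist, ENNReal.coe_lt_coe, ← NNReal.coe_lt_coe, coe_nndist] at this
    exact (hδ.2.trans this).le
  obtain ⟨δ, hδ, hpos⟩ := ((eventually_all.mpr fun i => eventually_all.mpr (hpair i)).and
    self_mem_nhdsWithin).exists
  exact ⟨δ, hpos, hδ⟩

theorem ExhibitsStripPattern.exists_followsPattern {τ : Equiv.Perm (Fin (n + 1))}
    (hτ : ExhibitsStripPattern F τ) (hF : IsSkewRotation F ω) :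
    ∃ B Θ δ, Θ.Nonempty ∧ FollowsPattern F (· + ω) τ B Θ δ := by
  obtain ⟨B, hB, hlt, hdisj, himage⟩ := hτ
  obtain ⟨δ, hδ, hdist⟩ :=
    exists_pos_forall_le_dist (fun i => (hB i).1.isCompact) (fun i => (hB i).1) hdisj
  have hgeneric : ∀ᶠ θ in residual S1, ∀ t : ℕ, ∀ i j, stripLT (B i) (B j) →
      MA (B i) (θ + t • ω) < mA (B j) (θ + t • ω) :=
    eventually_countable_forall.mpr fun t =>
      eventually_residual_add (t • ω) (eventually_forall_stripLT B)
  refine ⟨B, _, δ, (dense_of_mem_residual hgeneric).nonempty, hF.continuous, hF.semiconj,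
    fun θ hθ t => ?_, fun k => mapsTo_iff_image_subset.mpr (himage k).subset,
    fun θ _ k => (hB k).2.1 θ, hδ, fun θ hθ a b hab x y hx hy => ?_⟩
  · simpa only [succ_nsmul', add_assoc] using hθ (t + 1)
  · have hxy : (x : ℝ) < y := by
      have := hθ 0 a b (hlt a b hab)
      rw [zero_nsmul, add_zero] at this
      exact (le_MA hx).trans_lt (this.trans_le (mA_le hy))
    have := hdist a b hab.ne _ hx _ hy
    rw [dist_prod_same_left, dist_comm, Subtype.dist_eq, Real.dist_eq,
      abs_of_pos (sub_pos.mpr hxy)] at this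
    linarith

theorem ExhibitsStripPattern.log_le_coverEntropy {τ : Equiv.Perm (Fin (n + 1))} {lam : ℝ}
    (hτ : ExhibitsStripPattern F τ) (hF : IsSkewRotation F ω) (hcycle : τ.IsCycleOn univ)
    (hodd : Odd (n + 1)) (hn : n ≠ 0) (hlam_pos : 0 < lam)
    (hlam : (lam ^ 2 - 2) * lam ^ (n + 1 - 2) = 1) :
    (Real.log lam : EReal) ≤ coverEntropy F univ := by
  obtain ⟨B, Θ, δ, hΘ, hB⟩ := hτ.exists_followsPattern hF
  refine EReal.ge_of_forall_gt_iff_ge.mp fun a ha => ?_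
  have ha' : Real.exp a < lam := (Real.lt_log_iff_exp_lt hlam_pos).mp (mod_cast ha)
  obtain ⟨φ, hφ_lt, hφ⟩ := exists_expanding_weight hcycle hodd hn (Real.exp_pos a)
    (sq_sub_two_mul_pow_lt_one (Real.exp_pos a).le ha' hlam)
  simpa only [Real.log_exp] using
    hB.log_le_coverEntropy hΘ (Real.exp_pos a) hφ ⟨_, _, hφ_lt.ne⟩

theorem IsPeriodicStripOrbit.log_div_le_hTop {q M : ℕ} {lam : ℝ} (hF : IsSkewRotation F ω)
    (hB : IsPeriodicStripOrbit F (M * q) B) (hM : 0 < M) (hq : 3 ≤ q) (hodd : Odd q)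
    (hlam_pos : 0 < lam) (hlam : (lam ^ 2 - 2) * lam ^ (q - 2) = 1) :
    ((Real.log lam / M : ℝ) : EReal) ≤ hTop F := by
  obtain ⟨n, rfl⟩ := Nat.exists_eq_add_of_le' hq
  obtain ⟨τ, hcycle, hτ⟩ :=
    (hB.iterate hM).exists_exhibitsStripPattern (n := n + 1) (hF.iterate M)
  have hiterate : (Real.log lam : EReal) ≤ M * coverEntropy F univ :=
    (hτ.log_le_coverEntropy (hF.iterate M) hcycle hodd (by omega) hlam_pos hlam).trans
      (coverEntropy_iterate_le F univ hM.ne')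
  rw [EReal.coe_div, EReal.div_le_iff_le_mul (mod_cast hM) (EReal.coe_ne_top _)]
  exact hiterate

end StripPatterns

section Variation

theorem exists_finset_forall_abs_sub_lt {X : Type*} {φ : X → ℝ} {V ε : ℝ}
    (hφ : ∀ x, φ x ∈ Icc 0 V) (hV : 0 ≤ V) (hε : 0 < ε) :
    ∃ S : Finset X, S.card ≤ V / ε + 1 ∧ ∀ x, ∃ y ∈ S, |φ x - φ y| < ε := by
  let cell : X → ℕ := fun x => ⌊φ x / ε⌋₊
  obtain ⟨S, -, hS⟩ := (surjOn_image cell univ).exists_bijOn_subset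
  have hcell : MapsTo cell S (Finset.range (⌊V / ε⌋₊ + 1)) := fun x _ => by
    simpa [Nat.lt_succ_iff] using Nat.floor_le_floor (div_le_div_of_nonneg_right (hφ x).2 hε.le)
  lift S to Finset X using Finite.of_injOn hcell hS.injOn (Finset.finite_toSet _)
  refine ⟨S, ?_, fun x => ?_⟩
  · calc (S.card : ℝ) ≤ (⌊V / ε⌋₊ + 1 : ℕ) := by
          simpa using! Nat.cast_le (α := ℝ).2 (Finset.card_le_card_of_injOn cell hcell hS.injOn)
      _ ≤ V / ε + 1 := by
          push_cast
          exact add_le_add_left (Nat.floor_le (div_nonneg hV hε.le)) 1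
  · obtain ⟨y, hy, hxy⟩ := hS.surjOn (mem_image_of_mem cell (mem_univ x))
    refine ⟨y, hy, ?_⟩
    have h : |φ x / ε - φ y / ε| < 1 :=
      Int.abs_sub_lt_one_of_floor_eq_floor (by
        rw [← Int.natCast_floor_eq_floor (div_nonneg (hφ x).1 hε.le),
          ← Int.natCast_floor_eq_floor (div_nonneg (hφ y).1 hε.le)]
        exact congrArg _ hxy.symm)
    rwa [← sub_div, abs_div, abs_of_pos hε, div_lt_one hε] at h

theorem exists_finset_forall_dist_lt_of_eVariationOn_le {α E : Type*} [LinearOrder α]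
    [PseudoMetricSpace E] {g : α → E} {a b : α} {V : ℝ≥0} {ε : ℝ}
    (hg : eVariationOn g (Icc a b) ≤ V) (hε : 0 < ε) :
    ∃ S : Finset (Icc a b), S.card ≤ V / ε + 1 ∧
      ∀ x : Icc a b, ∃ y ∈ S, dist (g x) (g y) < ε := by
  let φ : Icc a b → ℝ := fun x => (eVariationOn g (Icc a x)).toReal
  have hle (x : Icc a b) : eVariationOn g (Icc a x) ≤ V :=
    (eVariationOn.mono g (Icc_subset_Icc_right x.2.2)).trans hg
  have hφ (x : Icc a b) : φ x ∈ Icc 0 (V : ℝ) :=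
    ⟨ENNReal.toReal_nonneg, ENNReal.toReal_le_coe_of_le_coe (hle x)⟩
  have hdist {x y : Icc a b} (hxy : x ≤ y) : dist (g x) (g y) ≤ |φ x - φ y| := by
    have hsplit : eVariationOn g (Icc a x) + eVariationOn g (Icc x y) =
        eVariationOn g (Icc a y) := by
      simpa using eVariationOn.Icc_add_Icc g x.2.1 hxy (mem_univ (x : α))
    have hfin : eVariationOn g (Icc (x : α) y) ≠ ∞ :=
      ne_top_of_le_ne_top ENNReal.coe_ne_top (le_add_self.trans (hsplit.trans_le (hle y)))
    have hsub : φ y - φ x = (eVariationOn g (Icc (x : α) y)).toReal := by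
      simp only [φ, ← hsplit,
        ENNReal.toReal_add (ne_top_of_le_ne_top ENNReal.coe_ne_top (hle x)) hfin]
      ring
    rw [abs_sub_comm, hsub, abs_of_nonneg ENNReal.toReal_nonneg, dist_edist]
    exact ENNReal.toReal_mono hfin
      (eVariationOn.edist_le g (left_mem_Icc.2 hxy) (right_mem_Icc.2 hxy))
  obtain ⟨S, hcard, hS⟩ := exists_finset_forall_abs_sub_lt hφ V.2 hε
  refine ⟨S, hcard, fun x => ?_⟩
  obtain ⟨y, hy, hxy⟩ := hS x
  refine ⟨y, hy, lt_of_le_of_lt ?_ hxy⟩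
  rcases le_total x y with h | h
  · exact hdist h
  · rw [dist_comm, abs_sub_comm]
    exact hdist h

theorem eVariationOn_pi_le {α ι : Type*} [LinearOrder α] [Fintype ι] {E : ι → Type*}
    [∀ i, PseudoEMetricSpace (E i)] (g : α → ∀ i, E i) (s : Set α) :
    eVariationOn g s ≤ ∑ i, eVariationOn (fun x => g x i) s := by
  refine iSup_le fun p => ?_
  calc ∑ j ∈ Finset.range p.1, edist (g (p.2.1 (j + 1))) (g (p.2.1 j))
      ≤ ∑ j ∈ Finset.range p.1, ∑ i, edist (g (p.2.1 (j + 1)) i) (g (p.2.1 j) i) :=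
        Finset.sum_le_sum fun j _ => edist_pi_le_iff.2 fun i =>
          Finset.single_le_sum
            (f := fun i => edist (g (p.2.1 (j + 1)) i) (g (p.2.1 j) i)) (fun _ _ => zero_le)
            (Finset.mem_univ i)
    _ = ∑ i, ∑ j ∈ Finset.range p.1, edist (g (p.2.1 (j + 1)) i) (g (p.2.1 j) i) :=
        Finset.sum_comm
    _ ≤ ∑ i, eVariationOn (fun x => g x i) s :=
        Finset.sum_le_sum fun i _ => eVariationOn.sum_le p.2.2.1 p.2.2.2

/-- The total variation on `[0, 1]` of the `k`-th iterate of `f` is `O(μ ^ k)`. -/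
def HasVariationGrowth (f : ℝ → ℝ) (μ : ℝ≥0) : Prop :=
  ∃ C : ℝ≥0, ∀ k, eVariationOn f^[k] (Icc 0 1) ≤ (C * μ ^ k : ℝ≥0)

theorem HasVariationGrowth.exists_orbit_eVariationOn_le {f : ℝ → ℝ} {μ : ℝ≥0}
    (hf : HasVariationGrowth f μ) (hμ : 1 < μ) :
    ∃ C : ℝ≥0, ∀ n, eVariationOn (fun x (k : Fin n) => f^[k] x) (Icc 0 1) ≤
      (C * μ ^ n : ℝ≥0) := by
  obtain ⟨C, hC⟩ := hf
  refine ⟨C / (μ - 1), fun n => ?_⟩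
  calc eVariationOn (fun x (k : Fin n) => f^[k] x) (Icc 0 1)
      ≤ ∑ k : Fin n, ((C * μ ^ (k : ℕ) : ℝ≥0) : ℝ≥0∞) :=
        (eVariationOn_pi_le _ _).trans (Finset.sum_le_sum fun k _ => hC k)
    _ ≤ (C / (μ - 1) * μ ^ n : ℝ≥0) := by
        rw [Fin.sum_univ_eq_sum_range fun k => ((C * μ ^ k : ℝ≥0) : ℝ≥0∞)]
        rw [← ENNReal.ofNNReal_finsetSum]
        refine ENNReal.coe_le_coe.2 ?_
        rw [← Finset.mul_sum, div_mul_eq_mul_div, mul_div_assoc, geom_sum_of_one_lt hμ]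
        gcongr
        exact tsub_le_self

theorem IsSkewRotation.hTop_le_log_of_hasVariationGrowth {F : Cyl → Cyl} {ω : S1} {f : ℝ → ℝ}
    {μ : ℝ≥0} (hF : IsSkewRotation F ω) (hFf : ∀ p, ((F p).2 : ℝ) = f p.2) (hμ : 1 < μ)
    (hf : HasVariationGrowth f μ) :
    hTop F ≤ (Real.log μ : EReal) := by
  obtain ⟨C, hC⟩ := hf.exists_orbit_eVariationOn_le hμ
  have hsnd (k : ℕ) (p : Cyl) : ((F^[k] p).2 : ℝ) = f^[k] p.2 :=
    (Function.Semiconj.iterate_right (f := fun p : Cyl => (p.2 : ℝ)) hFf k) p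
  refine coverEntropy_le_log_of_cover (zero_lt_one.trans hμ) fun ε hε => ?_
  obtain ⟨N, hN⟩ : ∃ N : Finset S1, ∀ θ, ∃ c ∈ N, dist θ c < ε := by
    obtain ⟨t, -, htfin, ht⟩ := finite_cover_balls_of_compact (isCompact_univ (X := S1)) hε
    refine ⟨htfin.toFinset, fun θ => ?_⟩
    simpa using ht (mem_univ θ)
  refine ⟨N.card * (C / ε + 1), fun n => ?_⟩
  obtain ⟨S, hcard, hS⟩ := exists_finset_forall_dist_lt_of_eVariationOn_le (hC n) hε
  refine ⟨N ×ˢ S, ?_, fun ⟨θ, x⟩ => ?_⟩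
  · calc ((N ×ˢ S).card : ℝ) ≤ N.card * ((C * μ ^ n : ℝ≥0) / ε + 1) := by
          rw [Finset.card_product, Nat.cast_mul]
          gcongr
      _ = N.card * (C / ε * μ ^ n + 1) := by push_cast; ring
      _ ≤ N.card * (C / ε * μ ^ n + μ ^ n) := by
          gcongr
          exact one_le_pow₀ hμ.le
      _ = N.card * (C / ε + 1) * μ ^ n := by ring
  · obtain ⟨c, hc, hθc⟩ := hN θ
    obtain ⟨y, hy, hxy⟩ := hS x
    refine ⟨(c, y), Finset.mk_mem_product hc hy, fun k hk => max_lt ?_ ?_⟩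
    · rwa [(hF.iterate k).fst_apply, (hF.iterate k).fst_apply, dist_add_right]
    · rw [Subtype.dist_eq, hsnd, hsnd]
      exact (dist_le_pi_dist _ _ (⟨k, hk⟩ : Fin n)).trans_lt hxy

end Variation

section HorizontalStrips

variable {x y : II}

theorem fiber_univ_prod_singleton (x : II) (θ : S1) : fiber (univ ×ˢ {x}) θ = {x} := by
  ext y
  simp [fiber]

theorem isStrip_univ_prod_singleton (x : II) : IsStrip (univ ×ˢ {x}) :=
  ⟨isClosed_univ.prod isClosed_singleton, fun _ => ⟨x, trivial, rfl⟩, univ, Filter.univ_mem,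
    fun θ _ => ⟨x, x, le_rfl, by rw [fiber_univ_prod_singleton, Icc_self]⟩⟩

theorem stripLT_univ_prod_singleton (hxy : x < y) : stripLT (univ ×ˢ {x}) (univ ×ˢ {y}) :=
  ⟨univ, Filter.univ_mem, fun θ _ => by simpa [MA, mA, fiber_univ_prod_singleton] using! hxy⟩

theorem isPeriodicStripOrbit_prodMap {g : S1 → S1} (hg : g.Surjective) (f : II → II) (x : II) :
    IsPeriodicStripOrbit (Prod.map g f) (Function.minimalPeriod f x) (univ ×ˢ {x}) := by
  have himage (i : ℕ) : (Prod.map g f)^[i] '' (univ ×ˢ {x}) = univ ×ˢ {f^[i] x} := by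
    rw [Prod.map_iterate, prodMap_image_prod, image_univ_of_surjective (hg.iterate i),
      image_singleton]
  refine ⟨isStrip_univ_prod_singleton x, ?_, fun i j hij hj => ?_⟩
  · rw [himage, Function.iterate_minimalPeriod]
  · have hne : f^[i] x ≠ f^[j] x := fun h =>
      hij.ne (Function.iterate_injOn_Iio_minimalPeriod (hij.trans hj) hj h)
    rw [himage, himage]
    refine ⟨disjoint_prod.2 (.inr (disjoint_singleton.2 hne)), ?_⟩
    exact hne.lt_or_gt.imp stripLT_univ_prod_singleton stripLT_univ_prod_singleton

theorem minimalPeriod_restrict {α : Type*} {f : α → α} {s : Set α} (hf : MapsTo f s s) (x : s) :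
    Function.minimalPeriod (hf.restrict f s s) x = Function.minimalPeriod f x :=
  Function.minimalPeriod_eq_minimalPeriod_iff.2 fun n => by
    rw [Function.IsPeriodicPt, Function.IsFixedPt, hf.iterate_restrict, Subtype.ext_iff]
    rfl

end HorizontalStrips

section Doubling

variable {f : ℝ → ℝ} {x : ℝ}

/-- The square root of an interval map `f`: it exchanges `[0, 1/3]` and `[2/3, 1]`, its second
iterate is a scaled copy of `f` on `[0, 1/3]`, and it is affine on `[1/3, 2/3]`. Passing from `f`
to `doubling f` doubles periods and halves the entropy. -/
noncomputable def doubling (f : ℝ → ℝ) (x : ℝ) : ℝ :=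
  if x ≤ 1 / 3 then (2 + f (3 * x)) / 3
  else if x ≤ 2 / 3 then (2 + f 1) * (2 / 3 - x) else x - 2 / 3

theorem doubling_div_three (hx : x ≤ 1) : doubling f (x / 3) = (2 + f x) / 3 := by
  rw [doubling, if_pos (by linarith), mul_div_cancel₀ x three_ne_zero]

theorem doubling_of_mem_Icc (hx : x ∈ Icc (1 / 3) (2 / 3)) :
    doubling f x = (2 + f 1) * (2 / 3 - x) := by
  rcases hx.1.eq_or_lt with rfl | hlt
  · rw [doubling_div_three le_rfl]
    ring
  · rw [doubling, if_neg hlt.not_ge, if_pos hx.2]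

theorem doubling_of_ge (hx : 2 / 3 ≤ x) : doubling f x = x - 2 / 3 := by
  rcases hx.eq_or_lt with rfl | hlt
  · rw [doubling_of_mem_Icc ⟨by norm_num, le_rfl⟩, sub_self, mul_zero]
  · rw [doubling, if_neg (by linarith), if_neg hlt.not_ge]

theorem continuous_doubling (hf : Continuous f) : Continuous (doubling f) := by
  refine Continuous.if_le (by fun_prop) (Continuous.if_le ?_ ?_ ?_ ?_ ?_) ?_ ?_ ?_ <;>
    try fun_prop
  · rintro x rfl
    ring
  · rintro x rfl
    norm_num
    ring

theorem mapsTo_doubling (hf : MapsTo f (Icc 0 1) (Icc 0 1)) :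
    MapsTo (doubling f) (Icc 0 1) (Icc 0 1) := by
  intro x ⟨hx0, hx1⟩
  obtain ⟨h0, h1⟩ := hf (right_mem_Icc.2 zero_le_one)
  rcases le_total x (1 / 3) with hle | hge
  · obtain ⟨h0', h1'⟩ := hf (x := 3 * x) ⟨by linarith, by linarith⟩
    rw [doubling, if_pos hle]
    constructor <;> linarith
  rcases le_total x (2 / 3) with hle' | hge'
  · rw [doubling_of_mem_Icc ⟨hge, hle'⟩]
    constructor <;> nlinarith
  · rw [doubling_of_ge hge']
    constructor <;> linarith

theorem iterate_two_mul_doubling_div_three (hf : MapsTo f (Icc 0 1) (Icc 0 1))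
    (hx : x ∈ Icc 0 1) (j : ℕ) : (doubling f)^[2 * j] (x / 3) = f^[j] x / 3 := by
  induction j with
  | zero => rfl
  | succ j ih =>
    have hj := hf.iterate j hx
    rw [mul_add_one, Function.iterate_succ_apply', Function.iterate_succ_apply', ih,
      doubling_div_three hj.2, doubling_of_ge (by linarith [(hf hj).1]),
      Function.iterate_succ_apply']
    ring

theorem iterate_two_mul_add_one_doubling_div_three (hf : MapsTo f (Icc 0 1) (Icc 0 1))
    (hx : x ∈ Icc 0 1) (j : ℕ) :
    (doubling f)^[2 * j + 1] (x / 3) = (2 + f^[j + 1] x) / 3 := by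
  rw [Function.iterate_succ_apply', iterate_two_mul_doubling_div_three hf hx,
    doubling_div_three (hf.iterate j hx).2, Function.iterate_succ_apply']

theorem minimalPeriod_doubling_div_three (hf : MapsTo f (Icc 0 1) (Icc 0 1))
    (hx : x ∈ Icc 0 1) :
    Function.minimalPeriod (doubling f) (x / 3) = 2 * Function.minimalPeriod f x := by
  have hiff (n : ℕ) : Function.minimalPeriod (doubling f) (x / 3) ∣ n ↔
      2 * Function.minimalPeriod f x ∣ n := by
    rw [← Function.isPeriodicPt_iff_minimalPeriod_dvd]
    obtain ⟨j, rfl | rfl⟩ := n.even_or_odd'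
    · rw [Nat.mul_dvd_mul_iff_left two_pos, ← Function.isPeriodicPt_iff_minimalPeriod_dvd,
        Function.IsPeriodicPt, Function.IsFixedPt, iterate_two_mul_doubling_div_three hf hx,
        div_left_inj' three_ne_zero]
      rfl
    · refine iff_of_false (fun h => ?_) fun h =>
        Nat.not_even_two_mul_add_one j (even_iff_two_dvd.2 (dvd_of_mul_right_dvd h))
      have hj := hf.iterate (j + 1) hx
      rw [Function.IsPeriodicPt, Function.IsFixedPt,
        iterate_two_mul_add_one_doubling_div_three hf hx] at h
      linarith [hj.1, hx.2]
  exact Nat.dvd_antisymm ((hiff _).2 dvd_rfl) ((hiff _).1 dvd_rfl)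

theorem eVariationOn_div_three_le {g : ℝ → ℝ} (c : ℝ)
    (h : ∀ x ∈ Icc 0 1, g (x / 3) = (c + f x) / 3) :
    eVariationOn g (Icc 0 (1 / 3)) ≤ eVariationOn f (Icc 0 1) := by
  have hlip : LipschitzOnWith 1 (fun y : ℝ => (c + y) / 3) univ :=
    LipschitzOnWith.of_dist_le_mul fun y _ z _ => by
      rw [Real.dist_eq, Real.dist_eq, ← sub_div, add_sub_add_left_eq_sub, abs_div, NNReal.coe_one,
        one_mul]
      exact div_le_self (abs_nonneg _) (by norm_num)
  have heq : EqOn g ((fun y : ℝ => (c + y) / 3) ∘ f ∘ (3 * ·)) (Icc 0 (1 / 3)) := fun x hx => by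
    have := h (3 * x) ⟨by linarith [hx.1], by linarith [hx.2]⟩
    rwa [mul_div_cancel_left₀ x three_ne_zero] at this
  calc eVariationOn g (Icc 0 (1 / 3))
      = eVariationOn ((fun y : ℝ => (c + y) / 3) ∘ f ∘ (3 * ·)) (Icc 0 (1 / 3)) :=
        eVariationOn.eq_of_eqOn heq
    _ ≤ eVariationOn (f ∘ (3 * ·)) (Icc 0 (1 / 3)) := by
        simpa using hlip.comp_eVariationOn_le (mapsTo_univ (f ∘ (3 * ·)) (Icc 0 (1 / 3)))
    _ ≤ eVariationOn f (Icc 0 1) :=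
        eVariationOn.comp_le_of_monotoneOn f _ (fun x _ y _ hxy => by gcongr)
          fun x hx => ⟨by linarith [hx.1], by linarith [hx.2]⟩

theorem exists_forall_le_mul_pow_of_le_add {T : ℕ → ℝ≥0∞} {a μ : ℝ≥0} (hT : T 0 ≠ ∞) (hμ : 1 < μ)
    (h : ∀ k, T (k + 1) ≤ T k + (a * μ ^ k : ℝ≥0)) : ∃ C : ℝ≥0, ∀ k, T k ≤ (C * μ ^ k : ℝ≥0) := by
  lift T 0 to ℝ≥0 using hT with t ht
  obtain ⟨C, htC, hC⟩ : ∃ C, t ≤ C ∧ C + a ≤ C * μ := by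
    refine ⟨t + a / (μ - 1), le_self_add, ?_⟩
    have hslack : a ≤ (t + a / (μ - 1)) * (μ - 1) := by
      rw [← div_le_iff₀ (tsub_pos_of_lt hμ)]
      exact le_add_self
    calc t + a / (μ - 1) + a
        ≤ t + a / (μ - 1) + (t + a / (μ - 1)) * (μ - 1) := by gcongr
      _ = (t + a / (μ - 1)) * μ := by rw [← mul_one_add, add_tsub_cancel_of_le hμ.le]
  refine ⟨C, fun k => ?_⟩
  induction k with
  | zero =>
    rw [← ht, pow_zero, mul_one]
    exact_mod_cast htC
  | succ k ih =>
    calc T (k + 1) ≤ (C * μ ^ k : ℝ≥0) + (a * μ ^ k : ℝ≥0) := (h k).trans (by gcongr)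
      _ = ((C + a) * μ ^ k : ℝ≥0) := by rw [add_mul, ENNReal.coe_add]
      _ ≤ (C * μ ^ (k + 1) : ℝ≥0) := by
        rw [pow_succ', ← mul_assoc]
        gcongr

theorem eVariationOn_iterate_succ_doubling_le (hf : MapsTo f (Icc 0 1) (Icc 0 1)) (k : ℕ) :
    eVariationOn (doubling f)^[k + 1] (Icc 0 1) ≤ eVariationOn (doubling f)^[k] (Icc 0 1) +
      (eVariationOn (doubling f)^[k] (Icc 0 (1 / 3)) +
        eVariationOn (doubling f)^[k + 1] (Icc 0 (1 / 3))) := by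
  have hmid : eVariationOn (doubling f)^[k + 1] (Icc (1 / 3) (2 / 3)) ≤
      eVariationOn (doubling f)^[k] (Icc 0 1) := by
    obtain ⟨h0, -⟩ := hf (right_mem_Icc.2 zero_le_one)
    refine eVariationOn.comp_le_of_antitoneOn _ _ (fun x hx y hy hxy => ?_) fun x hx =>
      mapsTo_doubling hf ⟨by linarith [hx.1], by linarith [hx.2]⟩
    rw [doubling_of_mem_Icc hx, doubling_of_mem_Icc hy]
    gcongr
  have hright : eVariationOn (doubling f)^[k + 1] (Icc (2 / 3) 1) ≤
      eVariationOn (doubling f)^[k] (Icc 0 (1 / 3)) := by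
    refine eVariationOn.comp_le_of_monotoneOn _ _ (fun x hx y hy hxy => ?_) fun x hx => ?_
    · rw [doubling_of_ge hx.1, doubling_of_ge hy.1]
      gcongr
    · rw [doubling_of_ge hx.1]
      exact ⟨by linarith [hx.1], by linarith [hx.2]⟩
  have hsplit {a b c : ℝ} (hab : a ≤ b) (hbc : b ≤ c) (g : ℝ → ℝ) :
      eVariationOn g (Icc a c) = eVariationOn g (Icc a b) + eVariationOn g (Icc b c) := by
    simpa using (eVariationOn.Icc_add_Icc g hab hbc (mem_univ b)).symm
  have h0 : (0 : ℝ) ≤ 1 / 3 := by norm_num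
  have h1 : (1 / 3 : ℝ) ≤ 2 / 3 := by norm_num
  have h2 : (2 / 3 : ℝ) ≤ 1 := by norm_num
  rw [hsplit h0 (h1.trans h2) (doubling f)^[k + 1], hsplit h1 h2 (doubling f)^[k + 1], add_comm,
    add_assoc]
  gcongr

theorem hasVariationGrowth_doubling {μ : ℝ≥0} (hf : MapsTo f (Icc 0 1) (Icc 0 1)) (hμ : 1 < μ)
    (h : HasVariationGrowth f (μ ^ 2)) : HasVariationGrowth (doubling f) μ := by
  obtain ⟨C, hC⟩ := h
  have hleft (k : ℕ) : eVariationOn (doubling f)^[k] (Icc 0 (1 / 3)) ≤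
      (C * μ ^ (k + 1) : ℝ≥0) := by
    obtain ⟨j, rfl | rfl⟩ := k.even_or_odd'
    · refine ((eVariationOn_div_three_le 0 fun x hx => ?_).trans (hC j)).trans ?_
      · rw [iterate_two_mul_doubling_div_three hf hx, zero_add]
      · rw [← pow_mul]
        gcongr
        · exact hμ.le
        · exact Nat.le_succ _
    · refine ((eVariationOn_div_three_le 2 fun x hx => ?_).trans (hC (j + 1))).trans_eq ?_
      · exact iterate_two_mul_add_one_doubling_div_three hf hx j
      · rw [← pow_mul, mul_add_one]
  refine exists_forall_le_mul_pow_of_le_add (a := C * μ + C * μ ^ 2) ?_ hμ fun k => ?_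
  · rw [Function.iterate_zero, eVariationOn_id_Icc]
    exact ENNReal.ofReal_ne_top
  · refine (eVariationOn_iterate_succ_doubling_le hf k).trans ?_
    gcongr
    refine (add_le_add (hleft k) (hleft (k + 1))).trans_eq ?_
    rw [← ENNReal.coe_add]
    congr 1
    ring

end Doubling

section TentMap

variable {β : ℝ}

/-- The inverted tent map with slope `±β`. Its turning point `β⁻¹` is mapped to `0`. -/
def tentMap (β x : ℝ) : ℝ := |β * x - 1|

theorem mapsTo_tentMap (h0 : 0 ≤ β) (h2 : β ≤ 2) : MapsTo (tentMap β) (Icc 0 1) (Icc 0 1) :=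
  fun x hx => ⟨abs_nonneg _, abs_le.2 ⟨by nlinarith [hx.1], by nlinarith [hx.2]⟩⟩

theorem lipschitzWith_tentMap {μ : ℝ≥0} (h0 : 0 ≤ β) (hμ : β ≤ μ) : LipschitzWith μ (tentMap β) :=
  LipschitzWith.of_dist_le_mul fun x y => by
    calc |tentMap β x - tentMap β y| ≤ |β * x - 1 - (β * y - 1)| := abs_abs_sub_abs_le_abs_sub _ _
      _ = β * |x - y| := by rw [sub_sub_sub_cancel_right, ← mul_sub, abs_mul, abs_of_nonneg h0]
      _ ≤ μ * dist x y := mul_le_mul_of_nonneg_right hμ (abs_nonneg _)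

theorem hasVariationGrowth_of_lipschitzOnWith {f : ℝ → ℝ} {μ : ℝ≥0}
    (hf : LipschitzOnWith μ f (Icc 0 1)) (hmaps : MapsTo f (Icc 0 1) (Icc 0 1)) :
    HasVariationGrowth f μ := by
  refine ⟨1, fun k => ?_⟩
  induction k with
  | zero => simp [eVariationOn_id_Icc]
  | succ k ih =>
    rw [Function.iterate_succ']
    calc eVariationOn (f ∘ f^[k]) (Icc 0 1) ≤ μ * eVariationOn f^[k] (Icc 0 1) :=
          hf.comp_eVariationOn_le (hmaps.iterate k)
      _ ≤ μ * (1 * μ ^ k : ℝ≥0) := by gcongr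
      _ = (1 * μ ^ (k + 1) : ℝ≥0) := by
          rw [← ENNReal.coe_mul, pow_succ']
          congr 1
          ring

theorem iterate_add_two_tentMap_zero {r j : ℕ} (hβ : 1 < β) (h : (β ^ 2 - 2) * β ^ r = 1)
    (hj : j ≤ r) : (tentMap β)^[j + 2] 0 = (1 + (-β) ^ j / β ^ r) / (1 + β) := by
  have hβ0 : 0 < β := one_pos.trans hβ
  induction j with
  | zero =>
    have hr : 1 / β ^ r = β ^ 2 - 2 := by rw [← h, mul_div_cancel_right₀ _ (pow_pos hβ0 r).ne']
    have h1 : tentMap β 0 = 1 := by simp [tentMap]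
    rw [Function.iterate_succ_apply', Function.iterate_one, h1, pow_zero, hr, tentMap,
      mul_one, abs_of_pos (sub_pos.2 hβ), eq_div_iff (by positivity)]
    ring
  | succ j ih =>
    have hpow : (-β) ^ j * β ≤ β ^ r :=
      calc (-β) ^ j * β ≤ |(-β) ^ j| * β := mul_le_mul_of_nonneg_right (le_abs_self _) hβ0.le
        _ = β ^ j * β := by rw [abs_pow, abs_neg, abs_of_pos hβ0]
        _ = β ^ (j + 1) := (pow_succ β j).symm
        _ ≤ β ^ r := pow_le_pow_right₀ hβ.le hj
    have hleft : β * ((1 + (-β) ^ j / β ^ r) / (1 + β)) ≤ 1 := by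
      rw [← mul_div_assoc, div_le_one (by positivity), mul_add, mul_one, add_comm, mul_div_assoc',
        mul_comm β]
      gcongr
      exact div_le_one_of_le₀ hpow (by positivity)
    rw [Function.iterate_succ_apply', ih (Nat.le_of_succ_le hj), tentMap,
      abs_of_nonpos (sub_nonpos.2 hleft)]
    field_simp
    ring

theorem minimalPeriod_tentMap_zero {r : ℕ} (hβ : 1 < β) (h : (β ^ 2 - 2) * β ^ r = 1)
    (hr : Odd r) : Function.minimalPeriod (tentMap β) 0 = r + 2 := by
  have hβ0 : 0 < β := one_pos.trans hβ
  have hper : Function.IsPeriodicPt (tentMap β) (r + 2) 0 := by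
    rw [Function.IsPeriodicPt, Function.IsFixedPt, iterate_add_two_tentMap_zero hβ h le_rfl,
      hr.neg_pow, neg_div, div_self (pow_pos hβ0 r).ne', add_neg_cancel, zero_div]
  refine (hper.minimalPeriod_le (by positivity)).antisymm (not_lt.1 fun hlt => ?_)
  have hmin := Function.iterate_minimalPeriod (f := tentMap β) (x := 0)
  have hpos := hper.minimalPeriod_pos (by positivity)
  obtain ⟨n, hn⟩ : ∃ n, Function.minimalPeriod (tentMap β) 0 = n := ⟨_, rfl⟩
  rw [hn] at hmin hpos hlt
  rcases n with _ | _ | j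
  · exact hpos.false
  · simp [tentMap] at hmin
  · have hjr : j < r := by lia
    rw [iterate_add_two_tentMap_zero hβ h hjr.le, div_eq_zero_iff,
      or_iff_left (by positivity)] at hmin
    have hlt : β ^ j / β ^ r < 1 :=
      (div_lt_one (by positivity)).2 (pow_lt_pow_right₀ hβ hjr)
    have habs : |(-β) ^ j / β ^ r| < 1 := by
      rwa [abs_div, abs_pow, abs_neg, abs_pow, abs_of_pos hβ0]
    linarith [(abs_lt.1 habs).1]

theorem minimalPeriod_tentMap_one : Function.minimalPeriod (tentMap 1) (1 / 2) = 1 :=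
  Function.minimalPeriod_eq_one_iff_isFixedPt.2 <| by
    norm_num [Function.IsFixedPt, tentMap, abs_of_neg]

end TentMap

section Sharpness

variable {q : ℕ} {lam : ℝ}

theorem exists_mem_Icc_minimalPeriod_tentMap (hq : Odd q)
    (hlam : (q = 1 ∧ lam = 1) ∨ (3 ≤ q ∧ 1 < lam ∧ (lam ^ 2 - 2) * lam ^ (q - 2) = 1)) :
    ∃ x ∈ Icc (0 : ℝ) 1, Function.minimalPeriod (tentMap lam) x = q := by
  rcases hlam with ⟨rfl, rfl⟩ | ⟨hq3, h1, hlam⟩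
  · exact ⟨1 / 2, ⟨by norm_num, by norm_num⟩, minimalPeriod_tentMap_one⟩
  · refine ⟨0, left_mem_Icc.2 zero_le_one, ?_⟩
    rw [minimalPeriod_tentMap_zero h1 hlam (Nat.Odd.sub_even (by lia) hq even_two)]
    lia

theorem exists_minimalPeriod_two_pow_mul_hasVariationGrowth (n : ℕ) {f : ℝ → ℝ} {x : ℝ}
    (hf : Continuous f) (hmaps : MapsTo f (Icc 0 1) (Icc 0 1)) (hx : x ∈ Icc 0 1)
    (hgrowth : ∀ μ : ℝ≥0, 1 < μ → lam ≤ μ → HasVariationGrowth f μ) :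
    ∃ g : ℝ → ℝ, Continuous g ∧ MapsTo g (Icc 0 1) (Icc 0 1) ∧
      (∃ y ∈ Icc (0 : ℝ) 1,
        Function.minimalPeriod g y = 2 ^ n * Function.minimalPeriod f x) ∧
      ∀ μ : ℝ≥0, 1 < μ → lam ≤ μ ^ 2 ^ n → HasVariationGrowth g μ := by
  induction n with
  | zero => exact ⟨f, hf, hmaps, ⟨x, hx, (one_mul _).symm⟩, by simpa using hgrowth⟩
  | succ n ih =>
    obtain ⟨g, hg, hgmaps, ⟨y, hy, hper⟩, hgrowth_g⟩ := ih
    refine ⟨doubling g, continuous_doubling hg, mapsTo_doubling hgmaps, ⟨y / 3, ?_, ?_⟩,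
      fun μ hμ hlam => hasVariationGrowth_doubling hgmaps hμ (hgrowth_g _ ?_ ?_)⟩
    · constructor <;> linarith [hy.1, hy.2]
    · rw [minimalPeriod_doubling_div_three hgmaps hy, hper, pow_succ', mul_assoc]
    · exact one_lt_pow₀ hμ two_ne_zero
    · rwa [NNReal.coe_pow, ← pow_mul, ← pow_succ']

theorem hTop_le_log_div_of_hasVariationGrowth {F : Cyl → Cyl} {ω : S1} {f : ℝ → ℝ} {N : ℕ}
    (hF : IsSkewRotation F ω) (hFf : ∀ p, ((F p).2 : ℝ) = f p.2) (hN : 0 < N) (hlam : 1 ≤ lam)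
    (hf : ∀ μ : ℝ≥0, 1 < μ → lam ≤ μ ^ N → HasVariationGrowth f μ) :
    hTop F ≤ ((Real.log lam / N : ℝ) : EReal) := by
  refine EReal.le_of_forall_lt_iff_le.1 fun z hz => ?_
  rw [EReal.coe_lt_coe_iff, div_lt_iff₀' (mod_cast hN)] at hz
  have hz0 : 0 < z := pos_of_mul_pos_right ((Real.log_nonneg hlam).trans_lt hz) N.cast_nonneg
  let μ : ℝ≥0 := ⟨Real.exp z, (Real.exp_pos z).le⟩
  have hlamμ : lam ≤ μ ^ N := by
    change lam ≤ Real.exp z ^ N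
    rw [← Real.exp_nat_mul, ← Real.log_le_iff_le_exp (one_pos.trans_le hlam)]
    exact hz.le
  have hμ : 1 < μ := Real.one_lt_exp_iff.2 hz0
  have hlog : Real.log μ = z := Real.log_exp z
  rw [← hlog]
  exact hF.hTop_le_log_of_hasVariationGrowth hFf hμ (hf μ hμ hlamμ)

theorem exists_isPeriodicStripOrbit_hTop_le (ω : S1) (n : ℕ) (hq : Odd q)
    (hlam : (q = 1 ∧ lam = 1) ∨ (3 ≤ q ∧ 1 < lam ∧ (lam ^ 2 - 2) * lam ^ (q - 2) = 1)) :
    ∃ F : Cyl → Cyl, IsSkewRotation F ω ∧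
      (∃ B : Set Cyl, IsPeriodicStripOrbit F (2 ^ n * q) B) ∧
      hTop F ≤ ((Real.log lam / 2 ^ n : ℝ) : EReal) := by
  have hlam1 : 1 ≤ lam := hlam.elim (fun h => h.2.ge) fun h => h.2.1.le
  have hlam2 : lam ≤ 2 := by
    rcases hlam with ⟨-, rfl⟩ | ⟨-, h1, h⟩
    · exact one_le_two
    · have hsq : 2 < lam ^ 2 := two_lt_sq_of_sq_sub_two_mul_pow_eq_one (zero_le_one.trans h1.le) h
      have hle : lam ^ 2 - 2 ≤ 1 :=
        h ▸ le_mul_of_one_le_right (sub_nonneg.2 hsq.le) (one_le_pow₀ h1.le)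
      nlinarith
  have hlam0 : 0 ≤ lam := zero_le_one.trans hlam1
  have hmaps := mapsTo_tentMap hlam0 hlam2
  obtain ⟨x, hx, rfl⟩ := exists_mem_Icc_minimalPeriod_tentMap hq hlam
  obtain ⟨f, hf, hfmaps, ⟨y, hy, hper⟩, hgrowth⟩ :=
    exists_minimalPeriod_two_pow_mul_hasVariationGrowth (lam := lam) n
      (by unfold tentMap; fun_prop) hmaps hx fun μ _ hμ =>
        hasVariationGrowth_of_lipschitzOnWith (lipschitzWith_tentMap hlam0 hμ).lipschitzOnWith hmaps
  have hF : IsSkewRotation (Prod.map (· + ω) (hfmaps.restrict f _ _)) ω :=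
    ⟨(continuous_add_const ω).prodMap (hf.restrict hfmaps), fun _ => rfl⟩
  refine ⟨_, hF, ⟨univ ×ˢ {⟨y, hy⟩}, ?_⟩, ?_⟩
  · rw [← hper, ← minimalPeriod_restrict hfmaps ⟨y, hy⟩]
    exact isPeriodicStripOrbit_prodMap (add_right_surjective ω) _ _
  · simpa using hTop_le_log_div_of_hasVariationGrowth hF (fun _ => rfl) (Nat.two_pow_pos n) hlam1
      hgrowth

theorem entropy_bound_from_period_general (ω : S1) (nn q : ℕ) (hq : Odd q) (lam : ℝ)
    (hlam : (q = 1 ∧ lam = 1) ∨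
      (3 ≤ q ∧ lam ^ q - 2 * lam ^ (q - 2) - 1 = 0 ∧
        ∀ y : ℝ, y ^ q - 2 * y ^ (q - 2) - 1 = 0 → y ≤ lam)) :
    (∀ F : Cyl → Cyl, IsSkewRotation F ω →
      (∃ B : Set Cyl, IsPeriodicStripOrbit F (2 ^ nn * q) B) →
      ((Real.log lam / 2 ^ nn : ℝ) : EReal) ≤ hTop F) ∧
    (∃ Fm : Cyl → Cyl, IsSkewRotation Fm ω ∧
      (∃ B : Set Cyl, IsPeriodicStripOrbit Fm (2 ^ nn * q) B) ∧
      hTop Fm = ((Real.log lam / 2 ^ nn : ℝ) : EReal)) := by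
  have hrate : (q = 1 ∧ lam = 1) ∨ (3 ≤ q ∧ 1 < lam ∧ (lam ^ 2 - 2) * lam ^ (q - 2) = 1) :=
    hlam.imp_right fun ⟨hq3, hroot, hmax⟩ =>
      ⟨hq3, one_lt_and_sq_sub_two_mul_pow_eq_one_of_largest_root (by lia) hroot hmax⟩
  have hlower (F : Cyl → Cyl) (hF : IsSkewRotation F ω) :
      (∃ B : Set Cyl, IsPeriodicStripOrbit F (2 ^ nn * q) B) →
        ((Real.log lam / 2 ^ nn : ℝ) : EReal) ≤ hTop F := by
    rintro ⟨B, hB⟩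
    rcases hrate with ⟨-, rfl⟩ | ⟨hq3, h1, h⟩
    · simpa [hTop] using coverEntropy_nonneg F (univ_nonempty (α := Cyl))
    · simpa using hB.log_div_le_hTop hF (Nat.two_pow_pos nn) hq3 hq (one_pos.trans h1) h
  obtain ⟨F, hF, horbit, hle⟩ := exists_isPeriodicStripOrbit_hTop_le ω nn hq hrate
  exact ⟨hlower, F, hF, horbit, hle.antisymm (hlower F hF horbit)⟩

end Sharpness

/-- entropy lower bound `log(λ_q)/2^n` from a periodic orbit of strips of
period `2^n·q` (`q` odd), and sharpness of the bound. -/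
theorem entropy_bound_from_period (nn q : ℕ) (hq : Odd q) (hq1 : 1 ≤ q) (lam : ℝ)
    (hlam : (q = 1 ∧ lam = 1) ∨
      (3 ≤ q ∧ lam ^ q - 2 * lam ^ (q - 2) - 1 = 0 ∧
        ∀ y : ℝ, y ^ q - 2 * y ^ (q - 2) - 1 = 0 → y ≤ lam)) :
    (∀ F : Cyl → Cyl, IsQPF F →
      (∃ B : Set Cyl, IsPeriodicStripOrbit F (2 ^ nn * q) B) →
      ((Real.log lam / 2 ^ nn : ℝ) : EReal) ≤ hTop F) ∧
    (∃ Fm : Cyl → Cyl, IsQPF Fm ∧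
      (∃ B : Set Cyl, IsPeriodicStripOrbit Fm (2 ^ nn * q) B) ∧
      hTop Fm = ((Real.log lam / 2 ^ nn : ℝ) : EReal)) := by
  refine ⟨fun F ⟨hF, ω, _, hω⟩ =>
    (entropy_bound_from_period_general ω nn q hq lam hlam).1 F ⟨hF, hω⟩, ?_⟩
  obtain ⟨F, hF, h⟩ := (entropy_bound_from_period_general ((√2 : ℝ) : S1) nn q hq lam hlam).2
  exact ⟨F, ⟨hF.continuous, √2, irrational_sqrt_two, hF.fst_apply⟩, h⟩
end
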